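/- arXiv:2007.12742 — 3 statements merged into one kernel-verified Lean document; each statement's English description precedes it below -/
import Mathlib

section
/- Let m, d ∈ ℕ with d ≥ m, and let X = (X₁,…,Xₙ) be a standard Gaussian random vector in ℝⁿ. There exists a constant C(m,d) > 0 depending only on m and d such that for every non-constant polynomial f(x) = Σ_{j₁=0}^{m} … Σ_{jₙ=0}^{m} a_{j₁,…,jₙ} x₁^{j₁}⋯xₙ^{jₙ} (each variable appearing to a power at most m) of total degree d[f] ≤ d, one has |𝔼 exp{i t f(X)}| ≤ C(m,d) |a[f] · t|^{−1/m} [ |ln|a[f]·t||^{d−m} + 1 ] for all t ≠ 0, where a[f] := max_{j₁+…+jₙ = d[f]} |a_{j₁,…,jₙ}|. -/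
/-!
Write `γ` for the standard Gaussian law, `A = |a[f] t|` and `decay m v = min(1, v^{-1/m})`. If
`A ≤ 1` the right-hand side is at least `1` and there is nothing to prove, so let `A ≥ 1` and
replace `f` by `t f`.

*One variable.* Let `p` be a real polynomial of degree `N`, and `c` the modulus of any one of its
coefficients. By the bound of coefficients by the Mahler measure, `|p(x)|` is at least `c / 2^N`
times the product over the complex roots `z` of `|x - z| / max(1, |z|)`, hence at least
`c / 2^N` times the `N`-th power of the smallest of these factors
(`coeff_mul_prod_relDist_le`). Each factor, under `γ`, has small ball probabilities bounded
linearly and uniformly in `z` (`gaussian_relDist_le`). So the expectation of a decreasing function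
of `|p|` is bounded by an integral over `(0, 1]` (`lintegral_comp_polynomial_le_unit`). Two
consequences are drawn. First, the expectation of `decay m |p|` is at most a constant times
`decay m c` if `N < m`, and only a factor `1 + log A` worse if `N = m` (`integral_decay_nolog`,
`integral_decay_log`). Second, integrating by parts against the regularised inverse
`p' / (p'² + η²)`, whose total variation is at most a multiple of `N / η`, shows that
`|∫ exp(i p) dγ|` is at most a constant times `decay m c` for each nonconstant coefficient
(`exists_norm_integral_exp_le`).

*Several variables.* Fix a monomial `x^j` of top degree realising `a[f]`. Variables not in `x^j`
are frozen; this does not affect its coefficient, because the degree is maximal. The first variable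
in `x^j`, with exponent `r`, is integrated out by a one-variable bound, applied to the coefficient
of its `r`-th power. This coefficient is a polynomial of degree at most `D - r` in the remaining
variables, and its top-degree coefficient at the rest of `j` is the same
(`norm_integral_le_of_one_variable`). The oscillatory bound is used once, at the outset; then
`decay m` is integrated by induction on the degree, losing a logarithm only at degrees at least
`m` (`exists_integral_decay_le`). At most `d - m` logarithms are lost, since the first step lowers
the degree to at most `d - 1`.
-/

open MeasureTheory ProbabilityTheory

/-- The standard Gaussian measure on `ℝⁿ` (i.i.d. `N(0,1)` coordinates). -/
noncomputable def stdGaussian (n : ℕ) : Measure (Fin n → ℝ) :=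
  Measure.pi fun _ => gaussianReal 0 1

/-- `a[f]`: the maximum of the absolute values of the coefficients of the monomials of
top total degree of `f`. -/
noncomputable def topCoeff {n : ℕ} (f : MvPolynomial (Fin n) ℝ) : ℝ :=
  sSup {c : ℝ | ∃ j : Fin n →₀ ℕ, (j.sum fun _ e => e) = f.totalDegree ∧
    c = |MvPolynomial.coeff j f|}

/-! ### Gaussian expectations of decreasing functions of a polynomial -/

/-- The distance from `x` to the complex point `z`, relative to the size of `z`. -/
noncomputable def relDist (z : ℂ) (x : ℝ) : ℝ := ‖(x : ℂ) - z‖ / max 1 ‖z‖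

lemma relDist_nonneg (z : ℂ) (x : ℝ) : 0 ≤ relDist z x := by unfold relDist; positivity

lemma measurable_relDist (z : ℂ) : Measurable (relDist z) := by
  unfold relDist
  exact Continuous.measurable (by fun_prop)

lemma gaussianPDFReal_mul_le (x : ℝ) : gaussianPDFReal 0 1 x * (1 + |x|) ≤ 2 := by
  rw [gaussianPDFReal_def]
  have h1 : (√(2 * Real.pi * ((1 : NNReal) : ℝ)))⁻¹ ≤ 1 := by
    apply inv_le_one_of_one_le₀
    rw [Real.one_le_sqrt]
    have := Real.pi_gt_three
    simp; linarith
  have h2 : Real.exp (-(x - 0) ^ 2 / (2 * ((1 : NNReal) : ℝ))) * (1 + |x|) ≤ 2 := by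
    have h3 : Real.exp (-(x - 0) ^ 2 / (2 * ((1 : NNReal) : ℝ))) = (Real.exp (x ^ 2 / 2))⁻¹ := by
      rw [← Real.exp_neg]; congr 1; simp; ring
    rw [h3, inv_mul_le_iff₀ (Real.exp_pos _)]
    have := Real.add_one_le_exp (x ^ 2 / 2)
    nlinarith [sq_abs x, sq_nonneg (|x| - 1)]
  calc _ = (√(2 * Real.pi * ((1 : NNReal) : ℝ)))⁻¹ *
        (Real.exp (-(x - 0) ^ 2 / (2 * ((1 : NNReal) : ℝ))) * (1 + |x|)) := by ring
    _ ≤ 1 * 2 := by gcongr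
    _ = 2 := by ring

/-- The relative distance of a standard Gaussian variable to any point of the complex plane has
the small ball behaviour of a variable with density at most `8`, uniformly in the point. -/
lemma gaussian_relDist_le (z : ℂ) (δ : ℝ) :
    gaussianReal 0 1 {x | relDist z x ≤ δ} ≤ 8 * ENNReal.ofReal δ := by
  have h8 : (8 : ENNReal) * ENNReal.ofReal δ = ENNReal.ofReal (8 * δ) := by
    rw [ENNReal.ofReal_mul (by norm_num)]; simp
  rw [h8]
  by_cases h : 1 / 2 ≤ δ
  · refine prob_le_one.trans ?_
    rw [ENNReal.one_le_ofReal]; linarith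
  push Not at h
  set M := max 1 ‖z‖ with hM
  have hM1 : 1 ≤ M := le_max_left _ _
  have hMz : M ≤ 1 + ‖z‖ := max_le (by linarith [norm_nonneg z]) (by linarith)
  have hset : ∀ x, relDist z x ≤ δ → ‖(x : ℂ) - z‖ ≤ δ * M := by
    intro x hx
    rwa [relDist, div_le_iff₀ (by positivity)] at hx
  rw [gaussianReal_apply 0 one_ne_zero]
  calc ∫⁻ x in {x | relDist z x ≤ δ}, gaussianPDF 0 1 x
      ≤ ∫⁻ x in {x | relDist z x ≤ δ}, ENNReal.ofReal (4 / M) := by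
        apply setLIntegral_mono' (measurableSet_le (measurable_relDist z) measurable_const)
        intro x hx
        apply ENNReal.ofReal_le_ofReal
        rw [le_div_iff₀ (by positivity)]
        have h1 := hset x hx
        have h2 : ‖z‖ ≤ ‖(x : ℂ)‖ + ‖(x : ℂ) - z‖ := by
          have := norm_sub_le (x : ℂ) ((x : ℂ) - z)
          simpa using this
        have h3 : ‖(x : ℂ)‖ = |x| := by simp
        have h4 : M ≤ 2 * (1 + |x|) := by nlinarith
        have h5 := gaussianPDFReal_mul_le x
        have h6 := gaussianPDFReal_nonneg 0 1 x
        nlinarith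
    _ = ENNReal.ofReal (4 / M) * volume {x | relDist z x ≤ δ} := by simp
    _ ≤ ENNReal.ofReal (4 / M) * volume (Set.Icc (z.re - δ * M) (z.re + δ * M)) := by
        gcongr
        intro x hx
        have h1 := (Complex.abs_re_le_norm ((x : ℂ) - z)).trans (hset x hx)
        simp only [Complex.sub_re, Complex.ofReal_re] at h1
        have := abs_le.mp h1
        constructor <;> linarith [this.1, this.2]
    _ = ENNReal.ofReal (8 * δ) := by
        rw [Real.volume_Icc, ← ENNReal.ofReal_mul (by positivity)]
        congr 1
        field_simp; ring

/-- Small ball bounds of Lebesgue type control expectations of decreasing functions by Lebesgue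
integrals: each superlevel set of `G` is an initial interval of the half-line. -/
lemma lintegral_relDist_le (z : ℂ) (G : ℝ → ℝ) (hG : AntitoneOn G (Set.Ioi 0))
    (hG0 : ∀ v, 0 ≤ G v) (hGm : Measurable G) :
    ∫⁻ x, ENNReal.ofReal (G (relDist z x)) ∂(gaussianReal 0 1) ≤
      8 * ∫⁻ v in Set.Ioi 0, ENNReal.ofReal (G v) := by
  rw [lintegral_eq_lintegral_meas_lt _ (ae_of_all _ fun x => hG0 _)
    (hGm.comp (measurable_relDist z)).aemeasurable,
    lintegral_eq_lintegral_meas_lt _ (ae_of_all _ fun x => hG0 _) hGm.aemeasurable,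
    ← lintegral_const_mul' _ _ (by norm_num)]
  apply lintegral_mono
  intro t
  dsimp only
  have hzero : gaussianReal 0 1 {x | relDist z x ≤ 0} = 0 := by
    simpa using gaussian_relDist_le z 0
  set S := Set.Ioi (0 : ℝ) ∩ {v | t < G v} with hS
  have hvol : (volume.restrict (Set.Ioi (0 : ℝ))) {v | t < G v} = volume S := by
    rw [Measure.restrict_apply (measurableSet_lt measurable_const hGm), Set.inter_comm]
  rw [hvol]
  by_cases hfin : volume S = ⊤
  · rw [hfin, ENNReal.mul_top (by norm_num)]; exact le_top
  have hsub : {x | t < G (relDist z x)} ⊆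
      {x | relDist z x ≤ 0} ∪ {x | relDist z x ≤ (volume S).toReal} := by
    intro x hx
    by_cases h0 : relDist z x ≤ 0
    · exact Or.inl h0
    right
    push Not at h0
    have h1 : Set.Ioc 0 (relDist z x) ⊆ S := by
      intro w hw
      exact ⟨hw.1, lt_of_lt_of_le hx (hG hw.1 h0 hw.2)⟩
    have h2 := measure_mono (μ := volume) h1
    rw [Real.volume_Ioc, sub_zero] at h2
    exact (ENNReal.ofReal_le_iff_le_toReal hfin).mp h2
  calc _ ≤ _ := measure_mono hsub
    _ ≤ _ := measure_union_le _ _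
    _ ≤ 0 + 8 * ENNReal.ofReal (volume S).toReal := by
        rw [hzero]
        gcongr
        exact gaussian_relDist_le z _
    _ = 8 * volume S := by rw [ENNReal.ofReal_toReal hfin, zero_add]

lemma pow_card_le_prod_map (s : Multiset ℂ) (f : ℂ → ℝ) (a : ℝ) (ha : 0 ≤ a)
    (h : ∀ z ∈ s, a ≤ f z) : a ^ s.card ≤ (s.map f).prod := by
  induction s using Multiset.induction_on with
  | empty => simp
  | cons z s ih =>
    rw [Multiset.card_cons, Multiset.map_cons, Multiset.prod_cons, pow_succ']
    have h1 := ih fun w hw => h w (Multiset.mem_cons_of_mem hw)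
    have h2 := h z (Multiset.mem_cons_self _ _)
    exact mul_le_mul h2 h1 (by positivity) (ha.trans h2)

/-- Every coefficient of a polynomial controls its size away from its complex roots, via the
bound of coefficients by the Mahler measure. -/
lemma coeff_mul_prod_relDist_le (p : Polynomial ℝ) (r : ℕ) (x : ℝ) :
    |p.coeff r| / 2 ^ p.natDegree *
      (((p.map (algebraMap ℝ ℂ)).roots).map fun z => relDist z x).prod ≤ |p.eval x| := by
  set P := p.map (algebraMap ℝ ℂ) with hP
  have hdeg : P.natDegree = p.natDegree := Polynomial.natDegree_map _
  have h1 : |p.coeff r| ≤ 2 ^ p.natDegree *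
      (‖P.leadingCoeff‖ * (P.roots.map fun z => max 1 ‖z‖).prod) := by
    have h := P.norm_coeff_le_choose_mul_mahlerMeasure r
    rw [Polynomial.mahlerMeasure_eq_leadingCoeff_mul_prod_roots, hdeg] at h
    have h2 : ‖P.coeff r‖ = |p.coeff r| := by simp [hP]
    rw [h2] at h
    refine h.trans ?_
    have h3 : (p.natDegree.choose r : ℝ) ≤ 2 ^ p.natDegree := by
      exact_mod_cast Nat.choose_le_two_pow _ _
    have h4 : 0 ≤ (P.roots.map fun z => max 1 ‖z‖).prod := by
      apply Multiset.prod_nonneg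
      intro a ha
      obtain ⟨z, -, rfl⟩ := Multiset.mem_map.mp ha
      positivity
    gcongr
  have h2 : |p.eval x| = ‖P.leadingCoeff‖ * (P.roots.map fun z => ‖(x : ℂ) - z‖).prod := by
    have hs := (IsAlgClosed.splits P).eval_eq_prod_roots (x : ℂ)
    have h3 : P.eval (x : ℂ) = ((p.eval x : ℝ) : ℂ) := by
      rw [hP, ← Complex.coe_algebraMap, Polynomial.eval_map_apply]
    rw [← Real.norm_eq_abs, ← Complex.norm_real, ← h3, hs, norm_mul]
    congr 1
    have h4 := map_multiset_prod (normHom (α := ℂ)) (P.roots.map fun z => (x : ℂ) - z)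
    simpa [Multiset.map_map, Function.comp_def] using h4
  have h3 : (P.roots.map fun z => relDist z x).prod * (P.roots.map fun z => max 1 ‖z‖).prod =
      (P.roots.map fun z => ‖(x : ℂ) - z‖).prod := by
    rw [← Multiset.prod_map_mul]
    congr 1
    apply Multiset.map_congr rfl
    intro z _
    unfold relDist
    have : max 1 ‖z‖ ≠ 0 := by positivity
    field_simp
  have h4 : 0 ≤ (P.roots.map fun z => relDist z x).prod := by
    apply Multiset.prod_nonneg
    intro a ha
    obtain ⟨z, -, rfl⟩ := Multiset.mem_map.mp ha
    exact relDist_nonneg z x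
  rw [div_mul_eq_mul_div, div_le_iff₀ (by positivity), h2, ← h3]
  calc _ ≤ (2 ^ p.natDegree * (‖P.leadingCoeff‖ * (P.roots.map fun z => max 1 ‖z‖).prod)) *
        (P.roots.map fun z => relDist z x).prod := by gcongr
    _ = _ := by ring

/-- The closest root alone governs a decreasing function of `|p|`; summing over all roots reduces
a polynomial to powers of relative distances. -/
lemma lintegral_comp_polynomial_le (F : ℝ → ℝ) (hF : AntitoneOn F (Set.Ici 0))
    (hFm : Measurable F) (p : Polynomial ℝ) (r : ℕ)
    (hp : 1 ≤ p.natDegree) (b : ENNReal)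
    (hb : ∀ z : ℂ, ∫⁻ x, ENNReal.ofReal
      (F (|p.coeff r| / 2 ^ p.natDegree * relDist z x ^ p.natDegree)) ∂(gaussianReal 0 1) ≤ b) :
    ∫⁻ x, ENNReal.ofReal (F |p.eval x|) ∂(gaussianReal 0 1) ≤ p.natDegree * b := by
  set Z := (p.map (algebraMap ℝ ℂ)).roots with hZ
  have hcard : Z.card = p.natDegree := by
    rw [hZ, ← (IsAlgClosed.splits _).natDegree_eq_card_roots, Polynomial.natDegree_map]
  set H : ℂ → ℝ → ENNReal := fun z x => ENNReal.ofReal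
    (F (|p.coeff r| / 2 ^ p.natDegree * relDist z x ^ p.natDegree)) with hH
  have hHm : ∀ z, Measurable (H z) := fun z => by
    have := measurable_relDist z
    fun_prop
  have hpt : ∀ x, ENNReal.ofReal (F |p.eval x|) ≤ (Z.map fun z => H z x).sum := by
    intro x
    have hne : Z.toFinset.Nonempty := by
      rw [Multiset.toFinset_nonempty, ← Multiset.card_pos, hcard]; omega
    obtain ⟨z, hz, hmin⟩ := Z.toFinset.exists_min_image (fun z => relDist z x) hne
    have h1 := pow_card_le_prod_map Z (fun w => relDist w x) (relDist z x) (relDist_nonneg z x)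
      fun w hw => hmin w (Multiset.mem_toFinset.mpr hw)
    rw [hcard] at h1
    have h2 : |p.coeff r| / 2 ^ p.natDegree * relDist z x ^ p.natDegree ≤ |p.eval x| :=
      le_trans (by gcongr) (coeff_mul_prod_relDist_le p r x)
    have h3 : F |p.eval x| ≤ F (|p.coeff r| / 2 ^ p.natDegree * relDist z x ^ p.natDegree) :=
      hF (by have := relDist_nonneg z x; simp only [Set.mem_Ici]; positivity)
        (Set.mem_Ici.mpr (abs_nonneg _)) h2
    calc _ ≤ H z x := ENNReal.ofReal_le_ofReal h3
      _ ≤ _ := Multiset.le_sum_of_mem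
          (Multiset.mem_map_of_mem (fun z => H z x) (Multiset.mem_toFinset.mp hz))
  have hsum : ∀ s : Multiset ℂ,
      ∫⁻ x, (s.map fun z => H z x).sum ∂(gaussianReal 0 1) ≤ s.card * b := by
    intro s
    induction s using Multiset.induction_on with
    | empty => simp
    | cons z s ih =>
      simp only [Multiset.map_cons, Multiset.sum_cons, Multiset.card_cons]
      rw [lintegral_add_left (hHm z)]
      push_cast
      rw [add_mul, one_mul, add_comm]
      exact add_le_add ih (hb z)
  calc _ ≤ _ := lintegral_mono hpt
    _ ≤ _ := hsum Z
    _ = _ := by rw [hcard]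

/-- Expectations of a decreasing function of `|p(X)|` are bounded
by an explicit integral over `(0, 1]` that involves only one coefficient of `p` and its degree. -/
lemma lintegral_comp_polynomial_le_unit (F : ℝ → ℝ) (hF : AntitoneOn F (Set.Ici 0))
    (hF0 : ∀ v, 0 ≤ F v) (hFm : Measurable F) (p : Polynomial ℝ) (r : ℕ)
    (hp : 1 ≤ p.natDegree) :
    ∫⁻ x, ENNReal.ofReal (F |p.eval x|) ∂(gaussianReal 0 1) ≤
      p.natDegree * (9 * ∫⁻ v in Set.Ioc (0 : ℝ) 1,
        ENNReal.ofReal (F (|p.coeff r| / 2 ^ p.natDegree * v ^ p.natDegree))) := by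
  refine lintegral_comp_polynomial_le F hF hFm p r hp _ fun z => ?_
  set N := p.natDegree
  set κ := |p.coeff r| / 2 ^ N with hκ
  have hκ0 : 0 ≤ κ := by positivity
  set G : ℝ → ℝ := (Set.Iic (1 : ℝ)).indicator fun v => F (κ * v ^ N) with hG
  have hGm : Measurable G := by
    apply Measurable.indicator _ measurableSet_Iic
    fun_prop
  have hG0 : ∀ v, 0 ≤ G v := fun v => Set.indicator_nonneg (fun v _ => hF0 _) v
  have hanti : ∀ v w : ℝ, 0 ≤ v → v ≤ w → F (κ * w ^ N) ≤ F (κ * v ^ N) := by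
    intro v w hv hvw
    have hw := hv.trans hvw
    exact hF (Set.mem_Ici.mpr (by positivity)) (Set.mem_Ici.mpr (by positivity)) (by gcongr)
  have hGa : AntitoneOn G (Set.Ioi 0) := by
    intro v hv w hw hvw
    by_cases h : w ≤ 1
    · rw [hG, Set.indicator_of_mem (Set.mem_Iic.mpr h),
        Set.indicator_of_mem (Set.mem_Iic.mpr (hvw.trans h))]
      exact hanti v w (le_of_lt hv) hvw
    · have : G w = 0 := Set.indicator_of_notMem (by simpa using h) _
      rw [this]; exact hG0 v
  have h1 : ∫⁻ v in Set.Ioi 0, ENNReal.ofReal (G v) =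
      ∫⁻ v in Set.Ioc (0 : ℝ) 1, ENNReal.ofReal (F (κ * v ^ N)) := by
    have : ∀ v, ENNReal.ofReal (G v) =
        (Set.Iic (1 : ℝ)).indicator (fun v => ENNReal.ofReal (F (κ * v ^ N))) v := by
      intro v
      by_cases h : v ≤ 1
      · simp [hG, h]
      · simp [hG, h]
    simp_rw [this]
    rw [lintegral_indicator measurableSet_Iic, Measure.restrict_restrict measurableSet_Iic,
      Set.inter_comm, Set.Ioi_inter_Iic]
  have h2 : ENNReal.ofReal (F κ) ≤
      ∫⁻ v in Set.Ioc (0 : ℝ) 1, ENNReal.ofReal (F (κ * v ^ N)) := by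
    calc ENNReal.ofReal (F κ) = ∫⁻ v in Set.Ioc (0 : ℝ) 1, ENNReal.ofReal (F κ) := by simp
      _ ≤ _ := by
        apply setLIntegral_mono' measurableSet_Ioc
        intro v hv
        apply ENNReal.ofReal_le_ofReal
        simpa using hanti v 1 hv.1.le hv.2
  calc ∫⁻ x, ENNReal.ofReal (F (κ * relDist z x ^ N)) ∂(gaussianReal 0 1)
      ≤ ∫⁻ x, (ENNReal.ofReal (F κ) + ENNReal.ofReal (G (relDist z x))) ∂(gaussianReal 0 1) := by
        apply lintegral_mono
        intro x
        dsimp only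
        by_cases h : relDist z x ≤ 1
        · have : G (relDist z x) = F (κ * relDist z x ^ N) :=
            Set.indicator_of_mem (Set.mem_Iic.mpr h) _
          rw [this]
          exact le_add_self
        · push Not at h
          refine le_add_right (ENNReal.ofReal_le_ofReal ?_)
          simpa using hanti 1 (relDist z x) zero_le_one h.le
    _ = ENNReal.ofReal (F κ) +
        ∫⁻ x, ENNReal.ofReal (G (relDist z x)) ∂(gaussianReal 0 1) := by
        rw [lintegral_add_left measurable_const]; simp
    _ ≤ (∫⁻ v in Set.Ioc (0 : ℝ) 1, ENNReal.ofReal (F (κ * v ^ N))) +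
        8 * ∫⁻ v in Set.Ioc (0 : ℝ) 1, ENNReal.ofReal (F (κ * v ^ N)) := by
        rw [← h1]
        exact add_le_add (h1 ▸ h2) (lintegral_relDist_le z G hGa hG0 hGm)
    _ = _ := by ring

lemma integral_le_of_lintegral_ofReal_le {α : Type*} [MeasurableSpace α] {μ : Measure α}
    {f : α → ℝ} (hf : Measurable f) (hf0 : ∀ x, 0 ≤ f x) {b : ℝ} (hb : 0 ≤ b)
    (h : ∫⁻ x, ENNReal.ofReal (f x) ∂μ ≤ ENNReal.ofReal b) : ∫ x, f x ∂μ ≤ b := by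
  rw [integral_eq_lintegral_of_nonneg_ae (ae_of_all _ hf0) hf.aestronglyMeasurable]
  exact ENNReal.toReal_le_of_le_ofReal hb h

/-! ### Mean decay of a one-variable Gaussian polynomial -/

/-- The decay profile `min(1, v^{-1/m})`, written so that its value is `1` for all `v ≤ 1`,
including `v = 0`. -/
noncomputable def decay (m : ℕ) (v : ℝ) : ℝ := (max 1 v) ^ (-(1 : ℝ) / m)

lemma neg_one_div_nonpos (m : ℕ) : -(1 : ℝ) / m ≤ 0 :=
  div_nonpos_of_nonpos_of_nonneg (by norm_num) (by positivity)

lemma decay_nonneg (m : ℕ) (v : ℝ) : 0 ≤ decay m v := by unfold decay; positivity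

lemma decay_le_one (m : ℕ) (v : ℝ) : decay m v ≤ 1 :=
  Real.rpow_le_one_of_one_le_of_nonpos (le_max_left _ _) (neg_one_div_nonpos m)

lemma decay_antitone (m : ℕ) : Antitone (decay m) := fun v w h =>
  Real.rpow_le_rpow_of_nonpos (by positivity) (max_le_max le_rfl h) (neg_one_div_nonpos m)

lemma continuous_decay (m : ℕ) : Continuous (decay m) := by
  unfold decay
  refine Continuous.rpow_const (by fun_prop) fun v => Or.inl ?_
  have : (0 : ℝ) < max 1 v := by positivity
  exact this.ne'

lemma decay_of_le_one {m : ℕ} {v : ℝ} (h : v ≤ 1) : decay m v = 1 := by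
  unfold decay; rw [max_eq_left h, Real.one_rpow]

lemma decay_of_one_le {m : ℕ} {v : ℝ} (h : 1 ≤ v) : decay m v = v ^ (-(1 : ℝ) / m) := by
  unfold decay; rw [max_eq_right h]

lemma decay_le_rpow {m : ℕ} {v : ℝ} (h : 0 < v) : decay m v ≤ v ^ (-(1 : ℝ) / m) :=
  Real.rpow_le_rpow_of_nonpos h (le_max_right _ _) (neg_one_div_nonpos m)

lemma decay_monomial_le {m N : ℕ} (hm : 1 ≤ m) (hN : N ≤ m) {c v : ℝ} (hc : 1 ≤ c) (hv : 0 < v) :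
    decay m (c / 2 ^ N * v ^ N) ≤ 2 * decay m c * v ^ (-((N : ℝ) / m)) := by
  have hm0 : (0 : ℝ) < m := by exact_mod_cast hm
  refine (decay_le_rpow (by positivity)).trans ?_
  rw [Real.mul_rpow (by positivity) (by positivity), Real.div_rpow (by positivity) (by positivity),
    decay_of_one_le hc, ← Real.rpow_natCast v, ← Real.rpow_mul hv.le, ← Real.rpow_natCast 2,
    ← Real.rpow_mul (by norm_num)]
  have e1 : (N : ℝ) * (-1 / m) = -((N : ℝ) / m) := by ring
  rw [e1, div_eq_mul_inv, ← Real.rpow_neg (by norm_num), neg_neg]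
  have h2 : (2 : ℝ) ^ ((N : ℝ) / m) ≤ 2 := by
    calc (2 : ℝ) ^ ((N : ℝ) / m) ≤ 2 ^ (1 : ℝ) := by
          apply Real.rpow_le_rpow_of_exponent_le (by norm_num)
          rw [div_le_one hm0]; exact_mod_cast hN
      _ = 2 := Real.rpow_one 2
  rw [mul_comm (c ^ _)]
  gcongr

lemma lintegral_inv_max (B : ℝ) (hB : 0 < B) (hB1 : B ≤ 1) :
    ∫⁻ v in Set.Ioc (0 : ℝ) 1, ENNReal.ofReal (max B v)⁻¹ ≤
      ENNReal.ofReal (1 + Real.log B⁻¹) := by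
  have hlog : 0 ≤ Real.log B⁻¹ := Real.log_nonneg (one_le_inv₀ hB |>.mpr hB1)
  rw [← Set.Ioc_union_Ioc_eq_Ioc hB.le hB1]
  refine (lintegral_union_le _ _ _).trans ?_
  rw [ENNReal.ofReal_add zero_le_one hlog]
  gcongr
  · calc ∫⁻ v in Set.Ioc (0 : ℝ) B, ENNReal.ofReal (max B v)⁻¹
        ≤ ∫⁻ v in Set.Ioc (0 : ℝ) B, ENNReal.ofReal B⁻¹ := by
          apply lintegral_mono
          intro v
          apply ENNReal.ofReal_le_ofReal
          gcongr
          exact le_max_left _ _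
      _ = ENNReal.ofReal 1 := by
          rw [setLIntegral_const, Real.volume_Ioc, ← ENNReal.ofReal_mul (by positivity)]
          congr 1; field_simp; ring
  · have h1 : ∫⁻ v in Set.Ioc B 1, ENNReal.ofReal (max B v)⁻¹ =
        ∫⁻ v in Set.Ioc B 1, ENNReal.ofReal v⁻¹ := by
      apply setLIntegral_congr_fun measurableSet_Ioc
      intro v hv
      dsimp only
      rw [max_eq_right hv.1.le]
    have hintegral : IntervalIntegrable (fun v : ℝ => v⁻¹) volume B 1 := by
      apply intervalIntegral.intervalIntegrable_inv _ continuousOn_id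
      intro x hx
      rw [Set.uIcc_of_le hB1] at hx
      exact (hB.trans_le hx.1).ne'
    rw [h1, ← ofReal_integral_eq_lintegral_ofReal
      ((intervalIntegrable_iff_integrableOn_Ioc_of_le hB1).mp hintegral)
      ((ae_restrict_iff' measurableSet_Ioc).mpr
        (ae_of_all _ fun v hv => inv_nonneg.mpr (hB.trans hv.1).le)),
      ← intervalIntegral.integral_of_le hB1, integral_inv_of_pos hB one_pos, one_div]

lemma lintegral_rpow_unit (α : ℝ) (hα1 : α < 1) :
    ∫⁻ v in Set.Ioc (0 : ℝ) 1, ENNReal.ofReal (v ^ (-α)) = ENNReal.ofReal (1 / (1 - α)) := by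
  have hintegral : IntervalIntegrable (fun v : ℝ => v ^ (-α)) volume 0 1 :=
    intervalIntegral.intervalIntegrable_rpow' (by linarith)
  rw [← ofReal_integral_eq_lintegral_ofReal
      ((intervalIntegrable_iff_integrableOn_Ioc_of_le zero_le_one).mp hintegral)
      ((ae_restrict_iff' measurableSet_Ioc).mpr
        (ae_of_all _ fun v hv => Real.rpow_nonneg hv.1.le _)),
      ← intervalIntegral.integral_of_le zero_le_one, integral_rpow (Or.inl (by linarith))]
  congr 1
  rw [Real.one_rpow, Real.zero_rpow (by linarith)]
  ring

lemma natDegree_pos_of_coeff {p : Polynomial ℝ} {r : ℕ} (hr : 1 ≤ r) (hc : p.coeff r ≠ 0) :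
    1 ≤ p.natDegree := hr.trans (Polynomial.le_natDegree_of_ne_zero hc)

lemma integral_decay_le_one {α : Type*} [MeasurableSpace α] (μ : Measure α)
    [IsProbabilityMeasure μ] (m : ℕ) (g : α → ℝ) : ∫ x, decay m (g x) ∂μ ≤ 1 := by
  by_cases hi : Integrable (fun x => decay m (g x)) μ
  · calc ∫ x, decay m (g x) ∂μ ≤ ∫ _, (1 : ℝ) ∂μ :=
        integral_mono hi (integrable_const _) fun x => decay_le_one m _
      _ = 1 := by simp
  · rw [integral_undef hi]; exact zero_le_one

/-- Integrating out a variable of degree at most `m` costs one logarithm. The parameter `A` is the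
scale at which the logarithm is measured. -/
lemma integral_decay_log (m : ℕ) (hm : 1 ≤ m) (p : Polynomial ℝ) (r : ℕ) (hr : 1 ≤ r)
    (hp : p.natDegree ≤ m) (A : ℝ) (hA : 1 ≤ A) :
    ∫ x, decay m |p.eval x| ∂(gaussianReal 0 1) ≤
      18 * m * (1 + Real.log A) * (decay m |p.coeff r| + A ^ (-(1 : ℝ) / m)) := by
  have hm1 : (1 : ℝ) ≤ m := by exact_mod_cast hm
  have hlogA : 0 ≤ Real.log A := Real.log_nonneg hA
  set B := A ^ (-(1 : ℝ) / m) with hBdef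
  have hB : 0 < B := by positivity
  have hB1 : B ≤ 1 := Real.rpow_le_one_of_one_le_of_nonpos hA (neg_one_div_nonpos m)
  by_cases hc : |p.coeff r| ≤ 1
  · refine (integral_decay_le_one _ _ _).trans ?_
    rw [decay_of_le_one hc]
    have h1 : (1 : ℝ) ≤ 18 * m * (1 + Real.log A) := by nlinarith
    nlinarith
  push Not at hc
  set c := |p.coeff r| with hcdef
  have hN : 1 ≤ p.natDegree := natDegree_pos_of_coeff hr (by
    intro h; rw [hcdef, h] at hc; norm_num at hc)
  set N := p.natDegree with hNdef
  have hd := decay_nonneg m c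
  set w := 2 * decay m c + B with hw
  have hw0 : 0 < w := by positivity
  have hlogB : Real.log B⁻¹ ≤ Real.log A := by
    rw [Real.log_inv, hBdef, Real.log_rpow (by linarith)]
    have : Real.log A / m ≤ Real.log A := div_le_self hlogA hm1
    calc _ = Real.log A / m := by ring
      _ ≤ _ := this
  have key : ∫⁻ v in Set.Ioc (0 : ℝ) 1, ENNReal.ofReal (decay m (c / 2 ^ N * v ^ N)) ≤
      ENNReal.ofReal (w * (1 + Real.log B⁻¹)) := by
    rw [ENNReal.ofReal_mul hw0.le]
    calc _ ≤ ∫⁻ v in Set.Ioc (0 : ℝ) 1, ENNReal.ofReal w * ENNReal.ofReal (max B v)⁻¹ := by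
          apply setLIntegral_mono' measurableSet_Ioc
          intro v hv
          rw [← ENNReal.ofReal_mul hw0.le]
          apply ENNReal.ofReal_le_ofReal
          rw [← div_eq_mul_inv, le_div_iff₀ (by positivity)]
          rcases le_total v B with h | h
          · rw [max_eq_left h]
            have := decay_le_one m (c / 2 ^ N * v ^ N)
            nlinarith
          · rw [max_eq_right h, ← le_div_iff₀ hv.1]
            refine (decay_monomial_le hm hp hc.le hv.1).trans ?_
            have h3 : v ^ (-((N : ℝ) / m)) ≤ v ^ (-1 : ℝ) := by
              apply Real.rpow_le_rpow_of_exponent_ge hv.1 hv.2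
              have : (N : ℝ) / m ≤ 1 := by
                rw [div_le_one (by linarith)]; exact_mod_cast hp
              linarith
            rw [Real.rpow_neg_one] at h3
            rw [div_eq_mul_inv]
            exact mul_le_mul (by linarith) h3 (Real.rpow_nonneg hv.1.le _) hw0.le
      _ = ENNReal.ofReal w * ∫⁻ v in Set.Ioc (0 : ℝ) 1, ENNReal.ofReal (max B v)⁻¹ :=
          lintegral_const_mul' _ _ ENNReal.ofReal_ne_top
      _ ≤ _ := by gcongr; exact lintegral_inv_max B hB hB1
  have hlogB0 : 0 ≤ Real.log B⁻¹ := Real.log_nonneg (one_le_inv₀ hB |>.mpr hB1)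
  have hreal : ∫ x, decay m |p.eval x| ∂(gaussianReal 0 1) ≤
      N * (9 * (w * (1 + Real.log B⁻¹))) := by
    apply integral_le_of_lintegral_ofReal_le
    · exact ((continuous_decay m).comp (by fun_prop)).measurable
    · exact fun x => decay_nonneg m _
    · positivity
    refine (lintegral_comp_polynomial_le_unit (decay m) ((decay_antitone m).antitoneOn _)
      (decay_nonneg m) (continuous_decay m).measurable p r hN).trans ?_
    rw [ENNReal.ofReal_mul (by positivity), ENNReal.ofReal_natCast,
      ENNReal.ofReal_mul (by positivity)]
    gcongr
    simp
  have hNm : (N : ℝ) ≤ m := by exact_mod_cast hp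
  calc _ ≤ _ := hreal
    _ ≤ m * (9 * ((2 * (decay m c + B)) * (1 + Real.log A))) := by
      gcongr
      rw [hw]; linarith
    _ = _ := by ring

/-- Integrating out a variable of degree less than `m` costs no logarithm. -/
lemma integral_decay_nolog (m D : ℕ) (hDm : D < m) (p : Polynomial ℝ) (r : ℕ) (hr : 1 ≤ r)
    (hp : p.natDegree ≤ D) :
    ∫ x, decay m |p.eval x| ∂(gaussianReal 0 1) ≤ 18 * m * m * decay m |p.coeff r| := by
  have hm : 1 ≤ m := by omega
  have hm1 : (1 : ℝ) ≤ m := by exact_mod_cast hm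
  by_cases hc : |p.coeff r| ≤ 1
  · refine (integral_decay_le_one _ _ _).trans ?_
    rw [decay_of_le_one hc]
    nlinarith
  push Not at hc
  set c := |p.coeff r| with hcdef
  have hN : 1 ≤ p.natDegree := natDegree_pos_of_coeff hr (by
    intro h; rw [hcdef, h] at hc; norm_num at hc)
  set N := p.natDegree with hNdef
  have hd := decay_nonneg m c
  have hNm : (N : ℝ) + 1 ≤ m := by exact_mod_cast (by omega : N + 1 ≤ m)
  have hα : (N : ℝ) / m < 1 := by rw [div_lt_one (by linarith)]; linarith
  have hα' : 1 / (1 - (N : ℝ) / m) ≤ m := by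
    rw [div_le_iff₀ (by linarith)]
    have : (m : ℝ) * (1 - N / m) = m - N := by field_simp
    rw [this]; linarith
  have key : ∫⁻ v in Set.Ioc (0 : ℝ) 1, ENNReal.ofReal (decay m (c / 2 ^ N * v ^ N)) ≤
      ENNReal.ofReal (2 * decay m c * m) := by
    calc _ ≤ ∫⁻ v in Set.Ioc (0 : ℝ) 1, ENNReal.ofReal (2 * decay m c) *
            ENNReal.ofReal (v ^ (-((N : ℝ) / m))) := by
          apply setLIntegral_mono' measurableSet_Ioc
          intro v hv
          rw [← ENNReal.ofReal_mul (by positivity)]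
          apply ENNReal.ofReal_le_ofReal
          exact decay_monomial_le hm (by omega) hc.le hv.1
      _ = ENNReal.ofReal (2 * decay m c) * ENNReal.ofReal (1 / (1 - (N : ℝ) / m)) := by
          rw [lintegral_const_mul' _ _ ENNReal.ofReal_ne_top, lintegral_rpow_unit _ hα]
      _ ≤ _ := by
          rw [← ENNReal.ofReal_mul (by positivity)]
          gcongr
  have hreal : ∫ x, decay m |p.eval x| ∂(gaussianReal 0 1) ≤
      N * (9 * (2 * decay m c * m)) := by
    apply integral_le_of_lintegral_ofReal_le
    · exact ((continuous_decay m).comp (by fun_prop)).measurable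
    · exact fun x => decay_nonneg m _
    · positivity
    refine (lintegral_comp_polynomial_le_unit (decay m) ((decay_antitone m).antitoneOn _)
      (decay_nonneg m) (continuous_decay m).measurable p r hN).trans ?_
    rw [ENNReal.ofReal_mul (by positivity), ENNReal.ofReal_natCast,
      ENNReal.ofReal_mul (by positivity)]
    gcongr
    simp
  calc _ ≤ _ := hreal
    _ ≤ m * (9 * (2 * decay m c * m)) := by
      gcongr
      linarith
    _ = _ := by ring

/-! ### Oscillatory integrals of one-variable polynomials -/

lemma abs_im_one_div_sub (z : ℂ) (x : ℝ) :
    |(1 / ((x : ℂ) - z)).im| = Real.pi * cauchyPDFReal z.re ‖z.im‖₊ x := by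
  rw [cauchyPDFReal_def, one_div, Complex.inv_im, Complex.normSq_apply]
  simp only [Complex.sub_im, Complex.ofReal_im, Complex.sub_re, Complex.ofReal_re, coe_nnnorm,
    Real.norm_eq_abs, zero_sub, neg_neg, sq_abs]
  have h1 : (x - z.re) * (x - z.re) + -z.im * -z.im = (x - z.re) ^ 2 + z.im ^ 2 := by ring
  rw [h1, abs_div, abs_of_nonneg (by positivity : 0 ≤ (x - z.re) ^ 2 + z.im ^ 2), ← mul_assoc,
    ← mul_assoc, mul_inv_cancel₀ Real.pi_ne_zero, one_mul, div_eq_mul_inv]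

/-- The total variation of `arctan (q / η)` is at most `π` times the degree of `q`. Here
`η q' / (q² + η²)` is the imaginary part of the logarithmic derivative of `q - iη`, a sum of
Poisson kernels over the complex roots of that polynomial. -/
lemma exists_dominating_variation (q : Polynomial ℝ) (η : ℝ) (hη : 0 < η) :
    ∃ h : ℝ → ℝ, Integrable h ∧
      (∀ x, |q.derivative.eval x| / (q.eval x ^ 2 + η ^ 2) ≤ h x) ∧
      ∫ x, h x ≤ q.natDegree * Real.pi / η := by
  set Q : Polynomial ℂ := q.map (algebraMap ℝ ℂ) - Polynomial.C (η * Complex.I) with hQ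
  have hQev : ∀ x : ℝ, Q.eval (x : ℂ) = ((q.eval x : ℝ) : ℂ) - η * Complex.I := by
    intro x
    rw [hQ, Polynomial.eval_sub, Polynomial.eval_C, ← Complex.coe_algebraMap,
      Polynomial.eval_map_apply]
  have hQ0 : ∀ x : ℝ, Q.eval (x : ℂ) ≠ 0 := by
    intro x h
    rw [hQev] at h
    have := congrArg Complex.im h
    simp at this
    exact hη.ne' this
  have hQd : ∀ x : ℝ, Q.derivative.eval (x : ℂ) = ((q.derivative.eval x : ℝ) : ℂ) := by
    intro x
    rw [hQ, Polynomial.derivative_sub, Polynomial.derivative_C, sub_zero,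
      Polynomial.derivative_map, ← Complex.coe_algebraMap, Polynomial.eval_map_apply]
  have hcard : Q.roots.card ≤ q.natDegree := by
    refine (Polynomial.card_roots' _).trans ?_
    refine (Polynomial.natDegree_sub_le _ _).trans (max_le Polynomial.natDegree_map_le ?_)
    rw [Polynomial.natDegree_C]
    exact Nat.zero_le _
  have hIm : ∀ x : ℝ, |q.derivative.eval x| / (q.eval x ^ 2 + η ^ 2) =
      η⁻¹ * |((Q.roots.map fun z => 1 / ((x : ℂ) - z)).sum).im| := by
    intro x
    rw [← (IsAlgClosed.splits Q).eval_derivative_div_eval_of_ne_zero (hQ0 x), hQd, hQev]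
    have h1 : (((q.derivative.eval x : ℝ) : ℂ) / (((q.eval x : ℝ) : ℂ) - η * Complex.I)).im =
        q.derivative.eval x * η / (q.eval x ^ 2 + η ^ 2) := by
      rw [Complex.div_im, Complex.normSq_apply]
      simp
      ring
    rw [h1, abs_div, abs_mul, abs_of_pos hη,
      abs_of_nonneg (by positivity : 0 ≤ q.eval x ^ 2 + η ^ 2)]
    field_simp
  have hsum : ∀ s : Multiset ℂ, ∃ h : ℝ → ℝ, Integrable h ∧
      (∀ x : ℝ, |((s.map fun z => 1 / ((x : ℂ) - z)).sum).im| ≤ h x) ∧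
      ∫ x, h x ≤ s.card * Real.pi := by
    intro s
    induction s using Multiset.induction_on with
    | empty => exact ⟨0, integrable_zero _ _ _, by simp, by simp⟩
    | cons z s ih =>
      obtain ⟨h, hi, hle, hintegral⟩ := ih
      have hci : Integrable (fun x => Real.pi * cauchyPDFReal z.re ‖z.im‖₊ x) :=
        (integrable_cauchyPDFReal _).const_mul _
      refine ⟨fun x => Real.pi * cauchyPDFReal z.re ‖z.im‖₊ x + h x, hci.add hi, ?_, ?_⟩
      · intro x
        rw [Multiset.map_cons, Multiset.sum_cons, Complex.add_im]
        refine (abs_add_le _ _).trans ?_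
        rw [abs_im_one_div_sub]
        linarith [hle x]
      · rw [integral_add hci hi, integral_const_mul, Multiset.card_cons]
        have h1 : ∫ x, cauchyPDFReal z.re ‖z.im‖₊ x ≤ 1 := by
          by_cases h0 : ‖z.im‖₊ = 0
          · rw [h0]; simp
          · rw [integral_cauchyPDFReal_eq_one _ h0]
        push_cast
        nlinarith [Real.pi_pos]
  obtain ⟨h, hi, hle, hintegral⟩ := hsum Q.roots
  refine ⟨fun x => η⁻¹ * h x, hi.const_mul _, ?_, ?_⟩
  · intro x
    rw [hIm]
    exact mul_le_mul_of_nonneg_left (hle x) (by positivity)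
  · rw [integral_const_mul, inv_mul_eq_div]
    have hc : (Q.roots.card : ℝ) ≤ q.natDegree := by exact_mod_cast hcard
    have := Real.pi_pos
    gcongr
    exact hintegral.trans (by gcongr)

lemma hasDerivAt_gaussianPDFReal (x : ℝ) :
    HasDerivAt (gaussianPDFReal 0 1) (-x * gaussianPDFReal 0 1 x) x := by
  rw [gaussianPDFReal_def]
  have h1 : HasDerivAt (fun x : ℝ => -(x - 0) ^ 2 / (2 * ((1 : NNReal) : ℝ))) (-x) x := by
    have := (((hasDerivAt_id x).sub_const 0).pow 2).neg.div_const (2 * ((1 : NNReal) : ℝ))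
    refine this.congr_deriv ?_
    simp
    ring
  have := (h1.exp).const_mul (√(2 * Real.pi * ((1 : NNReal) : ℝ)))⁻¹
  refine this.congr_deriv ?_
  ring

lemma continuous_gaussianPDFReal : Continuous (gaussianPDFReal 0 1) :=
  continuous_iff_continuousAt.mpr fun x => (hasDerivAt_gaussianPDFReal x).continuousAt

lemma gaussianPDFReal_le_two (x : ℝ) : gaussianPDFReal 0 1 x ≤ 2 := by
  have h1 := gaussianPDFReal_mul_le x
  have h2 := gaussianPDFReal_nonneg 0 1 x
  nlinarith [abs_nonneg x]

lemma integrable_abs_mul_gaussianPDFReal :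
    Integrable (fun x : ℝ => |x| * gaussianPDFReal 0 1 x) := by
  have h := (integrable_mul_exp_neg_mul_sq (b := 1 / 2) (by norm_num)).abs.const_mul
    (√(2 * Real.pi * ((1 : NNReal) : ℝ)))⁻¹
  refine h.congr (ae_of_all _ fun x => ?_)
  simp only [gaussianPDFReal_def, abs_mul, Real.abs_exp]
  have : -(1 / 2) * x ^ 2 = -(x - 0) ^ 2 / (2 * ((1 : NNReal) : ℝ)) := by simp; ring
  rw [this]
  ring

/-- Integration by parts against the regularised inverse `q / (q² + η²)` of `q = p'`. The first
term comes from the derivatives of `q / (q² + η²)` and of the Gaussian density, the second is the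
error made in replacing `1` by `q² / (q² + η²)`. -/
lemma norm_integral_exp_le (p : Polynomial ℝ) (η : ℝ) (hη : 0 < η) :
    ‖∫ x, Complex.exp (Complex.I * ((p.eval x : ℝ) : ℂ)) ∂(gaussianReal 0 1)‖ ≤
      (2 * (p.derivative.natDegree * Real.pi) + ∫ x : ℝ, |x| * gaussianPDFReal 0 1 x) / η +
      ∫ x, η ^ 2 / (|p.derivative.eval x| ^ 2 + η ^ 2) ∂(gaussianReal 0 1) := by
  set q := p.derivative with hq
  set φ := gaussianPDFReal 0 1 with hφ
  have hφ0 : ∀ x, 0 ≤ φ x := gaussianPDFReal_nonneg 0 1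
  have hφi : Integrable φ := integrable_gaussianPDFReal 0 1
  have hφc : Continuous φ := continuous_gaussianPDFReal
  have hpos : ∀ x, 0 < q.eval x ^ 2 + η ^ 2 := fun x => by positivity
  obtain ⟨h, hhi, hhle, hhint⟩ := exists_dominating_variation q η hη
  set w : ℝ → ℝ := fun x => q.eval x / (q.eval x ^ 2 + η ^ 2) with hw
  have hwc : Continuous w :=
    q.continuous.div ((q.continuous.pow 2).add continuous_const) fun x => (hpos x).ne'
  set w' : ℝ → ℝ := fun x => (q.derivative.eval x * (q.eval x ^ 2 + η ^ 2) -
    q.eval x * (2 * q.eval x * q.derivative.eval x)) / (q.eval x ^ 2 + η ^ 2) ^ 2 with hw'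
  have hw'c : Continuous w' := by
    have h1 := q.continuous
    have h2 := q.derivative.continuous
    refine Continuous.div (by fun_prop) (by fun_prop) fun x => ?_
    have := hpos x
    positivity
  have hwd : ∀ x, HasDerivAt w (w' x) x := by
    intro x
    have h1 := q.hasDerivAt x
    have h2 := (h1.pow 2).add_const (η ^ 2)
    refine (h1.div h2 (hpos x).ne').congr_deriv ?_
    simp [hw']
  have hwle : ∀ x, |w x| ≤ 1 / (2 * η) := by
    intro x
    rw [hw, abs_div, abs_of_pos (hpos x), div_le_div_iff₀ (hpos x) (by positivity)]
    nlinarith [sq_nonneg (|q.eval x| - η), sq_abs (q.eval x)]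
  have hw'le : ∀ x, |w' x| ≤ h x := by
    intro x
    refine le_trans ?_ (hhle x)
    have e : w' x = q.derivative.eval x * (η ^ 2 - q.eval x ^ 2) /
        (q.eval x ^ 2 + η ^ 2) ^ 2 := by
      simp only [hw']; ring
    rw [e, abs_div, abs_mul, abs_of_pos (pow_pos (hpos x) 2),
      div_le_div_iff₀ (pow_pos (hpos x) 2) (hpos x)]
    have h1 : |η ^ 2 - q.eval x ^ 2| ≤ q.eval x ^ 2 + η ^ 2 := by
      rw [abs_le]; constructor <;> nlinarith [sq_nonneg η, sq_nonneg (q.eval x)]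
    have h2 := abs_nonneg (q.derivative.eval x)
    have h3 := hpos x
    calc _ = |q.derivative.eval x| * (q.eval x ^ 2 + η ^ 2) * |η ^ 2 - q.eval x ^ 2| := by ring
      _ ≤ |q.derivative.eval x| * (q.eval x ^ 2 + η ^ 2) * (q.eval x ^ 2 + η ^ 2) := by gcongr
      _ = _ := by ring
  set u : ℝ → ℂ := fun x => ((w x * φ x : ℝ) : ℂ) with hu
  set u' : ℝ → ℂ := fun x => ((w' x * φ x + w x * (-x * φ x) : ℝ) : ℂ) with hu'
  set v : ℝ → ℂ := fun x => Complex.exp (Complex.I * ((p.eval x : ℝ) : ℂ)) with hv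
  set v' : ℝ → ℂ := fun x => Complex.exp (Complex.I * ((p.eval x : ℝ) : ℂ)) *
    (Complex.I * ((q.eval x : ℝ) : ℂ)) with hv'
  have hud : ∀ x, HasDerivAt u (u' x) x := fun x =>
    ((hwd x).mul (hasDerivAt_gaussianPDFReal x)).ofReal_comp
  have hvd : ∀ x, HasDerivAt v (v' x) x := fun x =>
    (((p.hasDerivAt x).ofReal_comp).const_mul Complex.I).cexp
  have hnv : ∀ x, ‖v x‖ = 1 := fun x => by
    simp only [hv]
    rw [mul_comm, Complex.norm_exp_ofReal_mul_I]
  have hvc : Continuous v := by have := p.continuous; fun_prop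
  have hv'c : Continuous v' := by
    have := p.continuous; have := q.continuous; fun_prop
  have huc : Continuous u := by fun_prop
  have hu'c : Continuous u' := by fun_prop
  -- an integrable majorant of `u'`
  set maj : ℝ → ℝ := fun x => 2 * h x + 1 / (2 * η) * (|x| * φ x) with hmaj
  have hmaji : Integrable maj :=
    (hhi.const_mul 2).add (integrable_abs_mul_gaussianPDFReal.const_mul _)
  have hu'le : ∀ x, ‖u' x * v x‖ ≤ maj x := by
    intro x
    rw [norm_mul, hnv, mul_one, hu', Complex.norm_real, Real.norm_eq_abs]
    refine (abs_add_le _ _).trans ?_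
    rw [abs_mul, abs_mul, abs_mul, abs_neg, abs_of_nonneg (hφ0 x)]
    have h1 := hwle x
    have h2 := hw'le x
    have h3 := hφ0 x
    have h4 : φ x ≤ 2 := gaussianPDFReal_le_two x
    have h5 : |w' x| * φ x ≤ h x * 2 := by
      have := (abs_nonneg _).trans h2
      gcongr
    have h6 : |w x| * (|x| * φ x) ≤ 1 / (2 * η) * (|x| * φ x) := by gcongr
    simp only [hmaj]
    linarith
  have huv'eq : ∀ x, u x * v' x =
      Complex.I * ((q.eval x ^ 2 / (q.eval x ^ 2 + η ^ 2) * φ x : ℝ) * v x) := by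
    intro x
    simp only [hu, hv', hv, hw]
    push_cast
    ring
  have huv'i : Integrable (u * v') := by
    refine hφi.mono' (huc.mul hv'c).aestronglyMeasurable (ae_of_all _ fun x => ?_)
    rw [Pi.mul_apply, huv'eq, norm_mul, norm_mul, hnv, Complex.norm_I, Complex.norm_real,
      Real.norm_eq_abs, abs_of_nonneg (by have := hφ0 x; positivity), one_mul, mul_one]
    have : q.eval x ^ 2 / (q.eval x ^ 2 + η ^ 2) ≤ 1 := by
      rw [div_le_one (hpos x)]; nlinarith
    have := hφ0 x
    nlinarith
  have hu'vi : Integrable (u' * v) :=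
    hmaji.mono' (hu'c.mul hvc).aestronglyMeasurable (ae_of_all _ hu'le)
  have huvi : Integrable (u * v) := by
    refine (hφi.const_mul (1 / (2 * η))).mono' (huc.mul hvc).aestronglyMeasurable
      (ae_of_all _ fun x => ?_)
    rw [Pi.mul_apply, norm_mul, hnv, mul_one, hu, Complex.norm_real, Real.norm_eq_abs, abs_mul,
      abs_of_nonneg (hφ0 x)]
    have := hφ0 x
    have := hwle x
    gcongr
  have hibp := integral_mul_deriv_eq_deriv_mul_of_integrable (fun x _ => hud x)
    (fun x _ => hvd x) huv'i hu'vi huvi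
  have hmain : ‖∫ x, u x * v' x‖ ≤
      (2 * (q.natDegree * Real.pi) + ∫ x : ℝ, |x| * φ x) / η := by
    rw [hibp, norm_neg]
    refine (norm_integral_le_of_norm_le hmaji (ae_of_all _ hu'le)).trans ?_
    rw [hmaj, integral_add (hhi.const_mul 2)
      (integrable_abs_mul_gaussianPDFReal.const_mul _), integral_const_mul, integral_const_mul,
      add_div]
    have hI : 0 ≤ ∫ x : ℝ, |x| * φ x :=
      integral_nonneg fun x => mul_nonneg (abs_nonneg _) (hφ0 x)
    have h1 : 1 / (2 * η) * (∫ x : ℝ, |x| * φ x) ≤ (∫ x : ℝ, |x| * φ x) / η := by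
      rw [one_div_mul_eq_div]
      apply div_le_div_of_nonneg_left hI hη
      linarith
    have h2 : 2 * (∫ x, h x) ≤ 2 * (q.natDegree * Real.pi) / η := by
      rw [mul_div_assoc]; gcongr
    linarith
  -- split `1 = q² / (q² + η²) + η² / (q² + η²)`
  set R : ℝ → ℂ := fun x => ((η ^ 2 / (q.eval x ^ 2 + η ^ 2) * φ x : ℝ) : ℂ) * v x with hR
  have hRn : ∀ x, ‖R x‖ = φ x * (η ^ 2 / (|q.eval x| ^ 2 + η ^ 2)) := by
    intro x
    rw [hR, norm_mul, hnv, mul_one, Complex.norm_real, Real.norm_eq_abs,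
      abs_of_nonneg (by have := hφ0 x; positivity), sq_abs, mul_comm]
  have hRi : Integrable R := by
    refine hφi.mono' ?_ (ae_of_all _ fun x => ?_)
    · apply Continuous.aestronglyMeasurable
      have h1 : Continuous fun x => η ^ 2 / (q.eval x ^ 2 + η ^ 2) :=
        continuous_const.div ((q.continuous.pow 2).add continuous_const) fun x => (hpos x).ne'
      fun_prop
    · rw [hRn]
      have h1 : η ^ 2 / (|q.eval x| ^ 2 + η ^ 2) ≤ 1 := by
        rw [div_le_one (by positivity)]; nlinarith [sq_nonneg |q.eval x|]
      have := hφ0 x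
      nlinarith
  have hsplit : ∫ x, v x ∂(gaussianReal 0 1) = -Complex.I * (∫ x, u x * v' x) + ∫ x, R x := by
    have huv'i2 : Integrable fun x => -Complex.I * (u x * v' x) := huv'i.const_mul _
    rw [integral_gaussianReal_eq_integral_smul one_ne_zero, ← integral_const_mul,
      ← integral_add huv'i2 hRi]
    apply integral_congr_ae
    refine ae_of_all _ fun x => ?_
    dsimp only
    rw [huv'eq, hR, ← mul_assoc, neg_mul, Complex.I_mul_I, neg_neg, one_mul, ← add_mul,
      ← Complex.ofReal_add, ← add_mul, ← add_div, div_self (hpos x).ne', one_mul,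
      Complex.real_smul]
  rw [hsplit]
  refine (norm_add_le _ _).trans (add_le_add ?_ ?_)
  · rw [norm_mul, norm_neg, Complex.norm_I, one_mul]
    exact hmain
  · refine (norm_integral_le_integral_norm _).trans (le_of_eq ?_)
    rw [integral_gaussianReal_eq_integral_smul one_ne_zero]
    simp_rw [hRn, smul_eq_mul]
    rfl

/-- The part of the Gaussian mass where `|q|` is at most of order `η`. -/
lemma integral_residual_le (q : Polynomial ℝ) (s : ℕ) (hs : q.coeff s ≠ 0)
    (hN : 1 ≤ q.natDegree) (η : ℝ) (hη : 0 < η) :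
    ∫ x, η ^ 2 / (|q.eval x| ^ 2 + η ^ 2) ∂(gaussianReal 0 1) ≤
      36 * Real.pi * q.natDegree * (η / |q.coeff s|) ^ (1 / (q.natDegree : ℝ)) := by
  set N := q.natDegree with hNdef
  have hN0 : (0 : ℝ) < N := by exact_mod_cast hN
  have hc : 0 < |q.coeff s| := abs_pos.mpr hs
  set c := |q.coeff s| with hcdef
  set z := (η / c) ^ (1 / (N : ℝ)) with hz
  have hz0 : 0 < z := by positivity
  have hzN : z ^ N = η / c := by
    rw [hz, ← Real.rpow_natCast, ← Real.rpow_mul (by positivity), one_div_mul_cancel hN0.ne',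
      Real.rpow_one]
  set F : ℝ → ℝ := fun v => η ^ 2 / (v ^ 2 + η ^ 2) with hF
  have hFa : AntitoneOn F (Set.Ici 0) := by
    intro a ha b hb hab
    have ha' : 0 ≤ a := ha
    simp only [hF]
    gcongr
  have hFc : Continuous F := continuous_const.div (by fun_prop) fun x => by positivity
  have hFle : ∀ v : ℝ, 0 < v → F (c / 2 ^ N * v ^ N) ≤ 2 * (1 + (v / (2 * z)) ^ 2)⁻¹ := by
    intro v hv
    set w := v / (2 * z) with hw
    have hw0 : 0 < w := by positivity
    have e : c / 2 ^ N * v ^ N = η * w ^ N := by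
      rw [hw, div_pow, mul_pow, hzN]; field_simp
    have e2 : F (η * w ^ N) = (1 + (w ^ N) ^ 2)⁻¹ := by
      simp only [hF]; field_simp; ring
    have h1 : w ^ 2 ≤ 1 + (w ^ N) ^ 2 := by
      rcases le_total w 1 with h | h
      · nlinarith [sq_nonneg (w ^ N)]
      · have : w ≤ w ^ N := le_self_pow₀ h (by omega)
        nlinarith
    rw [e, e2, ← div_eq_mul_inv, inv_eq_one_div, div_le_div_iff₀ (by positivity) (by positivity)]
    nlinarith [sq_nonneg (w ^ N)]
  have hintegral : Integrable fun v : ℝ => 2 * (1 + (v / (2 * z)) ^ 2)⁻¹ :=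
    (integrable_inv_one_add_sq.comp_div (by positivity : 2 * z ≠ 0)).const_mul 2
  have hval : ∫ v : ℝ, 2 * (1 + (v / (2 * z)) ^ 2)⁻¹ = 4 * Real.pi * z := by
    rw [integral_const_mul, Measure.integral_comp_div (fun x : ℝ => (1 + x ^ 2)⁻¹) (2 * z),
      integral_univ_inv_one_add_sq, abs_of_pos (by positivity), smul_eq_mul]
    ring
  have key : ∫⁻ v in Set.Ioc (0 : ℝ) 1, ENNReal.ofReal (F (c / 2 ^ N * v ^ N)) ≤
      ENNReal.ofReal (4 * Real.pi * z) := by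
    calc _ ≤ ∫⁻ v in Set.Ioc (0 : ℝ) 1, ENNReal.ofReal (2 * (1 + (v / (2 * z)) ^ 2)⁻¹) :=
          setLIntegral_mono' measurableSet_Ioc fun v hv =>
            ENNReal.ofReal_le_ofReal (hFle v hv.1)
      _ ≤ ∫⁻ v : ℝ, ENNReal.ofReal (2 * (1 + (v / (2 * z)) ^ 2)⁻¹) := setLIntegral_le_lintegral _ _
      _ = _ := by
          rw [← hval, ofReal_integral_eq_lintegral_ofReal hintegral
            (ae_of_all _ fun v => by positivity)]
  have hreal : ∫ x, F |q.eval x| ∂(gaussianReal 0 1) ≤ N * (9 * (4 * Real.pi * z)) := by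
    have := Real.pi_pos
    apply integral_le_of_lintegral_ofReal_le
    · exact (hFc.comp (by fun_prop)).measurable
    · exact fun x => by simp only [hF]; positivity
    · positivity
    refine (lintegral_comp_polynomial_le_unit F hFa (fun v => by simp only [hF]; positivity)
      hFc.measurable q s hN).trans ?_
    rw [ENNReal.ofReal_mul (by positivity), ENNReal.ofReal_natCast,
      ENNReal.ofReal_mul (by positivity)]
    gcongr
    simp
  exact hreal.trans (le_of_eq (by ring))

lemma norm_integral_le_one {α : Type*} [MeasurableSpace α] (μ : Measure α)
    [IsProbabilityMeasure μ] (g : α → ℂ) (hg : ∀ x, ‖g x‖ ≤ 1) : ‖∫ x, g x ∂μ‖ ≤ 1 := by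
  simpa using norm_integral_le_of_norm_le_const (μ := μ) (ae_of_all _ hg)

lemma norm_exp_I_mul_ofReal (v : ℝ) : ‖Complex.exp (Complex.I * (v : ℂ))‖ = 1 := by
  rw [mul_comm, Complex.norm_exp_ofReal_mul_I]

lemma norm_integral_exp_affine (a b : ℝ) :
    ‖∫ x : ℝ, Complex.exp (Complex.I * ((a * x + b : ℝ) : ℂ)) ∂(gaussianReal 0 1)‖ ≤
      Real.exp (-(a ^ 2) / 2) := by
  have e : ∀ x : ℝ, Complex.exp (Complex.I * ((a * x + b : ℝ) : ℂ)) =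
      Complex.exp (a * x * Complex.I) * Complex.exp (Complex.I * (b : ℂ)) := by
    intro x
    rw [← Complex.exp_add]
    push_cast
    ring_nf
  simp_rw [e]
  rw [integral_mul_const, norm_mul, norm_exp_I_mul_ofReal, mul_one, ← charFun_apply_real,
    charFun_gaussianReal, Complex.norm_exp]
  apply le_of_eq
  congr 1
  simp [← Complex.ofReal_pow]
  ring

/-- One-variable oscillatory estimate: the characteristic function of a Gaussian polynomial of
degree at most `m` is controlled by any one of its nonconstant coefficients. -/
lemma exists_norm_integral_exp_le (m : ℕ) (hm : 1 ≤ m) :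
    ∃ C : ℝ, 0 < C ∧ ∀ (p : Polynomial ℝ) (r : ℕ), p.natDegree ≤ m → 1 ≤ r →
      ‖∫ x, Complex.exp (Complex.I * ((p.eval x : ℝ) : ℂ)) ∂(gaussianReal 0 1)‖ ≤
        C * decay m |p.coeff r| := by
  have hm0 : (0 : ℝ) < m := by exact_mod_cast hm
  have hm1 : (1 : ℝ) ≤ m := by exact_mod_cast hm
  have hπ := Real.pi_pos
  set K := ∫ x : ℝ, |x| * gaussianPDFReal 0 1 x with hK
  have hK0 : 0 ≤ K :=
    integral_nonneg fun x => mul_nonneg (abs_nonneg _) (gaussianPDFReal_nonneg 0 1 x)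
  set C := 2 * (m * Real.pi) + K + 36 * Real.pi * m + 1 with hC
  have hC1 : 1 ≤ C := by
    have : 0 ≤ 2 * (m * Real.pi) + K + 36 * Real.pi * m := by positivity
    linarith
  refine ⟨C, by linarith, fun p r hp hr => ?_⟩
  by_cases hle : |p.coeff r| ≤ 1
  · rw [decay_of_le_one hle, mul_one]
    exact (norm_integral_le_one _ _ fun x => (norm_exp_I_mul_ofReal _).le).trans hC1
  push Not at hle
  have hne : p.coeff r ≠ 0 := by
    intro h; rw [h, abs_zero] at hle; linarith
  have hpos := natDegree_pos_of_coeff hr hne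
  have hd := decay_nonneg m |p.coeff r|
  by_cases h1 : p.natDegree ≤ 1
  · obtain ⟨a, b, rfl⟩ := Polynomial.exists_eq_X_add_C_of_natDegree_le_one h1
    have hr1 : r = 1 := le_antisymm ((Polynomial.le_natDegree_of_ne_zero hne).trans h1) hr
    subst hr1
    have hca : (Polynomial.C a * Polynomial.X + Polynomial.C b).coeff 1 = a := by
      simp [Polynomial.coeff_C]
    rw [hca] at hle hd ⊢
    have hev : ∀ x : ℝ, (Polynomial.C a * Polynomial.X + Polynomial.C b).eval x = a * x + b := by
      intro x; simp
    simp_rw [hev]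
    refine (norm_integral_exp_affine a b).trans ?_
    have h2 : Real.exp (-(a ^ 2) / 2) ≤ |a|⁻¹ := by
      rw [neg_div, Real.exp_neg]
      apply inv_anti₀ (by linarith)
      have := Real.add_one_le_exp (a ^ 2 / 2)
      nlinarith [sq_abs a, sq_nonneg (|a| - 1)]
    have h3 : |a|⁻¹ ≤ decay m |a| := by
      rw [decay_of_one_le hle.le, ← Real.rpow_neg_one]
      apply Real.rpow_le_rpow_of_exponent_le hle.le
      rw [neg_div, neg_le_neg_iff, div_le_one hm0]
      exact hm1
    nlinarith
  push Not at h1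
  set q := p.derivative with hq
  have hqN : q.natDegree = p.natDegree - 1 := Polynomial.natDegree_derivative p
  have hN1 : 1 ≤ q.natDegree := by omega
  have hNm : q.natDegree + 1 ≤ m := by omega
  have hqc : q.coeff (r - 1) = p.coeff r * r := by
    obtain ⟨k, rfl⟩ : ∃ k, r = k + 1 := ⟨r - 1, by omega⟩
    rw [hq, Polynomial.coeff_derivative]
    simp
  set c := |q.coeff (r - 1)| with hc
  have hcr : |p.coeff r| ≤ c := by
    rw [hc, hqc, abs_mul, Nat.abs_cast]
    have : (1 : ℝ) ≤ r := by exact_mod_cast hr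
    nlinarith
  have hc1 : 1 < c := hle.trans_le hcr
  have hqne : q.coeff (r - 1) ≠ 0 := by
    rw [hqc]
    have : (r : ℝ) ≠ 0 := by positivity
    positivity
  have hN0 : (0 : ℝ) < q.natDegree := by exact_mod_cast hN1
  -- the two error terms balance at `η = c^{1/m}`
  set η := c ^ (1 / (m : ℝ)) with hη
  have hη0 : 0 < η := by positivity
  have hinv : η⁻¹ = decay m c := by
    rw [decay_of_one_le hc1.le, hη, ← Real.rpow_neg (by linarith), neg_div]
  have hNm' : (q.natDegree : ℝ) + 1 ≤ m := by exact_mod_cast hNm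
  have hres : (η / c) ^ (1 / (q.natDegree : ℝ)) ≤ decay m c := by
    have h2 : η / c = c ^ (1 / (m : ℝ) - 1) := by
      rw [Real.rpow_sub (by linarith), Real.rpow_one]
    rw [decay_of_one_le hc1.le, h2, ← Real.rpow_mul (by linarith)]
    apply Real.rpow_le_rpow_of_exponent_le hc1.le
    rw [mul_one_div, div_le_div_iff₀ hN0 hm0]
    have : (1 / (m : ℝ) - 1) * m = 1 - m := by field_simp
    rw [this]
    linarith
  have hdc : decay m c ≤ decay m |p.coeff r| := decay_antitone m hcr
  have hd0 := decay_nonneg m c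
  refine (norm_integral_exp_le p η hη0).trans ?_
  rw [← hq, ← hK, div_eq_mul_inv, hinv]
  have h4 := integral_residual_le q (r - 1) hqne hN1 η hη0
  have h5 : 36 * Real.pi * q.natDegree * (η / |q.coeff (r - 1)|) ^ (1 / (q.natDegree : ℝ)) ≤
      36 * Real.pi * m * decay m c := by
    gcongr
    · linarith
  have h6 : (2 * (q.natDegree * Real.pi) + K) * decay m c ≤
      (2 * (m * Real.pi) + K) * decay m c := by
    gcongr
    linarith
  calc _ ≤ (2 * (m * Real.pi) + K) * decay m c + 36 * Real.pi * m * decay m c :=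
        add_le_add h6 (h4.trans h5)
    _ ≤ C * decay m c := by rw [hC]; nlinarith
    _ ≤ C * decay m |p.coeff r| := by gcongr

/-! ### Reduction to one variable -/

instance isProbabilityMeasure_stdGaussian (n : ℕ) :
    IsProbabilityMeasure (_root_.stdGaussian n) := by
  unfold _root_.stdGaussian; infer_instance

lemma integral_stdGaussian_succ (n : ℕ) (F : (Fin (n + 1) → ℝ) → ℂ) :
    ∫ x, F x ∂(_root_.stdGaussian (n + 1)) =
      ∫ z : ℝ × (Fin n → ℝ), F (Fin.cons z.1 z.2)
        ∂((gaussianReal 0 1).prod (_root_.stdGaussian n)) := by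
  unfold _root_.stdGaussian
  rw [← ((measurePreserving_piFinSuccAbove (fun _ : Fin (n + 1) => gaussianReal 0 1)
    0).symm).integral_comp']
  simp_rw [MeasurableEquiv.piFinSuccAbove_symm_apply, Fin.insertNthEquiv, Equiv.coe_fn_mk,
    Fin.insertNth_zero]
  rfl

/-- Every monomial of `f` has total degree at most `D` and degree at most `m` in each variable. -/
def DegreeBounded {n : ℕ} (m D : ℕ) (f : MvPolynomial (Fin n) ℝ) : Prop :=
  ∀ k : Fin n →₀ ℕ, MvPolynomial.coeff k f ≠ 0 → (∑ i, k i) ≤ D ∧ ∀ i, k i ≤ m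

lemma sum_finsupp_cons {n : ℕ} (r : ℕ) (k : Fin n →₀ ℕ) :
    ∑ i, (Finsupp.cons r k) i = r + ∑ i, k i := by
  rw [Fin.sum_univ_succ, Finsupp.cons_zero]
  simp only [Finsupp.cons_succ]

/-- The polynomial obtained from `f` by substituting the number `y` for the first variable. -/
noncomputable def specializeFirst {n : ℕ} (y : ℝ) (f : MvPolynomial (Fin (n + 1)) ℝ) :
    MvPolynomial (Fin n) ℝ :=
  (MvPolynomial.finSuccEquiv ℝ n f).eval (MvPolynomial.C y)

lemma eval_specializeFirst {n : ℕ} (y : ℝ) (s : Fin n → ℝ) (f : MvPolynomial (Fin (n + 1)) ℝ) :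
    MvPolynomial.eval s (specializeFirst y f) = MvPolynomial.eval (Fin.cons y s) f := by
  rw [MvPolynomial.eval_eq_eval_mv_eval', specializeFirst, Polynomial.eval_map,
    ← Polynomial.eval₂_at_apply, MvPolynomial.eval_C]

lemma coeff_specializeFirst {n : ℕ} (y : ℝ) (k : Fin n →₀ ℕ) (f : MvPolynomial (Fin (n + 1)) ℝ) :
    MvPolynomial.coeff k (specializeFirst y f) =
      ∑ i ∈ Finset.range ((MvPolynomial.finSuccEquiv ℝ n f).natDegree + 1),
        MvPolynomial.coeff (Finsupp.cons i k) f * y ^ i := by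
  rw [specializeFirst, Polynomial.eval_eq_sum_range, MvPolynomial.coeff_sum]
  refine Finset.sum_congr rfl fun i _ => ?_
  rw [← MvPolynomial.C_pow, mul_comm, MvPolynomial.coeff_C_mul,
    MvPolynomial.finSuccEquiv_coeff_coeff, mul_comm]

lemma DegreeBounded.specializeFirst {n m D : ℕ} {f : MvPolynomial (Fin (n + 1)) ℝ}
    (hf : DegreeBounded m D f) (y : ℝ) : DegreeBounded m D (specializeFirst y f) := by
  intro k hk
  rw [coeff_specializeFirst] at hk
  obtain ⟨i, -, hi⟩ := Finset.exists_ne_zero_of_sum_ne_zero hk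
  obtain ⟨h1, h2⟩ := hf _ (left_ne_zero_of_mul hi)
  rw [sum_finsupp_cons] at h1
  refine ⟨by omega, fun l => ?_⟩
  have := h2 l.succ
  rwa [Finsupp.cons_succ] at this

/-- Top-degree coefficients of monomials free of the first variable survive specialisation. -/
lemma DegreeBounded.coeff_specializeFirst_top {n m D : ℕ} {f : MvPolynomial (Fin (n + 1)) ℝ}
    (hf : DegreeBounded m D f) (y : ℝ) (k : Fin n →₀ ℕ) (hk : ∑ i, k i = D) :
    MvPolynomial.coeff k (_root_.specializeFirst y f) =
      MvPolynomial.coeff (Finsupp.cons 0 k) f := by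
  rw [coeff_specializeFirst, Finset.sum_eq_single 0]
  · simp
  · intro i _ hi
    have : MvPolynomial.coeff (Finsupp.cons i k) f = 0 := by
      by_contra h
      have h1 := (hf _ h).1
      rw [sum_finsupp_cons] at h1
      omega
    rw [this, zero_mul]
  · simp

lemma DegreeBounded.coeff_finSuccEquiv {n m D : ℕ} {f : MvPolynomial (Fin (n + 1)) ℝ}
    (hf : DegreeBounded m D f) (r : ℕ) :
    DegreeBounded m (D - r) ((MvPolynomial.finSuccEquiv ℝ n f).coeff r) := by
  intro k hk
  rw [MvPolynomial.finSuccEquiv_coeff_coeff] at hk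
  obtain ⟨h1, h2⟩ := hf _ hk
  rw [sum_finsupp_cons] at h1
  refine ⟨by omega, fun l => ?_⟩
  have := h2 l.succ
  rwa [Finsupp.cons_succ] at this

lemma DegreeBounded.natDegree_map_le {n m D : ℕ} {f : MvPolynomial (Fin (n + 1)) ℝ}
    (hf : DegreeBounded m D f) (s : Fin n → ℝ) :
    (Polynomial.map (MvPolynomial.eval s) (MvPolynomial.finSuccEquiv ℝ n f)).natDegree ≤
      min m D := by
  refine Polynomial.natDegree_map_le.trans ?_
  rw [Polynomial.natDegree_le_iff_coeff_eq_zero]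
  intro N hN
  ext k
  rw [MvPolynomial.finSuccEquiv_coeff_coeff, MvPolynomial.coeff_zero]
  by_contra h
  obtain ⟨h1, h2⟩ := hf _ h
  have h3 := h2 0
  rw [sum_finsupp_cons] at h1
  rw [Finsupp.cons_zero] at h3
  have : N ≤ min m D := le_min h3 (by omega)
  omega

/-- Reduction to one variable. Let `j` be a top-degree exponent of `f` (that is, `|j| = D ≥ 1`).
Variables absent from `j` are frozen, which leaves the `j`-coefficient unchanged; the first
variable present in `j`, with exponent `r ≥ 1`, is integrated out by the one-variable bound `h1`,
which brings in the coefficient of its `r`-th power, a polynomial of degree at most `D - r` having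
the same distinguished top-degree coefficient. -/
lemma norm_integral_le_of_one_variable {m D : ℕ} (hD : 1 ≤ D) (A M B : ℝ)
    (Φ : ℝ → ℂ) (hΦc : Continuous Φ) (hΦ1 : ∀ v, ‖Φ v‖ ≤ 1)
    (H : ℝ → ℝ) (hHc : Continuous H) (hHB : ∀ v, |H v| ≤ B)
    (h1 : ∀ (p : Polynomial ℝ) (r : ℕ), p.natDegree ≤ m → p.natDegree ≤ D → 1 ≤ r →
      ‖∫ x, Φ (p.eval x) ∂(gaussianReal 0 1)‖ ≤ H |p.coeff r|)
    (h2 : ∀ (r n : ℕ) (g : MvPolynomial (Fin n) ℝ) (k : Fin n →₀ ℕ), 1 ≤ r → r ≤ D →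
      DegreeBounded m (D - r) g → ∑ i, k i = D - r → |MvPolynomial.coeff k g| = A →
      ∫ x, H |MvPolynomial.eval x g| ∂(_root_.stdGaussian n) ≤ M) :
    ∀ (n : ℕ) (f : MvPolynomial (Fin n) ℝ) (j : Fin n →₀ ℕ),
      DegreeBounded m D f → ∑ i, j i = D → |MvPolynomial.coeff j f| = A →
      ‖∫ x, Φ (MvPolynomial.eval x f) ∂(_root_.stdGaussian n)‖ ≤ M := by
  intro n
  induction n with
  | zero =>
    intro f j _ hj _
    simp at hj
    omega
  | succ n ih =>
    intro f j hf hj hA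
    have hcons : Finsupp.cons (j 0) j.tail = j := Finsupp.cons_tail j
    have hjs : j 0 + ∑ i, j.tail i = D := by rw [← sum_finsupp_cons, hcons, hj]
    have hFc : Continuous fun z : ℝ × (Fin n → ℝ) =>
        Φ (MvPolynomial.eval (Fin.cons z.1 z.2 : Fin (n + 1) → ℝ) f) := by
      refine hΦc.comp ((MvPolynomial.continuous_eval f).comp ?_)
      refine continuous_pi fun i => ?_
      refine Fin.cases ?_ (fun i => ?_) i
      · simpa using continuous_fst
      · simp only [Fin.cons_succ]
        exact (continuous_apply i).comp continuous_snd
    have hFi : Integrable (fun z : ℝ × (Fin n → ℝ) =>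
        Φ (MvPolynomial.eval (Fin.cons z.1 z.2 : Fin (n + 1) → ℝ) f))
        ((gaussianReal 0 1).prod (_root_.stdGaussian n)) :=
      Integrable.of_bound hFc.aestronglyMeasurable 1 (ae_of_all _ fun z => hΦ1 _)
    rw [integral_stdGaussian_succ]
    by_cases hr : j 0 = 0
    · rw [integral_prod _ hFi]
      have hle : ∀ y : ℝ, ‖∫ s, Φ (MvPolynomial.eval (Fin.cons y s : Fin (n + 1) → ℝ) f)
          ∂(_root_.stdGaussian n)‖ ≤ M := by
        intro y
        simp_rw [← eval_specializeFirst]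
        refine ih _ j.tail (hf.specializeFirst y) (by omega) ?_
        rw [hf.coeff_specializeFirst_top y _ (by omega), ← hr, hcons, hA]
      simpa using norm_integral_le_of_norm_le_const (μ := gaussianReal 0 1) (ae_of_all _ hle)
    · rw [integral_prod_symm _ hFi]
      set g := (MvPolynomial.finSuccEquiv ℝ n f).coeff (j 0) with hg
      have hHi : Integrable (fun s => H |MvPolynomial.eval s g|) (_root_.stdGaussian n) := by
        refine Integrable.of_bound ?_ B (ae_of_all _ fun z => hHB _)
        exact (hHc.comp (MvPolynomial.continuous_eval g).abs).aestronglyMeasurable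
      refine (norm_integral_le_of_norm_le hHi (ae_of_all _ fun s => ?_)).trans
        (h2 (j 0) n g j.tail (by omega) (by omega) (hf.coeff_finSuccEquiv _) (by omega) ?_)
      · simp_rw [MvPolynomial.eval_eq_eval_mv_eval']
        have := hf.natDegree_map_le s
        have h3 := h1 _ (j 0) (this.trans (min_le_left _ _)) (this.trans (min_le_right _ _))
          (by omega)
        rwa [Polynomial.coeff_map] at h3
      · rw [hg, MvPolynomial.finSuccEquiv_coeff_coeff, hcons, hA]

lemma eval_of_degreeBounded_zero {n m : ℕ} {g : MvPolynomial (Fin n) ℝ}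
    (hg : DegreeBounded m 0 g) (x : Fin n → ℝ) :
    MvPolynomial.eval x g = MvPolynomial.coeff 0 g := by
  have : g = MvPolynomial.C (MvPolynomial.coeff 0 g) := by
    ext k
    rw [MvPolynomial.coeff_C]
    split_ifs with h
    · rw [h]
    · by_contra h0
      have h1 := (hg k h0).1
      apply h
      ext i
      have := Finset.single_le_sum (f := fun i => k i) (fun i _ => Nat.zero_le _)
        (Finset.mem_univ i)
      simp at this ⊢
      omega
  conv_lhs => rw [this]
  rw [MvPolynomial.eval_C]

/-- Mean decay of a Gaussian polynomial of degree `E ≤ D`, in terms of the modulus `A` of one of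
its top-degree coefficients. Logarithms appear only once the degree reaches `m`. -/
lemma exists_integral_decay_le (m : ℕ) (hm : 1 ≤ m) (D : ℕ) :
    ∃ C : ℝ, 0 < C ∧ ∀ (E : ℕ), E ≤ D → ∀ (A : ℝ), 1 ≤ A →
      ∀ (n : ℕ) (g : MvPolynomial (Fin n) ℝ) (j : Fin n →₀ ℕ), DegreeBounded m E g →
        ∑ i, j i = E → |MvPolynomial.coeff j g| = A →
        ∫ x, decay m |MvPolynomial.eval x g| ∂(_root_.stdGaussian n) ≤
          C * A ^ (-(1 : ℝ) / m) * (1 + Real.log A) ^ (E + 1 - m) := by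
  have hm1 : (1 : ℝ) ≤ m := by exact_mod_cast hm
  induction D with
  | zero =>
    refine ⟨1, one_pos, fun E hE A hA n g j hg hj hc => ?_⟩
    obtain rfl : E = 0 := by omega
    have hj0 : j = 0 := by
      ext i
      have := Finset.single_le_sum (f := fun i => j i) (fun i _ => Nat.zero_le _)
        (Finset.mem_univ i)
      simp at this ⊢
      omega
    subst hj0
    simp_rw [eval_of_degreeBounded_zero hg, hc]
    rw [decay_of_one_le hA, (by omega : 0 + 1 - m = 0)]
    simp
  | succ D ih =>
    obtain ⟨C, hC, ih⟩ := ih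
    have hmm : (1 : ℝ) ≤ m * m := by nlinarith
    refine ⟨18 * m * m * (C + 1), by positivity, fun E hE A hA n g j hg hj hc => ?_⟩
    have hlog : 0 ≤ Real.log A := Real.log_nonneg hA
    set L := 1 + Real.log A with hL
    have hL1 : 1 ≤ L := by linarith
    set a := A ^ (-(1 : ℝ) / m) with ha
    have ha0 : 0 < a := by positivity
    by_cases hED : E ≤ D
    · refine (ih E hED A hA n g j hg hj hc).trans ?_
      gcongr
      nlinarith
    obtain rfl : E = D + 1 := by omega
    have hdi : ∀ (n : ℕ) (g : MvPolynomial (Fin n) ℝ),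
        Integrable (fun x => decay m |MvPolynomial.eval x g|) (_root_.stdGaussian n) := by
      intro n g
      refine Integrable.of_bound ?_ 1 (ae_of_all _ fun z => ?_)
      · exact ((continuous_decay m).comp
          (MvPolynomial.continuous_eval g).abs).aestronglyMeasurable
      · rw [Real.norm_of_nonneg (decay_nonneg _ _)]; exact decay_le_one _ _
    set Φ : ℝ → ℂ := fun v => ((decay m |v| : ℝ) : ℂ) with hΦ
    have hΦc : Continuous Φ :=
      Complex.continuous_ofReal.comp ((continuous_decay m).comp continuous_abs)
    have hΦ1 : ∀ v, ‖Φ v‖ ≤ 1 := by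
      intro v
      rw [hΦ, Complex.norm_real, Real.norm_of_nonneg (decay_nonneg _ _)]
      exact decay_le_one _ _
    have hnorm : ∀ (α : Type) [MeasurableSpace α] (μ : Measure α) (u : α → ℝ),
        ‖∫ x, Φ (u x) ∂μ‖ = ∫ x, decay m |u x| ∂μ := by
      intro α _ μ u
      simp only [hΦ]
      rw [integral_complex_ofReal, Complex.norm_real,
        Real.norm_of_nonneg (integral_nonneg fun x => decay_nonneg _ _)]
    rw [← hnorm]
    by_cases hDm : D + 1 < m
    · refine norm_integral_le_of_one_variable (by omega) A _ (18 * m * m) Φ hΦc hΦ1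
        (fun v => 18 * m * m * decay m v) ((continuous_decay m).const_mul _) ?_ ?_ ?_ n g j hg hj hc
      · intro v
        rw [abs_of_nonneg (by have := decay_nonneg m v; positivity)]
        exact mul_le_of_le_one_right (by positivity) (decay_le_one _ _)
      · intro p r _ hp hr
        rw [hnorm]
        exact integral_decay_nolog m (D + 1) hDm p r hr hp
      · intro r n g k hr hrD hg hk hc
        rw [integral_const_mul]
        have h3 := ih (D + 1 - r) (by omega) A hA n g k hg hk hc
        rw [(by omega : D + 1 - r + 1 - m = 0), pow_zero, mul_one] at h3
        rw [(by omega : D + 1 + 1 - m = 0), pow_zero, mul_one]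
        calc _ ≤ 18 * m * m * (C * a) := by gcongr
          _ ≤ 18 * m * m * ((C + 1) * a) := by gcongr; linarith
          _ = _ := by ring
    · refine norm_integral_le_of_one_variable (by omega) A _ (18 * m * L * (1 + a)) Φ hΦc hΦ1
        (fun v => 18 * m * L * (decay m v + a))
        (((continuous_decay m).add continuous_const).const_mul _) ?_ ?_ ?_ n g j hg hj hc
      · intro v
        rw [abs_of_nonneg (by have := decay_nonneg m v; positivity)]
        have := decay_le_one m v
        gcongr
      · intro p r hp _ hr
        rw [hnorm]
        exact integral_decay_log m hm p r hr hp A hA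
      · intro r n g k hr hrD hg hk hc
        have hic : Integrable (fun _ : Fin n → ℝ => a) (_root_.stdGaussian n) :=
          integrable_const _
        rw [integral_const_mul, integral_add (hdi n g) hic]
        have h3 := ih (D + 1 - r) (by omega) A hA n g k hg hk hc
        have h4 : L ^ (D + 1 - r + 1 - m) ≤ L ^ (D + 1 - m) :=
          pow_le_pow_right₀ hL1 (by omega)
        have h5 : 1 ≤ L ^ (D + 1 - m) := one_le_pow₀ hL1
        rw [(by omega : D + 1 + 1 - m = (D + 1 - m) + 1), pow_succ]
        set P := L ^ (D + 1 - m) with hP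
        have h6 : ∫ _ : Fin n → ℝ, a ∂(_root_.stdGaussian n) = a := by simp
        rw [h6]
        have h7 : C * a * L ^ (D + 1 - r + 1 - m) ≤ C * a * P := by gcongr
        have h8 : a ≤ a * P := le_mul_of_one_le_right ha0.le h5
        calc _ ≤ 18 * m * L * (C * a * P + a * P) := by
              gcongr
              exact h3.trans h7
          _ = 18 * m * 1 * ((C + 1) * a * P * L) := by ring
          _ ≤ 18 * m * m * ((C + 1) * a * P * L) := by gcongr
          _ = _ := by ring

/-! ### The characteristic function -/

/-- Bound on the characteristic function at `t = 1` in terms of the modulus `A ≥ 1` of one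
top-degree coefficient. -/
lemma exists_charFun_bound (m d : ℕ) (hm : 1 ≤ m) :
    ∃ C : ℝ, 0 < C ∧ ∀ (D : ℕ), 1 ≤ D → D ≤ d → ∀ (A : ℝ), 1 ≤ A →
      ∀ (n : ℕ) (f : MvPolynomial (Fin n) ℝ) (j : Fin n →₀ ℕ), DegreeBounded m D f →
        ∑ i, j i = D → |MvPolynomial.coeff j f| = A →
        ‖∫ x, Complex.exp (Complex.I * ((MvPolynomial.eval x f : ℝ) : ℂ))
            ∂(_root_.stdGaussian n)‖ ≤
          C * A ^ (-(1 : ℝ) / m) * (1 + Real.log A) ^ (d - m) := by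
  obtain ⟨C₁, hC₁, h1⟩ := exists_norm_integral_exp_le m hm
  obtain ⟨C₂, hC₂, h2⟩ := exists_integral_decay_le m hm d
  refine ⟨C₁ * C₂, by positivity, fun D hD hDd A hA n f j hf hj hc => ?_⟩
  have hlog : 0 ≤ Real.log A := Real.log_nonneg hA
  refine norm_integral_le_of_one_variable hD A _ C₁
    (fun v => Complex.exp (Complex.I * ((v : ℝ) : ℂ))) (by fun_prop)
    (fun v => (norm_exp_I_mul_ofReal v).le) (fun v => C₁ * decay m v)
    ((continuous_decay m).const_mul _) ?_ ?_ ?_ n f j hf hj hc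
  · intro v
    rw [abs_of_nonneg (by have := decay_nonneg m v; positivity)]
    exact mul_le_of_le_one_right hC₁.le (decay_le_one _ _)
  · intro p r hp _ hr
    exact h1 p r hp hr
  · intro r n g k hr hrD hg hk hc
    rw [integral_const_mul]
    have h3 := h2 (D - r) (by omega) A hA n g k hg hk hc
    have h4 : (1 + Real.log A) ^ (D - r + 1 - m) ≤ (1 + Real.log A) ^ (d - m) :=
      pow_le_pow_right₀ (by linarith) (by omega)
    calc _ ≤ C₁ * (C₂ * A ^ (-(1 : ℝ) / m) * (1 + Real.log A) ^ (D - r + 1 - m)) := by gcongr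
      _ ≤ C₁ * (C₂ * A ^ (-(1 : ℝ) / m) * (1 + Real.log A) ^ (d - m)) := by gcongr
      _ = _ := by ring

lemma finsupp_sum_eq {n : ℕ} (j : Fin n →₀ ℕ) : (j.sum fun _ e => e) = ∑ i, j i :=
  Finsupp.sum_fintype _ _ fun _ => rfl

/-- The supremum defining `topCoeff f` is attained, and it is positive. -/
lemma exists_topCoeff_eq {n : ℕ} (f : MvPolynomial (Fin n) ℝ) (hf : f ≠ 0) :
    0 < topCoeff f ∧ ∃ j : Fin n →₀ ℕ, (j.sum fun _ e => e) = f.totalDegree ∧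
      topCoeff f = |MvPolynomial.coeff j f| := by
  set S : Set ℝ := {c : ℝ | ∃ j : Fin n →₀ ℕ, (j.sum fun _ e => e) = f.totalDegree ∧
    c = |MvPolynomial.coeff j f|} with hS
  have hfin : S.Finite := by
    refine (((f.support.finite_toSet).image fun j => |MvPolynomial.coeff j f|).union
      (Set.finite_singleton 0)).subset ?_
    rintro c ⟨j, -, rfl⟩
    by_cases h : MvPolynomial.coeff j f = 0
    · right; simp [h]
    · left; exact ⟨j, by simpa [MvPolynomial.mem_support_iff] using h, rfl⟩
  obtain ⟨k, hk, hkd⟩ := Finset.exists_mem_eq_sup f.support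
    (MvPolynomial.support_nonempty.mpr hf) fun s => s.sum fun _ e => e
  have hkS : |MvPolynomial.coeff k f| ∈ S := ⟨k, hkd.symm, rfl⟩
  have hmem : sSup S ∈ S := Set.Nonempty.csSup_mem ⟨_, hkS⟩ hfin
  refine ⟨lt_of_lt_of_le ?_ (le_csSup hfin.bddAbove hkS), hmem⟩
  exact abs_pos.mpr (MvPolynomial.mem_support_iff.mp hk)

lemma degreeBounded_of_degreeOf {n m : ℕ} {f : MvPolynomial (Fin n) ℝ}
    (hf : ∀ i : Fin n, f.degreeOf i ≤ m) : DegreeBounded m f.totalDegree f := by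
  intro k hk
  have hk' : k ∈ f.support := MvPolynomial.mem_support_iff.mpr hk
  refine ⟨?_, fun i => ?_⟩
  · rw [← finsupp_sum_eq]
    exact MvPolynomial.le_totalDegree hk'
  · refine le_trans ?_ (hf i)
    rw [MvPolynomial.degreeOf_eq_sup]
    exact Finset.le_sup (f := fun s : Fin n →₀ ℕ => s i) hk'

/-- Corollary (bound on the characteristic function): for fixed `m ≤ d` there is `C(m,d) > 0`
such that for every non-constant polynomial `f` on `ℝⁿ` of total degree at most `d` in which
every variable enters to a power at most `m`, and every `t ≠ 0`,
`|𝔼 exp(i t f(X))| ≤ C(m,d) |a[f] t|^{-1/m} (|ln |a[f] t||^{d-m} + 1)`,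
where `X` is a standard Gaussian vector in `ℝⁿ`. -/
theorem characteristic_function_bound (m d : ℕ) (hm : 1 ≤ m) (hmd : m ≤ d) :
    ∃ C : ℝ, 0 < C ∧
      ∀ (n : ℕ) (f : MvPolynomial (Fin n) ℝ),
        f.totalDegree ≠ 0 →
        (∀ i : Fin n, f.degreeOf i ≤ m) →
        f.totalDegree ≤ d →
        ∀ t : ℝ, t ≠ 0 →
          ‖∫ x, Complex.exp (Complex.I * (t * MvPolynomial.eval x f)) ∂(stdGaussian n)‖ ≤
            C * |topCoeff f * t| ^ (-(1 : ℝ) / m) *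
              ((|Real.log (|topCoeff f * t|)|) ^ (d - m) + 1) := by
  obtain ⟨C, hC, hbound⟩ := exists_charFun_bound m d hm
  refine ⟨C * 2 ^ (d - m) + 1, by positivity, fun n f hf0 hfm hfd t ht => ?_⟩
  have hfne : f ≠ 0 := by rintro rfl; simp at hf0
  obtain ⟨htop, j, hj, hjc⟩ := exists_topCoeff_eq f hfne
  set A := |topCoeff f * t| with hA
  have hA0 : 0 < A := abs_pos.mpr (mul_ne_zero htop.ne' ht)
  have hev : ∀ x : Fin n → ℝ, Complex.exp (Complex.I * (t * MvPolynomial.eval x f)) =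
      Complex.exp (Complex.I *
        ((MvPolynomial.eval x (MvPolynomial.C t * f) : ℝ) : ℂ)) := by
    intro x
    rw [MvPolynomial.eval_mul, MvPolynomial.eval_C, Complex.ofReal_mul]
  simp_rw [hev]
  have ha0 : 0 < A ^ (-(1 : ℝ) / m) := by positivity
  have hl0 : 0 ≤ |Real.log A| ^ (d - m) := by positivity
  have h2p : (0 : ℝ) < C * 2 ^ (d - m) := by positivity
  rcases le_total A 1 with hA1 | hA1
  · -- the right-hand side is at least `1`
    refine (norm_integral_le_one _ _ fun x => (norm_exp_I_mul_ofReal _).le).trans ?_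
    have h1 : 1 ≤ A ^ (-(1 : ℝ) / m) :=
      Real.one_le_rpow_of_pos_of_le_one_of_nonpos hA0 hA1 (neg_one_div_nonpos m)
    have h2 : 1 ≤ (C * 2 ^ (d - m) + 1) * A ^ (-(1 : ℝ) / m) := by nlinarith
    nlinarith
  · have hdb : DegreeBounded m f.totalDegree (MvPolynomial.C t * f) := by
      intro k hk
      rw [MvPolynomial.coeff_C_mul] at hk
      exact degreeBounded_of_degreeOf hfm k (right_ne_zero_of_mul hk)
    have hcoeff : |MvPolynomial.coeff j (MvPolynomial.C t * f)| = A := by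
      rw [MvPolynomial.coeff_C_mul, abs_mul, ← hjc, hA, abs_mul, abs_of_pos htop, mul_comm]
    refine (hbound f.totalDegree (by omega) hfd A hA1 n _ j hdb
      (by rw [← finsupp_sum_eq, hj]) hcoeff).trans ?_
    have hlog : 0 ≤ Real.log A := Real.log_nonneg hA1
    rw [abs_of_nonneg hlog] at hl0 ⊢
    -- `1 + log A ≤ 2 max(1, log A)`
    have hpow : (1 + Real.log A) ^ (d - m) ≤ 2 ^ (d - m) * (Real.log A ^ (d - m) + 1) := by
      rcases le_total (Real.log A) 1 with h | h
      · calc (1 + Real.log A) ^ (d - m) ≤ 2 ^ (d - m) := by gcongr; linarith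
          _ ≤ _ := le_mul_of_one_le_right (by positivity) (by linarith)
      · calc (1 + Real.log A) ^ (d - m) ≤ (2 * Real.log A) ^ (d - m) := by gcongr; linarith
          _ = 2 ^ (d - m) * Real.log A ^ (d - m) := mul_pow _ _ _
          _ ≤ _ := by gcongr; linarith
    calc _ ≤ C * A ^ (-(1 : ℝ) / m) * (2 ^ (d - m) * (Real.log A ^ (d - m) + 1)) := by gcongr
      _ = C * 2 ^ (d - m) * A ^ (-(1 : ℝ) / m) * (Real.log A ^ (d - m) + 1) := by ring
      _ ≤ _ := by gcongr; linarith
end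

section
/- Let m, d ∈ ℕ with d ≥ m and let a > 0. Let f and g be two non-constant polynomials on ℝⁿ in which every variable appears to a power at most m, with total degrees d[f] ≤ d and d[g] ≤ d and top-coefficient sizes a[f] ≥ a and a[g] ≥ a, and let X be a standard Gaussian random vector in ℝⁿ. Then there exists a constant C(m,d,a) > 0 depending only on m, d, a such that d_TV(f(X), g(X)) ≤ C(m,d,a) [d_KR(f(X), g(X))]^{1/(m+1)} [ |ln d_KR(f(X), g(X))|^{(d−m)m/(m+1)} + 1 ]. -/
/-!
Write `X` for a standard Gaussian vector. The theorem is a consequence of a fractional smoothness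
estimate for the law of `f(X)` (`GaussPoly.exists_uniform_regularity`): if `|H'| ≤ 1` and
`|H| ≤ ε ≤ 1`, then `|𝔼 H'(f(X))| ≤ K ε^{1/m} (1 + |log ε|)^{d-m}` with `K = K(m, d, a)`.

*One variable* (`exists_oneDim_bound`). Let `p` have degree at most `m` and a non-constant
coefficient of size `M`. Split `1 = p'²/(p'² + t²) + t²/(p'² + t²)` inside `𝔼 H'(p)`. The first part
equals `𝔼 (H ∘ p)' p'/(p'² + t²)` and Gaussian integration by parts bounds it by a multiple of
`ε / t`: the derivative of the weight is controlled by `𝔼 |p''|/(p'² + t²) ≲ 1 / t`, because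
`p''/(p'² + t²)` is, up to the factor `t`, the imaginary part of the logarithmic derivative of
`p' - i t`, a sum of Cauchy kernels over complex roots. The second part is a smoothed small ball
probability for `p'`; comparing `p'` with the product of `|x - z| / (1 + |z|)` over its roots bounds
it by a multiple of `(t / M)^{1/(m-1)}`. Choosing `t` gives `𝔼 H'(p) ≲ (ε / M)^{1/m}`.

*Several variables* (`regularity_step`, `exists_regularityBound`). Take a top monomial with large
coefficient and integrate first over one of its variables `x i`, entering it to the power `k`. The
one-variable bound gives `min(1, (ε / |A|)^{1/m})`, where `A` is the coefficient of `x i ^ k`, a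
polynomial of degree `e - k` satisfying the same assumptions. By induction `A` obeys a small ball
estimate, and a summation over the dyadic scales of `|A|` concludes; a logarithm is lost at most
once per step, and only when the exponents for `A` and `f` agree, which gives the power `e - m`.

*Distances.* A test function `φ` for `dTV` is replaced by its Steklov average `ψ` over intervals of
length `ε` (`exists_steklov`). Here `φ - ψ = H'` with `|H| ≤ ε`, so the regularity estimate applies,
while `ε ψ / 2` is admissible for `dKR`. This yields
`dTV ≤ 4 K ε^{1/m} (1 + |log ε|)^{d-m} + 2 dKR / ε`, and `optimize_scale` chooses `ε`.
-/

open MeasureTheory ProbabilityTheory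

/-- Total variation distance between (the distributions of) two real random variables. -/
noncomputable def dTV (μ ν : Measure ℝ) : ℝ :=
  sSup {r : ℝ | ∃ φ : ℝ → ℝ, ContDiff ℝ (⊤ : ℕ∞) φ ∧ HasCompactSupport φ ∧
    (∀ x, |φ x| ≤ 1) ∧ r = (∫ s, φ s ∂μ) - ∫ s, φ s ∂ν}

/-- Kantorovich–Rubinstein (Fortet–Mourier) distance between (the distributions of) two real
random variables. -/
noncomputable def dKR (μ ν : Measure ℝ) : ℝ :=
  sSup {r : ℝ | ∃ φ : ℝ → ℝ, ContDiff ℝ (⊤ : ℕ∞) φ ∧ HasCompactSupport φ ∧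
    (∀ x, |φ x| ≤ 1) ∧ (∀ x, |deriv φ x| ≤ 1) ∧ r = (∫ s, φ s ∂μ) - ∫ s, φ s ∂ν}

namespace GaussPoly

/-! ### Integrals of Cauchy kernels against the Gaussian -/

lemma integrable_gaussian_iff {F : ℝ → ℝ} :
    Integrable F (gaussianReal 0 1) ↔ Integrable (fun x => gaussianPDFReal 0 1 x * F x) := by
  rw [gaussianReal_of_var_ne_zero 0 one_ne_zero,
    integrable_withDensity_iff_integrable_smul' (measurable_gaussianPDF 0 1)
      (ae_of_all _ fun x => gaussianPDF_lt_top)]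
  simp [toReal_gaussianPDF]

lemma integral_gaussian_eq (F : ℝ → ℝ) :
    ∫ x, F x ∂(gaussianReal 0 1) = ∫ x, gaussianPDFReal 0 1 x * F x := by
  rw [integral_gaussianReal_eq_integral_smul one_ne_zero]; simp

/-- Domination of a Gaussian integral by a Lebesgue integral. -/
lemma gaussian_integral_le {F G : ℝ → ℝ} (hF : Measurable F) (hF0 : ∀ x, 0 ≤ F x)
    (hG : Integrable G) (h : ∀ x, gaussianPDFReal 0 1 x * F x ≤ G x) :
    Integrable F (gaussianReal 0 1) ∧ ∫ x, F x ∂(gaussianReal 0 1) ≤ ∫ x, G x := by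
  have hi : Integrable (fun x => gaussianPDFReal 0 1 x * F x) := by
    refine hG.mono' ?_ (ae_of_all _ fun x => ?_)
    · exact ((measurable_gaussianPDFReal 0 1).mul hF).aestronglyMeasurable
    · rw [Real.norm_of_nonneg (mul_nonneg (gaussianPDFReal_nonneg _ _ _) (hF0 x))]
      exact h x
  refine ⟨integrable_gaussian_iff.2 hi, ?_⟩
  rw [integral_gaussian_eq]
  exact integral_mono hi hG h

lemma integrable_cauchy_kernel (u : ℝ) {b : ℝ} (hb : 0 ≤ b) :
    Integrable (fun x : ℝ => b / ((x - u) ^ 2 + b ^ 2)) ∧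
      ∫ x : ℝ, b / ((x - u) ^ 2 + b ^ 2) ≤ Real.pi := by
  lift b to NNReal using hb
  have he : (fun x : ℝ => (b : ℝ) / ((x - u) ^ 2 + (b : ℝ) ^ 2)) =
      fun x => Real.pi * cauchyPDFReal u b x := by
    funext x
    rw [cauchyPDFReal_def]
    have := Real.pi_pos.ne'
    field_simp
  rw [he]
  refine ⟨(integrable_cauchyPDFReal u).const_mul _, ?_⟩
  rw [integral_const_mul]
  by_cases hb : b = 0
  · subst hb
    simp [Real.pi_pos.le]
  · rw [integral_cauchyPDFReal_eq_one u hb, mul_one]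

lemma gaussianPDF_mul_le (x : ℝ) : gaussianPDFReal 0 1 x * (1 + |x|) ≤ 2 := by
  rw [gaussianPDFReal_def]
  simp only [sub_zero, NNReal.coe_one, mul_one]
  have h1 : (√(2 * Real.pi))⁻¹ ≤ 1 := by
    apply inv_le_one_of_one_le₀
    rw [Real.one_le_sqrt]
    nlinarith [Real.pi_gt_three]
  have h2 : Real.exp (-x ^ 2 / 2) * (1 + |x|) ≤ 2 := by
    have h3 := Real.add_one_le_exp (x ^ 2 / 2)
    rw [neg_div, Real.exp_neg, inv_mul_le_iff₀ (Real.exp_pos _)]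
    have : |x| ≤ (1 + x ^ 2) := by
      have := sq_abs x
      nlinarith [sq_nonneg (|x| - 1)]
    linarith
  have h4 : 0 ≤ Real.exp (-x ^ 2 / 2) * (1 + |x|) := by positivity
  calc _ = (√(2 * Real.pi))⁻¹ * (Real.exp (-x ^ 2 / 2) * (1 + |x|)) := by ring
    _ ≤ 1 * (Real.exp (-x ^ 2 / 2) * (1 + |x|)) := by gcongr
    _ ≤ 2 := by linarith

lemma gaussianPDF_le (x : ℝ) : gaussianPDFReal 0 1 x ≤ 2 := by
  have h1 := gaussianPDF_mul_le x
  have h2 := gaussianPDFReal_nonneg 0 1 x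
  nlinarith [abs_nonneg x, mul_nonneg h2 (abs_nonneg x)]

/-- A finite sum of functions, each integrable with integral at most `c`. -/
lemma integral_multiset_sum_le {μ : Measure ℝ} (k : ℂ → ℝ → ℝ) (c : ℝ)
    (hk : ∀ z, Integrable (k z) μ ∧ ∫ x, k z x ∂μ ≤ c) (s : Multiset ℂ) :
    Integrable (fun x => (s.map fun z => k z x).sum) μ ∧
      ∫ x, (s.map fun z => k z x).sum ∂μ ≤ s.card * c := by
  induction s using Multiset.induction_on with
  | empty => simp
  | cons z s ih =>
    simp only [Multiset.map_cons, Multiset.sum_cons, Multiset.card_cons]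
    refine ⟨(hk z).1.add ih.1, ?_⟩
    rw [integral_add (hk z).1 ih.1]
    push_cast
    linarith [(hk z).2, ih.2]

/-! ### Polynomials of one variable under the Gaussian -/

/-- Imaginary part of the logarithmic derivative of `q - i t`, written through its complex
roots. -/
lemma abs_deriv_div_le (q : Polynomial ℝ) {t : ℝ} (ht : 0 < t) : ∃ s : Multiset ℂ,
    s.card ≤ q.natDegree ∧ ∀ x : ℝ,
      |q.derivative.eval x| / ((q.eval x) ^ 2 + t ^ 2) ≤
        t⁻¹ * (s.map fun z : ℂ => |z.im| / ((x - z.re) ^ 2 + |z.im| ^ 2)).sum := by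
  set Q : Polynomial ℂ := q.map Complex.ofRealHom - Polynomial.C (Complex.I * t) with hQ
  refine ⟨Q.roots, ?_, fun x => ?_⟩
  · refine (Polynomial.card_roots' Q).trans ?_
    rw [hQ, Polynomial.natDegree_sub_C]
    exact Polynomial.natDegree_map_le
  · have hev : Q.eval (x : ℂ) = ((q.eval x : ℝ) : ℂ) - Complex.I * t := by
      have h := Polynomial.eval_map_apply (p := q) Complex.ofRealHom x
      simp only [Complex.ofRealHom_eq_coe] at h
      simp [hQ, h]
    have hdev : Q.derivative.eval (x : ℂ) = ((q.derivative.eval x : ℝ) : ℂ) := by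
      have h := Polynomial.eval_map_apply (p := q.derivative) Complex.ofRealHom x
      simp only [Complex.ofRealHom_eq_coe] at h
      simp [hQ, Polynomial.derivative_map, h]
    have hne : Q.eval (x : ℂ) ≠ 0 := by
      intro h0
      have := congrArg Complex.im (hev.symm.trans h0)
      simp at this
      exact ht.ne' this
    have key := (IsAlgClosed.splits Q).eval_derivative_div_eval_of_ne_zero hne
    rw [hev, hdev] at key
    have him := congrArg Complex.im key
    have hL : (((q.derivative.eval x : ℝ) : ℂ) / (((q.eval x : ℝ) : ℂ) - Complex.I * t)).im =
        q.derivative.eval x * t / ((q.eval x) ^ 2 + t ^ 2) := by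
      rw [Complex.div_im]
      simp [Complex.normSq_apply]
      ring_nf
    rw [hL] at him
    have hR : ∀ s : Multiset ℂ, |((s.map fun z : ℂ => 1 / ((x : ℂ) - z)).sum).im| ≤
        (s.map fun z : ℂ => |z.im| / ((x - z.re) ^ 2 + |z.im| ^ 2)).sum := by
      intro s
      induction s using Multiset.induction_on with
      | empty => simp
      | cons z s ih =>
        simp only [Multiset.map_cons, Multiset.sum_cons, Complex.add_im]
        refine (abs_add_le _ _).trans (add_le_add (le_of_eq ?_) ih)
        rw [one_div, Complex.inv_im, abs_div, Complex.normSq_apply]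
        simp only [Complex.sub_im, Complex.sub_re, Complex.ofReal_im, Complex.ofReal_re]
        rw [sq_abs, abs_of_nonneg (a := (x - z.re) * (x - z.re) + (0 - z.im) * (0 - z.im))
          (by nlinarith [mul_self_nonneg (x - z.re), mul_self_nonneg (0 - z.im)])]
        congr 1
        · simp
        · ring
    have h1 := hR Q.roots
    rw [← him, abs_div, abs_mul, abs_of_pos ht,
      abs_of_pos (a := (q.eval x) ^ 2 + t ^ 2) (by positivity)] at h1
    calc _ = t⁻¹ * (|q.derivative.eval x| * t / ((q.eval x) ^ 2 + t ^ 2)) := by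
          field_simp
      _ ≤ _ := by gcongr

lemma integral_abs_deriv_div_le (q : Polynomial ℝ) {t : ℝ} (ht : 0 < t) :
    Integrable (fun x => |q.derivative.eval x| / ((q.eval x) ^ 2 + t ^ 2)) (gaussianReal 0 1) ∧
    ∫ x, |q.derivative.eval x| / ((q.eval x) ^ 2 + t ^ 2) ∂(gaussianReal 0 1) ≤
      2 * Real.pi * q.natDegree / t := by
  obtain ⟨s, hs, hb⟩ := abs_deriv_div_le q ht
  have hk := integral_multiset_sum_le (μ := volume)
    (fun z x => |z.im| / ((x - z.re) ^ 2 + |z.im| ^ 2)) Real.pi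
    (fun z => integrable_cauchy_kernel z.re (abs_nonneg z.im)) s
  have hcont : Continuous (fun x => |q.derivative.eval x| / ((q.eval x) ^ 2 + t ^ 2)) := by
    refine Continuous.div (by fun_prop) (by fun_prop) fun x => by positivity
  have h := gaussian_integral_le (G := fun x => 2 * (t⁻¹ *
      (s.map fun z : ℂ => |z.im| / ((x - z.re) ^ 2 + |z.im| ^ 2)).sum))
    hcont.measurable (fun x => by positivity) ((hk.1.const_mul _).const_mul _) (fun x => by
      have := gaussianPDF_le x
      have h0 : 0 ≤ |q.derivative.eval x| / ((q.eval x) ^ 2 + t ^ 2) := by positivity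
      exact mul_le_mul this (hb x) h0 (by norm_num))
  refine ⟨h.1, h.2.trans ?_⟩
  rw [integral_const_mul, integral_const_mul]
  have h3 : (s.card : ℝ) * Real.pi ≤ q.natDegree * Real.pi := by
    have : (s.card : ℝ) ≤ q.natDegree := by exact_mod_cast hs
    have := Real.pi_pos
    gcongr
  calc _ ≤ 2 * (t⁻¹ * (q.natDegree * Real.pi)) := by
        gcongr
        exact hk.2.trans h3
    _ = _ := by field_simp

/-- Gaussian mass of a neighbourhood of a point `z` at the scale `s (1 + |z|)`, in smoothed
form: the Gaussian density near `z` is at most of order `1 / (1 + |z|)`. -/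
lemma gaussian_kernel_le (z : ℂ) {s : ℝ} (hs : 0 < s) (hs1 : s ≤ 1) :
    Integrable (fun x : ℝ => s ^ 2 / ((‖(x : ℂ) - z‖ / (1 + ‖z‖)) ^ 2 + s ^ 2))
      (gaussianReal 0 1) ∧
    ∫ x : ℝ, s ^ 2 / ((‖(x : ℂ) - z‖ / (1 + ‖z‖)) ^ 2 + s ^ 2) ∂(gaussianReal 0 1) ≤ 28 * s := by
  set R := 1 + ‖z‖ with hR
  have hR1 : 1 ≤ R := by have := norm_nonneg z; linarith
  have hR0 : 0 < R := by linarith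
  have hk := integrable_cauchy_kernel z.re (b := s * R) (by positivity)
  have hcont : Continuous (fun x : ℝ => s ^ 2 / ((‖(x : ℂ) - z‖ / R) ^ 2 + s ^ 2)) := by
    refine Continuous.div (by fun_prop) (by fun_prop) fun x => by positivity
  have hw : Integrable (gaussianPDFReal 0 1) := integrable_gaussianPDFReal 0 1
  have h := gaussian_integral_le
    (G := fun x => 16 * s * gaussianPDFReal 0 1 x +
      3 * s * (s * R / ((x - z.re) ^ 2 + (s * R) ^ 2)))
    hcont.measurable (fun x => by positivity)
    ((hw.const_mul _).add (hk.1.const_mul _)) (fun x => by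
      have hw0 := gaussianPDFReal_nonneg 0 1 x
      have hker : 0 ≤ 3 * s * (s * R / ((x - z.re) ^ 2 + (s * R) ^ 2)) := by positivity
      have hn0 := norm_nonneg ((x : ℂ) - z)
      by_cases hfar : R / 4 ≤ ‖(x : ℂ) - z‖
      · have h1 : (1 / 4 : ℝ) ≤ ‖(x : ℂ) - z‖ / R := by
          rw [le_div_iff₀ hR0]; linarith
        have h2 : s ^ 2 / ((‖(x : ℂ) - z‖ / R) ^ 2 + s ^ 2) ≤ 16 * s := by
          rw [div_le_iff₀ (by positivity)]
          have : (1 / 16 : ℝ) ≤ (‖(x : ℂ) - z‖ / R) ^ 2 := by nlinarith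
          nlinarith [sq_nonneg s, mul_pos hs (pow_pos hs 2)]
        nlinarith
      · push Not at hfar
        have hzx : ‖z‖ ≤ |x| + ‖(x : ℂ) - z‖ := by
          have := norm_sub_norm_le (x : ℂ) ((x : ℂ) - z)
          have h5 := norm_sub_le (x : ℂ) ((x : ℂ) - z)
          simp only [sub_sub_cancel, Complex.norm_real, Real.norm_eq_abs] at h5
          exact h5
        have hwR : gaussianPDFReal 0 1 x * R ≤ 3 := by
          have := gaussianPDF_mul_le x
          have : R ≤ 4 / 3 * (1 + |x|) := by linarith
          nlinarith
        have hre : (x - z.re) ^ 2 ≤ ‖(x : ℂ) - z‖ ^ 2 := by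
          have := Complex.abs_re_le_norm ((x : ℂ) - z)
          simp only [Complex.sub_re, Complex.ofReal_re] at this
          rw [← sq_abs]
          gcongr
        have h6 : s ^ 2 / ((‖(x : ℂ) - z‖ / R) ^ 2 + s ^ 2) ≤
            s ^ 2 * R ^ 2 / ((x - z.re) ^ 2 + (s * R) ^ 2) := by
          rw [div_pow, ← mul_div_mul_right (s ^ 2) _ (pow_ne_zero 2 hR0.ne')]
          have : (‖(x : ℂ) - z‖ ^ 2 / R ^ 2 + s ^ 2) * R ^ 2 =
            ‖(x : ℂ) - z‖ ^ 2 + (s * R) ^ 2 := by field_simp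
          rw [this]
          gcongr
        have h7 : gaussianPDFReal 0 1 x * (s ^ 2 * R ^ 2 / ((x - z.re) ^ 2 + (s * R) ^ 2)) =
            (gaussianPDFReal 0 1 x * R) * s * (s * R / ((x - z.re) ^ 2 + (s * R) ^ 2)) := by
          ring
        calc _ ≤ gaussianPDFReal 0 1 x * (s ^ 2 * R ^ 2 / ((x - z.re) ^ 2 + (s * R) ^ 2)) := by
              gcongr
          _ ≤ 3 * s * (s * R / ((x - z.re) ^ 2 + (s * R) ^ 2)) := by
              rw [h7]; gcongr
          _ ≤ _ := by
            have : 0 ≤ 16 * s * gaussianPDFReal 0 1 x := by positivity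
            linarith)
  refine ⟨h.1, h.2.trans ?_⟩
  rw [integral_add (hw.const_mul _) (hk.1.const_mul _), integral_const_mul, integral_const_mul,
    integral_gaussianPDFReal_eq_one 0 one_ne_zero]
  have := hk.2
  have hpi := Real.pi_lt_four
  nlinarith

lemma norm_coeff_prod_le (s : Multiset ℂ) (k : ℕ) :
    ‖((s.map fun z => Polynomial.X - Polynomial.C z).prod).coeff k‖ ≤
      (s.map fun z => 1 + ‖z‖).prod := by
  induction s using Multiset.induction_on generalizing k with
  | empty =>
    simp only [Multiset.map_zero, Multiset.prod_zero, Polynomial.coeff_one]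
    split_ifs <;> simp
  | cons z s ih =>
    simp only [Multiset.map_cons, Multiset.prod_cons, sub_mul, Polynomial.coeff_sub,
      Polynomial.coeff_C_mul]
    have hB : 0 ≤ (s.map fun z => 1 + ‖z‖).prod := (norm_nonneg _).trans (ih 0)
    have h1 : ‖(Polynomial.X * (s.map fun z => Polynomial.X - Polynomial.C z).prod).coeff k‖ ≤
        (s.map fun z => 1 + ‖z‖).prod := by
      cases k with
      | zero => simpa using hB
      | succ k => rw [Polynomial.coeff_X_mul]; exact ih k
    refine (norm_sub_le _ _).trans ?_
    rw [norm_mul, add_mul, one_mul]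
    gcongr
    exact ih k

/-- If some coefficient of `q` is at least `M`, then `|q| ≥ M ∏ |x - z| / (1 + |z|)`, the product
being over the complex roots. -/
lemma exists_prod_le_abs_eval (q : Polynomial ℝ) {M : ℝ} (k : ℕ) (hM : M ≤ |q.coeff k|) :
    ∃ s : Multiset ℂ, s.card ≤ q.natDegree ∧ ∀ x : ℝ,
      M * (s.map fun z : ℂ => ‖(x : ℂ) - z‖ / (1 + ‖z‖)).prod ≤ |q.eval x| := by
  set Q : Polynomial ℂ := q.map Complex.ofRealHom with hQ
  refine ⟨Q.roots, (Polynomial.card_roots' Q).trans Polynomial.natDegree_map_le, fun x => ?_⟩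
  have hev : Q.eval (x : ℂ) = ((q.eval x : ℝ) : ℂ) := by
    have h := Polynomial.eval_map_apply (p := q) Complex.ofRealHom x
    simpa using h
  have hsp := IsAlgClosed.splits Q
  have hc : |q.coeff k| ≤ ‖Q.leadingCoeff‖ * (Q.roots.map fun z => 1 + ‖z‖).prod := by
    have h1 : ‖Q.coeff k‖ = |q.coeff k| := by simp [hQ]
    rw [← h1]
    conv_lhs => rw [hsp.eq_prod_roots]
    rw [Polynomial.coeff_C_mul, norm_mul]
    gcongr
    exact norm_coeff_prod_le _ k
  have hval : |q.eval x| = ‖Q.leadingCoeff‖ * (Q.roots.map fun z : ℂ => ‖(x : ℂ) - z‖).prod := by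
    have h2 : ‖Q.eval (x : ℂ)‖ = |q.eval x| := by rw [hev]; simp
    rw [← h2, hsp.eval_eq_prod_roots, norm_mul]
    congr 1
    have h3 := map_multiset_prod (normHom : ℂ →*₀ ℝ) (Q.roots.map fun z => (x : ℂ) - z)
    simpa [Multiset.map_map, Function.comp_def] using h3
  rw [hval, Multiset.prod_map_div]
  have hpos : ∀ s : Multiset ℂ, 0 < (s.map fun z => 1 + ‖z‖).prod := fun s => by
    refine Multiset.prod_pos fun a ha => ?_
    obtain ⟨z, -, rfl⟩ := Multiset.mem_map.1 ha
    positivity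
  have hnn : 0 ≤ (Q.roots.map fun z : ℂ => ‖(x : ℂ) - z‖).prod := by
    refine Multiset.prod_nonneg fun a ha => ?_
    obtain ⟨z, -, rfl⟩ := Multiset.mem_map.1 ha
    positivity
  rw [mul_div_assoc', div_le_iff₀ (hpos _)]
  calc _ ≤ (‖Q.leadingCoeff‖ * (Q.roots.map fun z => 1 + ‖z‖).prod) *
        (Q.roots.map fun z : ℂ => ‖(x : ℂ) - z‖).prod := by
        gcongr; exact hM.trans hc
    _ = _ := by ring

/-- A product of numbers `b ≥ 0` is small compared with the power of `s` only if one of the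
factors is small. -/
lemma ratio_le_sum (S : Multiset ℂ) (b : ℂ → ℝ) (hb : ∀ z, 0 ≤ b z) {s : ℝ} (hs : 0 < s)
    (hs1 : s ≤ 1) {D : ℕ} (hD : 1 ≤ D) (hS : S.card ≤ D) :
    (s ^ D) ^ 2 / ((S.map b).prod ^ 2 + (s ^ D) ^ 2) ≤
      s + 2 * (S.map fun z => s ^ 2 / ((b z) ^ 2 + s ^ 2)).sum := by
  have hnn : ∀ T : Multiset ℂ, 0 ≤ (T.map fun z => s ^ 2 / ((b z) ^ 2 + s ^ 2)).sum := fun T => by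
    refine Multiset.sum_nonneg fun a ha => ?_
    obtain ⟨z, -, rfl⟩ := Multiset.mem_map.1 ha
    positivity
  have hsingle : ∀ z ∈ S, s ^ 2 / ((b z) ^ 2 + s ^ 2) ≤
      (S.map fun z => s ^ 2 / ((b z) ^ 2 + s ^ 2)).sum := by
    intro z hz
    obtain ⟨T, rfl⟩ := Multiset.exists_cons_of_mem hz
    rw [Multiset.map_cons, Multiset.sum_cons]
    linarith [hnn T]
  have hsD : 0 < s ^ D := pow_pos hs D
  by_cases hsmall : ∃ z ∈ S, b z ≤ s
  · obtain ⟨z, hz, hzs⟩ := hsmall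
    have h1 : (1 / 2 : ℝ) ≤ s ^ 2 / ((b z) ^ 2 + s ^ 2) := by
      rw [le_div_iff₀ (by positivity)]
      nlinarith [hb z]
    have h2 : (s ^ D) ^ 2 / ((S.map b).prod ^ 2 + (s ^ D) ^ 2) ≤ 1 := by
      rw [div_le_one (by positivity)]
      nlinarith [sq_nonneg (S.map b).prod]
    linarith [hsingle z hz]
  · push Not at hsmall
    rcases S.empty_or_exists_mem with rfl | ⟨z, hz⟩
    · simp only [Multiset.map_zero, Multiset.prod_zero, Multiset.sum_zero, mul_zero, add_zero]
      have h1 : s ^ D ≤ s := by simpa using pow_le_pow_of_le_one hs.le hs1 hD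
      rw [div_le_iff₀ (by positivity)]
      nlinarith [mul_pos hs (pow_pos hsD 2)]
    · obtain ⟨T, rfl⟩ := Multiset.exists_cons_of_mem hz
      have hT : s ^ T.card ≤ (T.map b).prod := by
        have : ∀ U : Multiset ℂ, (∀ w ∈ U, s < b w) → s ^ U.card ≤ (U.map b).prod := by
          intro U
          induction U using Multiset.induction_on with
          | empty => simp
          | cons w U ih =>
            intro hU
            rw [Multiset.card_cons, Multiset.map_cons, Multiset.prod_cons, pow_succ']
            have h1 := hU w (Multiset.mem_cons_self w U)
            have h2 := ih fun v hv => hU v (Multiset.mem_cons_of_mem hv)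
            have h3 := hb w
            gcongr
        exact this T fun w hw => hsmall w (Multiset.mem_cons_of_mem hw)
      have hz' := hsmall z (Multiset.mem_cons_self z T)
      have hcard : T.card + 1 ≤ D := by simpa using hS
      have h1 : s ^ D ≤ s * (T.map b).prod := by
        calc s ^ D ≤ s ^ (T.card + 1) := pow_le_pow_of_le_one hs.le hs1 hcard
          _ = s * s ^ T.card := pow_succ' _ _
          _ ≤ _ := by gcongr
      have hP : 0 < (T.map b).prod := (pow_pos hs _).trans_le hT
      have hbz := hb z
      have hbz' : 0 < b z := hs.trans hz'
      have h2 : (s ^ D) ^ 2 / (((z ::ₘ T).map b).prod ^ 2 + (s ^ D) ^ 2) ≤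
          2 * (s ^ 2 / ((b z) ^ 2 + s ^ 2)) := by
        rw [Multiset.map_cons, Multiset.prod_cons]
        calc _ ≤ (s ^ D) ^ 2 / ((b z * (T.map b).prod) ^ 2) := by
              gcongr
              exact le_add_of_nonneg_right (by positivity)
          _ ≤ (s * (T.map b).prod) ^ 2 / ((b z * (T.map b).prod) ^ 2) := by gcongr
          _ = s ^ 2 / (b z) ^ 2 := by field_simp
          _ ≤ _ := by
            rw [← mul_div_assoc, div_le_div_iff₀ (by positivity) (by positivity)]
            have : s ^ 2 ≤ (b z) ^ 2 := by gcongr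
            nlinarith [sq_nonneg s]
      linarith [hsingle z (Multiset.mem_cons_self z T)]

/-- Smoothed one-dimensional small ball estimate: a polynomial with a coefficient of size `M` and
degree at most `D` is below `M s ^ D` with probability of order at most `s`. -/
lemma integral_small_le (q : Polynomial ℝ) {M s : ℝ} (hM0 : 0 < M) (hs : 0 < s) (hs1 : s ≤ 1)
    {D : ℕ} (hD : 1 ≤ D) (hq : q.natDegree ≤ D) (k : ℕ) (hM : M ≤ |q.coeff k|) :
    ∫ x, (M * s ^ D) ^ 2 / ((q.eval x) ^ 2 + (M * s ^ D) ^ 2) ∂(gaussianReal 0 1) ≤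
      (1 + 56 * D) * s := by
  obtain ⟨S, hS, hb⟩ := exists_prod_le_abs_eval q k hM
  have hk := integral_multiset_sum_le (μ := gaussianReal 0 1)
    (fun z x => s ^ 2 / ((‖(x : ℂ) - z‖ / (1 + ‖z‖)) ^ 2 + s ^ 2)) (28 * s)
    (fun z => gaussian_kernel_le z hs hs1) S
  have hsD : 0 < s ^ D := pow_pos hs D
  have hpt : ∀ x : ℝ, (M * s ^ D) ^ 2 / ((q.eval x) ^ 2 + (M * s ^ D) ^ 2) ≤
      s + 2 * (S.map fun z => s ^ 2 / ((‖(x : ℂ) - z‖ / (1 + ‖z‖)) ^ 2 + s ^ 2)).sum := by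
    intro x
    refine le_trans ?_ (ratio_le_sum S (fun z => ‖(x : ℂ) - z‖ / (1 + ‖z‖))
      (fun z => by positivity) hs hs1 hD (hS.trans hq))
    set P := (S.map fun z : ℂ => ‖(x : ℂ) - z‖ / (1 + ‖z‖)).prod with hP
    have hP0 : 0 ≤ P := by
      refine Multiset.prod_nonneg fun a ha => ?_
      obtain ⟨z, -, rfl⟩ := Multiset.mem_map.1 ha
      positivity
    have h1 : (M * P) ^ 2 ≤ (q.eval x) ^ 2 := by
      rw [← sq_abs (q.eval x)]
      have := hb x
      gcongr
    calc _ ≤ (M * s ^ D) ^ 2 / ((M * P) ^ 2 + (M * s ^ D) ^ 2) := by gcongr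
      _ = _ := by
        rw [mul_pow, mul_pow, ← mul_add, mul_div_mul_left _ _ (by positivity)]
  have hi : Integrable (fun x : ℝ => s + 2 *
      (S.map fun z => s ^ 2 / ((‖(x : ℂ) - z‖ / (1 + ‖z‖)) ^ 2 + s ^ 2)).sum)
      (gaussianReal 0 1) := (integrable_const _).add (hk.1.const_mul _)
  refine (integral_mono_of_nonneg (ae_of_all _ fun x => by positivity) hi
    (ae_of_all _ hpt)).trans ?_
  rw [integral_add (integrable_const _) (hk.1.const_mul _), integral_const_mul]
  have hc : (S.card : ℝ) ≤ D := by exact_mod_cast hS.trans hq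
  have : (S.card : ℝ) * (28 * s) ≤ D * (28 * s) := by gcongr
  simp only [integral_const, probReal_univ, one_smul]
  nlinarith [hk.2]

end GaussPoly

namespace GaussPoly

lemma integrable_id_gaussian : Integrable (fun x : ℝ => x) (gaussianReal 0 1) := by
  have := (memLp_id_gaussianReal (μ := 0) (v := 1) 1)
  exact memLp_one_iff_integrable.1 this

lemma hasDerivAt_gaussianPDF (x : ℝ) :
    HasDerivAt (gaussianPDFReal 0 1) (-x * gaussianPDFReal 0 1 x) x := by
  rw [gaussianPDFReal_def]
  simp only [sub_zero, NNReal.coe_one, mul_one]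
  have h1 : HasDerivAt (fun x : ℝ => -x ^ 2 / 2) (-x) x := by
    have := ((hasDerivAt_pow 2 x).neg).div_const 2
    refine this.congr_deriv ?_
    simp
    ring
  have h2 := (h1.exp).const_mul (√(2 * Real.pi))⁻¹
  refine h2.congr_deriv ?_
  ring

/-- Gaussian integration by parts. -/
lemma gaussian_by_parts {u u' : ℝ → ℝ} {B : ℝ} (hu : ∀ x, HasDerivAt u (u' x) x)
    (hB : ∀ x, |u x| ≤ B) (hi : Integrable u' (gaussianReal 0 1)) :
    ∫ x, u' x ∂(gaussianReal 0 1) = ∫ x, x * u x ∂(gaussianReal 0 1) := by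
  have hcont : Continuous u := continuous_iff_continuousAt.2 fun x => (hu x).continuousAt
  have hui : Integrable u (gaussianReal 0 1) :=
    (integrable_const B).mono' hcont.aestronglyMeasurable (ae_of_all _ hB)
  have hxu : Integrable (fun x => x * u x) (gaussianReal 0 1) :=
    integrable_id_gaussian.mul_bdd (c := B) hcont.aestronglyMeasurable (ae_of_all _ hB)
  have h0 := integral_eq_zero_of_hasDerivAt_of_integrable
    (f := fun x => gaussianPDFReal 0 1 x * u x)
    (f' := fun x => gaussianPDFReal 0 1 x * (u' x - x * u x))
    (fun x => by
      have := (hasDerivAt_gaussianPDF x).mul (hu x)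
      refine this.congr_deriv ?_
      ring)
    (integrable_gaussian_iff.1 (hi.sub hxu)) (integrable_gaussian_iff.1 hui)
  rw [← integral_gaussian_eq, integral_sub hi hxu] at h0
  linarith

/-- The part of `𝔼 h(p)` where `|p'| ≳ t` is controlled by integrating by parts against the vector
field `p' / (p' ^ 2 + t ^ 2)`. -/
lemma integral_large_le (p : Polynomial ℝ) {t ε : ℝ} (ht : 0 < t) {H h : ℝ → ℝ}
    (hH : ∀ x, HasDerivAt H (h x) x) (hc : Continuous h) (hh : ∀ x, |h x| ≤ 1)
    (hε : ∀ x, |H x| ≤ ε) :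
    |∫ x, h (p.eval x) * ((p.derivative.eval x) ^ 2 / ((p.derivative.eval x) ^ 2 + t ^ 2))
      ∂(gaussianReal 0 1)| ≤
      ε / t * ((∫ x, |x| ∂(gaussianReal 0 1)) + 2 * Real.pi * p.derivative.natDegree) := by
  set q := p.derivative with hq
  have hε0 : 0 ≤ ε := (abs_nonneg _).trans (hε 0)
  have hpos : ∀ x : ℝ, 0 < (q.eval x) ^ 2 + t ^ 2 := fun x => by positivity
  have hHc : Continuous H := continuous_iff_continuousAt.2 fun x => (hH x).continuousAt
  obtain ⟨hi, hI⟩ := integral_abs_deriv_div_le q ht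
  set u : ℝ → ℝ := fun x => H (p.eval x) * (q.eval x / ((q.eval x) ^ 2 + t ^ 2)) with hu
  set v : ℝ → ℝ := fun x => H (p.eval x) *
    (q.derivative.eval x * (t ^ 2 - (q.eval x) ^ 2) / ((q.eval x) ^ 2 + t ^ 2) ^ 2) with hv
  set g : ℝ → ℝ := fun x => h (p.eval x) * ((q.eval x) ^ 2 / ((q.eval x) ^ 2 + t ^ 2)) with hg
  have hder : ∀ x, HasDerivAt u (g x + v x) x := by
    intro x
    have h1 : HasDerivAt (fun y => H (p.eval y)) (h (p.eval x) * q.eval x) x :=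
      (hH (p.eval x)).comp x (p.hasDerivAt x)
    have h2 := q.hasDerivAt x
    have h3 := h2.div ((h2.pow 2).add_const (t ^ 2)) (hpos x).ne'
    have h4 := h1.mul h3
    refine h4.congr_deriv ?_
    simp only [hg, hv]
    have := (hpos x).ne'
    simp only [Pi.pow_apply, Pi.div_apply]
    field_simp
    ring
  have hratio : ∀ x, |q.eval x / ((q.eval x) ^ 2 + t ^ 2)| ≤ 1 / t := by
    intro x
    rw [abs_div, abs_of_pos (hpos x), div_le_div_iff₀ (hpos x) ht, one_mul]
    nlinarith [sq_nonneg (|q.eval x| - t), sq_abs (q.eval x), abs_nonneg (q.eval x)]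
  have hub : ∀ x, |u x| ≤ ε / t := by
    intro x
    rw [hu, abs_mul]
    calc _ ≤ ε * (1 / t) := mul_le_mul (hε _) (hratio x) (abs_nonneg _) hε0
      _ = _ := by ring
  have hvb : ∀ x, |v x| ≤ ε * (|q.derivative.eval x| / ((q.eval x) ^ 2 + t ^ 2)) := by
    intro x
    rw [hv, abs_mul]
    refine mul_le_mul (hε _) ?_ (abs_nonneg _) hε0
    rw [abs_div, abs_mul, abs_of_pos (pow_pos (hpos x) 2),
      div_le_div_iff₀ (pow_pos (hpos x) 2) (hpos x)]
    have h5 : |t ^ 2 - (q.eval x) ^ 2| ≤ (q.eval x) ^ 2 + t ^ 2 := by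
      rw [abs_le]; constructor <;> nlinarith [sq_nonneg t, sq_nonneg (q.eval x)]
    have h6 := abs_nonneg (q.derivative.eval x)
    calc _ ≤ |q.derivative.eval x| * ((q.eval x) ^ 2 + t ^ 2) * ((q.eval x) ^ 2 + t ^ 2) := by
          have := hpos x
          gcongr
      _ = _ := by ring
  have hgb : ∀ x, |g x| ≤ 1 := by
    intro x
    rw [hg, abs_mul, abs_of_nonneg (a := (q.eval x) ^ 2 / ((q.eval x) ^ 2 + t ^ 2))
      (by positivity)]
    refine mul_le_one₀ (hh _) (by positivity) ?_
    rw [div_le_one (hpos x)]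
    nlinarith [sq_nonneg t]
  have hgc : Continuous g := by
    refine (hc.comp p.continuous).mul (Continuous.div (by fun_prop) (by fun_prop)
      fun x => (hpos x).ne')
  have hvc : Continuous v := by
    refine (hHc.comp p.continuous).mul (Continuous.div (by fun_prop) (by fun_prop)
      fun x => (pow_pos (hpos x) 2).ne')
  have hgi : Integrable g (gaussianReal 0 1) :=
    (integrable_const (1 : ℝ)).mono' hgc.aestronglyMeasurable (ae_of_all _ hgb)
  have hvi : Integrable v (gaussianReal 0 1) :=
    (hi.const_mul ε).mono' hvc.aestronglyMeasurable (ae_of_all _ hvb)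
  have hbp := gaussian_by_parts hder hub (hgi.add hvi)
  rw [integral_add hgi hvi] at hbp
  have hA : |∫ x, x * u x ∂(gaussianReal 0 1)| ≤ ε / t * ∫ x, |x| ∂(gaussianReal 0 1) := by
    rw [← integral_const_mul]
    refine norm_integral_le_of_norm_le (f := fun x => x * u x) (integrable_id_gaussian.abs.const_mul _)
      (ae_of_all _ fun x => ?_)
    rw [Real.norm_eq_abs, abs_mul, mul_comm]
    gcongr
    exact hub x
  have hV : |∫ x, v x ∂(gaussianReal 0 1)| ≤ ε * (2 * Real.pi * q.natDegree / t) := by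
    refine (norm_integral_le_of_norm_le (f := v) (hi.const_mul ε) (ae_of_all _ hvb)).trans ?_
    rw [integral_const_mul]
    gcongr
  have hfin : ∫ x, g x ∂(gaussianReal 0 1) =
      (∫ x, x * u x ∂(gaussianReal 0 1)) - ∫ x, v x ∂(gaussianReal 0 1) := by linarith
  rw [hfin]
  refine (abs_sub _ _).trans ?_
  calc _ ≤ ε / t * (∫ x, |x| ∂(gaussianReal 0 1)) + ε * (2 * Real.pi * q.natDegree / t) :=
        add_le_add hA hV
    _ = _ := by ring

/-- Regularity of the law of a one-variable polynomial of degree at most `m`, one of whose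
non-constant coefficients has size at least `M`. -/
lemma exists_oneDim_bound (m : ℕ) (hm : 1 ≤ m) : ∃ C : ℝ, 1 ≤ C ∧
    ∀ (p : Polynomial ℝ) (k : ℕ) (M s ε : ℝ) (H h : ℝ → ℝ), p.natDegree ≤ m → 1 ≤ k → 0 < M →
      M ≤ |p.coeff k| → (∀ x, HasDerivAt H (h x) x) → Continuous h → (∀ x, |h x| ≤ 1) →
      (∀ x, |H x| ≤ ε) → 0 < s → ε ≤ M * s ^ m →
      |∫ x, h (p.eval x) ∂(gaussianReal 0 1)| ≤ C * s := by
  set c₁ := ∫ x, |x| ∂(gaussianReal 0 1) with hc₁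
  have hc₁0 : 0 ≤ c₁ := integral_nonneg fun x => abs_nonneg x
  have hpi := Real.pi_pos
  refine ⟨(1 + 56 * m) + (c₁ + 2 * Real.pi * m), ?_, ?_⟩
  · have : 0 ≤ 2 * Real.pi * m := by positivity
    have h2 : (0 : ℝ) ≤ m := by positivity
    linarith
  intro p k M s ε H h hp hk hM hMc hH hc hh hε hs hεs
  have hε0 : 0 ≤ ε := (abs_nonneg _).trans (hε 0)
  have hhi : Integrable (fun x => h (p.eval x)) (gaussianReal 0 1) :=
    (integrable_const (1 : ℝ)).mono' (hc.comp p.continuous).aestronglyMeasurable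
      (ae_of_all _ fun x => hh _)
  have htriv : |∫ x, h (p.eval x) ∂(gaussianReal 0 1)| ≤ 1 := by
    have := norm_integral_le_of_norm_le (μ := gaussianReal 0 1)
      (f := fun x => h (p.eval x)) (integrable_const (1 : ℝ))
      (ae_of_all _ fun x => hh (p.eval x))
    simpa using this
  have hmR : (1 : ℝ) ≤ m := by exact_mod_cast hm
  have hpim : 0 ≤ 2 * Real.pi * m := by positivity
  rcases le_or_gt s 1 with hs1 | hs1
  swap
  · nlinarith
  set q := p.derivative with hq
  have hqd : q.natDegree ≤ m - 1 :=
    (Polynomial.natDegree_derivative_le p).trans (Nat.sub_le_sub_right hp 1)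
  have hqc : M ≤ |q.coeff (k - 1)| := by
    rw [hq, Polynomial.coeff_derivative, Nat.sub_add_cancel hk, abs_mul]
    have h1 : (1 : ℝ) ≤ |((k - 1 : ℕ) : ℝ) + 1| := by
      rw [abs_of_nonneg (by positivity)]
      have : (0 : ℝ) ≤ ((k - 1 : ℕ) : ℝ) := by positivity
      linarith
    nlinarith [abs_nonneg (p.coeff k)]
  rcases Nat.lt_or_ge m 2 with hm2 | hm2
  · -- `p` is affine: the weight is constant and can be divided out
    have hm1 : m = 1 := by omega
    subst hm1
    have hq0 : q.natDegree = 0 := by omega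
    obtain ⟨c, hqC⟩ : ∃ c, q = Polynomial.C c := ⟨_, Polynomial.eq_C_of_natDegree_eq_zero hq0⟩
    have hcM : M ≤ |c| := by
      rw [hqC, Polynomial.coeff_C] at hqc
      split_ifs at hqc with h0
      · exact hqc
      · simp at hqc; linarith
    have hcpos : 0 < |c| := hM.trans_le hcM
    have hb := integral_large_le p (t := |c|) hcpos hH hc hh hε
    rw [← hq, hqC] at hb
    simp only [Polynomial.eval_C, Polynomial.natDegree_C, sq_abs] at hb
    have hc2 : c ^ 2 / (c ^ 2 + c ^ 2) = 1 / 2 := by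
      have : c ≠ 0 := abs_pos.1 hcpos
      field_simp; norm_num
    rw [hc2, integral_mul_const, abs_mul, abs_of_pos (a := (1 / 2 : ℝ)) (by norm_num)] at hb
    have h5 : ε / |c| ≤ s := by
      rw [div_le_iff₀ hcpos]
      calc ε ≤ M * s ^ 1 := hεs
        _ ≤ |c| * s := by rw [pow_one]; gcongr
        _ = _ := by ring
    have h6 : ε / |c| * (c₁ + 2 * Real.pi * ((0 : ℕ) : ℝ)) ≤ s * c₁ := by
      simp only [Nat.cast_zero, mul_zero, add_zero]
      gcongr
    -- the weight `1 / 2` costs a factor `2`, which is absorbed since `c₁ ≤ 56`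
    have hc1le : c₁ ≤ 56 := by
      have hsq : Integrable (fun x : ℝ => x ^ 2) (gaussianReal 0 1) := by
        have := (memLp_id_gaussianReal (μ := 0) (v := 1) 2).integrable_sq
        simpa using this
      have hv : ∫ x, x ^ 2 ∂(gaussianReal 0 1) = 1 := by
        have h1 := variance_fun_id_gaussianReal (μ := 0) (v := 1)
        rw [variance_eq_integral (by fun_prop)] at h1
        simpa [integral_id_gaussianReal] using h1
      have : c₁ ≤ ∫ x, (1 + x ^ 2) ∂(gaussianReal 0 1) := by
        refine integral_mono integrable_id_gaussian.abs ((integrable_const 1).add hsq) fun x => ?_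
        have := sq_abs x
        change |x| ≤ 1 + x ^ 2
        nlinarith [sq_nonneg (|x| - 1), abs_nonneg x]
      rw [integral_add (integrable_const _) hsq, hv] at this
      simp at this
      linarith
    push_cast
    nlinarith
  · set t := M * s ^ (m - 1) with ht
    have htpos : 0 < t := by positivity
    have hsmall := integral_small_le q hM hs hs1 (D := m - 1) (by omega) hqd (k - 1) hqc
    have hlarge := integral_large_le p htpos hH hc hh hε
    rw [← hq] at hlarge
    rw [← ht] at hsmall
    have hpos : ∀ x : ℝ, 0 < (q.eval x) ^ 2 + t ^ 2 := fun x => by positivity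
    set g₁ : ℝ → ℝ := fun x => h (p.eval x) * ((q.eval x) ^ 2 / ((q.eval x) ^ 2 + t ^ 2)) with hg₁
    set g₂ : ℝ → ℝ := fun x => h (p.eval x) * (t ^ 2 / ((q.eval x) ^ 2 + t ^ 2)) with hg₂
    have hsum : ∀ x, h (p.eval x) = g₁ x + g₂ x := by
      intro x
      have := (hpos x).ne'
      simp only [hg₁, hg₂]
      field_simp
    have hr1 : ∀ x, t ^ 2 / ((q.eval x) ^ 2 + t ^ 2) ≤ 1 := fun x => by
      rw [div_le_one (hpos x)]; nlinarith [sq_nonneg (q.eval x)]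
    have hc1 : Continuous fun x => t ^ 2 / ((q.eval x) ^ 2 + t ^ 2) :=
      Continuous.div (by fun_prop) (by fun_prop) fun x => (hpos x).ne'
    have hri : Integrable (fun x => t ^ 2 / ((q.eval x) ^ 2 + t ^ 2)) (gaussianReal 0 1) :=
      (integrable_const (1 : ℝ)).mono' hc1.aestronglyMeasurable (ae_of_all _ fun x => by
        rw [Real.norm_of_nonneg (by positivity)]; exact hr1 x)
    have hg₂b : ∀ x, ‖g₂ x‖ ≤ t ^ 2 / ((q.eval x) ^ 2 + t ^ 2) := by
      intro x
      rw [Real.norm_eq_abs, hg₂, abs_mul,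
        abs_of_nonneg (a := t ^ 2 / ((q.eval x) ^ 2 + t ^ 2)) (by positivity)]
      exact mul_le_of_le_one_left (by positivity) (hh _)
    have hg₂i : Integrable g₂ (gaussianReal 0 1) :=
      hri.mono' ((hc.comp p.continuous).mul hc1).aestronglyMeasurable (ae_of_all _ hg₂b)
    have hg₁i : Integrable g₁ (gaussianReal 0 1) := by
      have : g₁ = fun x => h (p.eval x) - g₂ x := by funext x; linarith [hsum x]
      rw [this]
      exact hhi.sub hg₂i
    have hint : ∫ x, h (p.eval x) ∂(gaussianReal 0 1) =
        (∫ x, g₁ x ∂(gaussianReal 0 1)) + ∫ x, g₂ x ∂(gaussianReal 0 1) := by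
      rw [← integral_add hg₁i hg₂i]
      exact integral_congr_ae (ae_of_all _ hsum)
    have hb2 : |∫ x, g₂ x ∂(gaussianReal 0 1)| ≤ (1 + 56 * (m - 1 : ℕ)) * s :=
      (norm_integral_le_of_norm_le hri (ae_of_all _ hg₂b)).trans hsmall
    have hm1 : ((m - 1 : ℕ) : ℝ) ≤ m := by exact_mod_cast Nat.sub_le m 1
    have hqdR : (q.natDegree : ℝ) ≤ m := by exact_mod_cast hqd.trans (Nat.sub_le m 1)
    have hεt : ε / t ≤ s := by
      rw [div_le_iff₀ htpos, ht]
      calc ε ≤ M * s ^ m := hεs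
        _ = s * (M * s ^ (m - 1)) := by
          rw [mul_left_comm, ← pow_succ', Nat.sub_add_cancel hm]
    have hb1 : |∫ x, g₁ x ∂(gaussianReal 0 1)| ≤ s * (c₁ + 2 * Real.pi * m) :=
      hlarge.trans (by gcongr)
    rw [hint]
    refine (abs_add_le _ _).trans ((add_le_add hb1 hb2).trans ?_)
    have : (1 + 56 * ((m - 1 : ℕ) : ℝ)) * s ≤ (1 + 56 * m) * s := by gcongr
    linarith

end GaussPoly

namespace GaussPoly

/-! ### Freezing all variables but one -/

/-- The coefficient of `x i ^ k` in `f`, as a polynomial in the remaining variables (kept inside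
the same polynomial ring). -/
noncomputable def sliceCoeff {n : ℕ} (f : MvPolynomial (Fin n) ℝ) (i : Fin n) (k : ℕ) :
    MvPolynomial (Fin n) ℝ :=
  ∑ j ∈ f.support.filter (fun j => j i = k), MvPolynomial.monomial (j.erase i) (f.coeff j)

lemma eval_update {n : ℕ} (f : MvPolynomial (Fin n) ℝ) (i : Fin n) {N : ℕ}
    (hN : f.degreeOf i ≤ N) (x : Fin n → ℝ) (y : ℝ) :
    MvPolynomial.eval (Function.update x i y) f =
      ∑ k ∈ Finset.range (N + 1), MvPolynomial.eval x (sliceCoeff f i k) * y ^ k := by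
  have hterm : ∀ j : Fin n →₀ ℕ, ∏ l, (Function.update x i y l) ^ j l =
      (∏ l, x l ^ (j.erase i) l) * y ^ j i := by
    intro j
    rw [← Finset.mul_prod_erase Finset.univ _ (Finset.mem_univ i),
      ← Finset.mul_prod_erase Finset.univ (fun l => x l ^ (j.erase i) l) (Finset.mem_univ i)]
    simp only [Function.update_self, Finsupp.erase_same, pow_zero, one_mul]
    rw [mul_comm]
    congr 1
    refine Finset.prod_congr rfl fun l hl => ?_
    have hli : l ≠ i := Finset.ne_of_mem_erase hl
    rw [Function.update_of_ne hli, Finsupp.erase_ne hli]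
  have hslice : ∀ k, MvPolynomial.eval x (sliceCoeff f i k) * y ^ k =
      ∑ j ∈ f.support.filter (fun j => j i = k),
        f.coeff j * ∏ l, (Function.update x i y l) ^ j l := by
    intro k
    rw [sliceCoeff, map_sum, Finset.sum_mul]
    refine Finset.sum_congr rfl fun j hj => ?_
    rw [hterm, (Finset.mem_filter.1 hj).2, MvPolynomial.eval_monomial,
      Finsupp.prod_fintype _ _ (fun _ => pow_zero _)]
    ring
  rw [MvPolynomial.eval_eq', Finset.sum_congr rfl fun k _ => hslice k]
  rw [Finset.sum_fiberwise_of_maps_to]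
  intro j hj
  rw [Finset.mem_range]
  have := MvPolynomial.monomial_le_degreeOf i hj
  omega

lemma mem_support_sliceCoeff {n : ℕ} {f : MvPolynomial (Fin n) ℝ} {i : Fin n} {k : ℕ}
    {j' : Fin n →₀ ℕ} (h : j' ∈ (sliceCoeff f i k).support) :
    ∃ j ∈ f.support, j i = k ∧ j' = j.erase i := by
  classical
  have h1 := MvPolynomial.support_sum h
  simp only [Finset.mem_biUnion, Finset.mem_filter] at h1
  obtain ⟨j, ⟨hj, hk⟩, hm⟩ := h1
  have := MvPolynomial.support_monomial_subset hm
  exact ⟨j, hj, hk, by simpa using this⟩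

lemma coeff_sliceCoeff {n : ℕ} (f : MvPolynomial (Fin n) ℝ) (i : Fin n) (j : Fin n →₀ ℕ) :
    (sliceCoeff f i (j i)).coeff (j.erase i) = f.coeff j := by
  classical
  rw [sliceCoeff, MvPolynomial.coeff_sum]
  simp only [MvPolynomial.coeff_monomial]
  by_cases hj : j ∈ f.support
  · rw [Finset.sum_eq_single j]
    · simp
    · intro j₂ hj₂ hne
      rw [if_neg]
      intro he
      apply hne
      have hi := (Finset.mem_filter.1 hj₂).2
      ext l
      by_cases hl : l = i
      · rw [hl, hi]
      · have := DFunLike.congr_fun he l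
        rwa [Finsupp.erase_ne hl, Finsupp.erase_ne hl] at this
    · intro hn
      exact absurd (by simpa using hj) hn
  · rw [MvPolynomial.notMem_support_iff.1 hj]
    refine Finset.sum_eq_zero fun j₂ hj₂ => ?_
    rw [if_neg]
    intro he
    have hi := (Finset.mem_filter.1 hj₂).2
    have : j₂ = j := by
      ext l
      by_cases hl : l = i
      · rw [hl, hi]
      · have := DFunLike.congr_fun he l
        rwa [Finsupp.erase_ne hl, Finsupp.erase_ne hl] at this
    exact hj (this ▸ (Finset.mem_filter.1 hj₂).1)

lemma sum_erase_add {n : ℕ} (j : Fin n →₀ ℕ) (i : Fin n) :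
    ((j.erase i).sum fun _ e => e) + j i = j.sum fun _ e => e := by
  rw [add_comm]
  exact Finsupp.add_sum_erase' j i (fun _ e => e) (fun _ => rfl)

lemma totalDegree_sliceCoeff {n : ℕ} {f : MvPolynomial (Fin n) ℝ} {i : Fin n} {k e : ℕ}
    (hf : f.totalDegree ≤ e) : (sliceCoeff f i k).totalDegree ≤ e - k := by
  rw [MvPolynomial.totalDegree]
  refine Finset.sup_le fun j' hj' => ?_
  obtain ⟨j, hj, hk, rfl⟩ := mem_support_sliceCoeff hj'
  have h1 := MvPolynomial.le_totalDegree hj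
  have h2 := sum_erase_add j i
  omega

lemma degreeOf_sliceCoeff {n : ℕ} {f : MvPolynomial (Fin n) ℝ} {i : Fin n} {k m : ℕ}
    (l : Fin n) (hf : f.degreeOf l ≤ m) : (sliceCoeff f i k).degreeOf l ≤ m := by
  rw [MvPolynomial.degreeOf_le_iff]
  intro j' hj'
  obtain ⟨j, hj, hk, rfl⟩ := mem_support_sliceCoeff hj'
  have := MvPolynomial.monomial_le_degreeOf l hj
  by_cases hl : l = i
  · rw [hl, Finsupp.erase_same]; exact Nat.zero_le _
  · rw [Finsupp.erase_ne hl]; omega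

instance {n : ℕ} : IsProbabilityMeasure (_root_.stdGaussian n) := by
  unfold _root_.stdGaussian; infer_instance

/-- Resampling the `i`-th coordinate preserves the standard Gaussian measure. -/
lemma measurePreserving_update {n : ℕ} (i : Fin n) :
    MeasurePreserving (fun z : (Fin n → ℝ) × ℝ => Function.update z.1 i z.2)
      ((_root_.stdGaussian n).prod (gaussianReal 0 1)) (_root_.stdGaussian n) := by
  have hmeas : Measurable (fun z : (Fin n → ℝ) × ℝ => Function.update z.1 i z.2) :=
    measurable_pi_lambda _ fun l => by
      by_cases hl : l = i
      · subst hl; simpa using measurable_snd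
      · simp only [Function.update_of_ne hl]; fun_prop
  refine ⟨hmeas, ?_⟩
  symm
  conv_lhs => rw [_root_.stdGaussian]
  refine Measure.pi_eq fun s hs => ?_
  rw [Measure.map_apply hmeas (MeasurableSet.univ_pi hs)]
  have hpre : (fun z : (Fin n → ℝ) × ℝ => Function.update z.1 i z.2) ⁻¹' (Set.univ.pi s) =
      (Set.univ.pi (Function.update s i Set.univ)) ×ˢ (s i) := by
    ext ⟨x, y⟩
    simp only [Set.mem_preimage, Set.mem_pi, Set.mem_univ, true_implies, Set.mem_prod]
    constructor
    · intro h
      refine ⟨fun l => ?_, by simpa using h i⟩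
      by_cases hl : l = i
      · subst hl; simp
      · have := h l
        rw [Function.update_of_ne hl] at this ⊢
        exact this
    · rintro ⟨h, hy⟩ l
      by_cases hl : l = i
      · subst hl; simpa using hy
      · have := h l
        rw [Function.update_of_ne hl] at this ⊢
        exact this
  rw [hpre, Measure.prod_prod, _root_.stdGaussian, Measure.pi_pi,
    ← Finset.mul_prod_erase Finset.univ _ (Finset.mem_univ i),
    ← Finset.mul_prod_erase Finset.univ (fun l => gaussianReal 0 1 (s l)) (Finset.mem_univ i)]
  simp only [Function.update_self, measure_univ, one_mul]
  rw [mul_comm]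
  congr 1
  refine Finset.prod_congr rfl fun l hl => ?_
  rw [Function.update_of_ne (Finset.ne_of_mem_erase hl)]

lemma integral_update {n : ℕ} (i : Fin n) (F : (Fin n → ℝ) → ℝ) (hF : Continuous F)
    (hb : ∀ x, |F x| ≤ 1) :
    ∫ x, F x ∂(_root_.stdGaussian n) =
      ∫ x, ∫ y, F (Function.update x i y) ∂(gaussianReal 0 1) ∂(_root_.stdGaussian n) := by
  have hmp := measurePreserving_update i
  have h1 : ∫ x, F x ∂(_root_.stdGaussian n) = ∫ z : (Fin n → ℝ) × ℝ,
      F (Function.update z.1 i z.2) ∂((_root_.stdGaussian n).prod (gaussianReal 0 1)) := by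
    conv_lhs => rw [← hmp.map_eq]
    exact integral_map hmp.measurable.aemeasurable hF.aestronglyMeasurable
  rw [h1]
  refine integral_prod (fun z : (Fin n → ℝ) × ℝ => F (Function.update z.1 i z.2)) ?_
  exact (integrable_const (1 : ℝ)).mono'
    (hF.measurable.comp hmp.measurable).aestronglyMeasurable (ae_of_all _ fun z => hb _)

/-! ### Summation over dyadic scales -/

lemma abs_log_two_mul_le {t : ℝ} (ht : 0 < t) : 1 + |Real.log (2 * t)| ≤ 2 * (1 + |Real.log t|) := by
  rw [Real.log_mul two_ne_zero ht.ne']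
  have h1 := abs_add_le (Real.log 2) (Real.log t)
  have h2 : |Real.log 2| ≤ 1 := by
    rw [abs_of_pos (Real.log_pos one_lt_two)]
    linarith [Real.log_two_lt_d9]
  have := abs_nonneg (Real.log t)
  linarith

lemma abs_log_le_of_le {ε t : ℝ} (hε : 0 < ε) (h1 : ε ≤ t) (h2 : t ≤ 1) :
    |Real.log t| ≤ |Real.log ε| := by
  have ht : 0 < t := hε.trans_le h1
  rw [abs_of_nonpos (Real.log_nonpos ht.le h2),
    abs_of_nonpos (Real.log_nonpos hε.le (h1.trans h2))]
  linarith [Real.log_le_log hε h1]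

/-- If `|B| ≤ C₀ min(1, (ε / |A|) ^ α)`, the integral of `B` is controlled by the small ball
probabilities of `A` at the scales `2 ^ j ε ≤ 1`. -/
lemma dyadic_bound {Ω : Type*} [MeasurableSpace Ω] (μ : Measure Ω) [IsProbabilityMeasure μ]
    {A B : Ω → ℝ} (hA : Measurable A) {C₀ K α β ε : ℝ} {r : ℕ} (hC₀ : 0 ≤ C₀)
    (hα : 0 < α) (hK : 0 ≤ K) (hε : 0 < ε) (hε1 : ε ≤ 1) (hB : ∀ ω, |B ω| ≤ C₀)
    (hBA : ∀ ω, A ω ≠ 0 → |B ω| ≤ C₀ * (ε / |A ω|) ^ α)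
    (hsmall : ∀ t, 0 < t → μ.real {ω | |A ω| ≤ t} ≤ K * t ^ β * (1 + |Real.log t|) ^ r) :
    ∃ N : ℕ, 2 ^ N * ε ≤ 1 ∧ |∫ ω, B ω ∂μ| ≤ C₀ * ε ^ α * (1 + K * 2 ^ β * 2 ^ r *
      (1 + |Real.log ε|) ^ r * ∑ j ∈ Finset.range (N + 1), (2 ^ j * ε) ^ (β - α)) := by
  obtain ⟨N, hN1, hN2⟩ := exists_nat_pow_near (x := 1 / ε) (y := 2)
    ((one_le_div hε).2 hε1) one_lt_two
  rw [le_div_iff₀ hε] at hN1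
  rw [div_lt_iff₀ hε] at hN2
  refine ⟨N, hN1, ?_⟩
  set S : ℕ → Set Ω := fun j => {ω | |A ω| ≤ 2 * (2 ^ j * ε)} with hS
  have hSm : ∀ j, MeasurableSet (S j) := fun j => measurableSet_le hA.abs measurable_const
  set G : Ω → ℝ := fun ω => C₀ * (ε ^ α + ∑ j ∈ Finset.range (N + 1),
    (S j).indicator (fun _ => (ε / (2 ^ j * ε)) ^ α) ω) with hG
  have hind : ∀ j ω, 0 ≤ (S j).indicator (fun _ => (ε / (2 ^ j * ε)) ^ α) ω := fun j ω =>
    Set.indicator_nonneg (fun _ _ => by positivity) ω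
  have hBG : ∀ ω, ‖B ω‖ ≤ G ω := by
    intro ω
    rw [Real.norm_eq_abs]
    have hεα : 0 ≤ ε ^ α := by positivity
    -- it suffices to find one scale whose indicator term dominates
    have hscale : ∀ j ≤ N, ω ∈ S j → |B ω| ≤ C₀ * (ε / (2 ^ j * ε)) ^ α → |B ω| ≤ G ω := by
      intro j hj hω hle
      refine hle.trans ?_
      simp only [hG]
      gcongr
      have h1 := Finset.single_le_sum (f := fun j =>
        (S j).indicator (fun _ => (ε / (2 ^ j * ε)) ^ α) ω) (fun j _ => hind j ω)
        (Finset.mem_range.2 (Nat.lt_succ_of_le hj))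
      simp only [Set.indicator_of_mem hω] at h1
      linarith
    by_cases hsm : |A ω| ≤ ε
    · refine hscale 0 (Nat.zero_le _) ?_ ?_
      · simp only [hS, Set.mem_ofPred_eq, pow_zero, one_mul]; linarith
      · simpa [div_self hε.ne'] using hB ω
    · push Not at hsm
      have hApos : 0 < |A ω| := hε.trans hsm
      have hle := hBA ω (abs_pos.1 hApos)
      by_cases hbig : 1 < |A ω|
      · refine hle.trans ?_
        simp only [hG]
        gcongr
        have h1 : (ε / |A ω|) ^ α ≤ ε ^ α := by
          gcongr
          exact div_le_self hε.le hbig.le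
        have h2 := Finset.sum_nonneg (s := Finset.range (N + 1)) fun j _ => hind j ω
        linarith
      · push Not at hbig
        obtain ⟨j, hj1, hj2⟩ := exists_nat_pow_near (x := |A ω| / ε) (y := 2)
          ((one_le_div hε).2 hsm.le) one_lt_two
        rw [le_div_iff₀ hε] at hj1
        rw [div_lt_iff₀ hε] at hj2
        refine hscale j ?_ ?_ ?_
        · have h3 : (2 : ℝ) ^ j * ε < 2 ^ (N + 1) * ε := by linarith
          have h4 : (2 : ℝ) ^ j < 2 ^ (N + 1) := lt_of_mul_lt_mul_right h3 hε.le
          have := (pow_lt_pow_iff_right₀ (one_lt_two (α := ℝ))).1 h4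
          omega
        · simp only [hS, Set.mem_ofPred_eq]
          rw [pow_succ] at hj2
          linarith
        · refine hle.trans ?_
          gcongr
  have hterm : ∀ j, Integrable ((S j).indicator (fun _ => (ε / (2 ^ j * ε)) ^ α)) μ := fun j =>
    (integrable_const _).indicator (hSm j)
  have hGi : Integrable G μ := by
    refine ((integrable_const _).add (integrable_finsetSum _ fun j _ => hterm j)).const_mul _
  refine (norm_integral_le_of_norm_le (f := B) hGi (ae_of_all _ hBG)).trans ?_
  simp only [hG]
  rw [integral_const_mul, integral_add (integrable_const _)
    (integrable_finsetSum _ fun j _ => hterm j), integral_finsetSum _ fun j _ => hterm j]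
  simp only [integral_const, probReal_univ, one_smul]
  rw [mul_assoc]
  refine mul_le_mul_of_nonneg_left ?_ hC₀
  rw [mul_add, mul_one]
  refine add_le_add le_rfl ?_
  rw [Finset.mul_sum, Finset.mul_sum]
  refine Finset.sum_le_sum fun j hj => ?_
  rw [integral_indicator_const _ (hSm j), smul_eq_mul]
  set T : ℝ := 2 ^ j * ε with hT
  have hTpos : 0 < T := by positivity
  have hεT : ε ≤ T := le_mul_of_one_le_left hε.le (one_le_pow₀ one_le_two)
  have hT1 : T ≤ 1 := by
    refine le_trans ?_ hN1
    rw [hT]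
    have := Finset.mem_range.1 hj
    gcongr
    · norm_num
    · omega
  have hS' := hsmall (2 * T) (by positivity)
  have hlog : 1 + |Real.log (2 * T)| ≤ 2 * (1 + |Real.log ε|) :=
    (abs_log_two_mul_le hTpos).trans (by have := abs_log_le_of_le hε hεT hT1; linarith)
  calc μ.real (S j) * (ε / T) ^ α
      ≤ (K * (2 * T) ^ β * (1 + |Real.log (2 * T)|) ^ r) * (ε / T) ^ α := by gcongr
    _ ≤ (K * (2 * T) ^ β * (2 * (1 + |Real.log ε|)) ^ r) * (ε / T) ^ α := by gcongr
    _ = _ := by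
      rw [Real.mul_rpow two_pos.le hTpos.le, Real.div_rpow hε.le hTpos.le,
        Real.rpow_sub hTpos, mul_pow]
      ring

/-- Equal exponents: every scale contributes the same amount, which costs one logarithm. -/
lemma dyadic_eq {α ε : ℝ} {N : ℕ} (hε : 0 < ε) (hN : 2 ^ N * ε ≤ 1) :
    ∑ j ∈ Finset.range (N + 1), ((2 : ℝ) ^ j * ε) ^ (α - α) ≤ 2 * (1 + |Real.log ε|) := by
  simp only [sub_self, Real.rpow_zero, Finset.sum_const, Finset.card_range, nsmul_eq_mul, mul_one]
  have h1 : Real.log (2 ^ N * ε) ≤ 0 := Real.log_nonpos (by positivity) hN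
  rw [Real.log_mul (by positivity) hε.ne', Real.log_pow] at h1
  have h2 := neg_abs_le (Real.log ε)
  have h3 := Real.log_two_gt_d9
  have h4 : (0 : ℝ) ≤ N := by positivity
  push_cast
  nlinarith

/-- Strictly larger small ball exponent: the scales sum geometrically. -/
lemma dyadic_lt {κ ε : ℝ} {N : ℕ} (hκ : 0 < κ) (hε : 0 < ε) (hN : 2 ^ N * ε ≤ 1) :
    ∑ j ∈ Finset.range (N + 1), ((2 : ℝ) ^ j * ε) ^ κ ≤ (1 - (1 / 2 : ℝ) ^ κ)⁻¹ := by
  set q : ℝ := (1 / 2 : ℝ) ^ κ with hq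
  have hq0 : 0 ≤ q := by positivity
  have hq1 : q < 1 := Real.rpow_lt_one (by norm_num) (by norm_num) hκ
  calc _ ≤ ∑ j ∈ Finset.range (N + 1), q ^ (N - j) := by
        refine Finset.sum_le_sum fun j hj => ?_
        have hj' : j ≤ N := Nat.lt_succ_iff.1 (Finset.mem_range.1 hj)
        have h1 : (2 : ℝ) ^ j * ε ≤ (1 / 2) ^ (N - j) := by
          rw [one_div, inv_pow, ← one_div, le_div_iff₀ (by positivity)]
          calc _ = 2 ^ (j + (N - j)) * ε := by rw [pow_add]; ring
            _ ≤ 1 := by rwa [Nat.add_sub_cancel' hj']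
        calc _ ≤ ((1 / 2 : ℝ) ^ (N - j)) ^ κ := by gcongr
          _ = _ := by
            rw [hq, ← Real.rpow_natCast, ← Real.rpow_natCast, ← Real.rpow_mul (by norm_num),
              ← Real.rpow_mul (by norm_num), mul_comm]
    _ = ∑ j ∈ Finset.range (N + 1), q ^ j := by
        rw [← Finset.sum_range_reflect]
        refine Finset.sum_congr rfl fun j hj => ?_
        have hj' : j ≤ N := Nat.lt_succ_iff.1 (Finset.mem_range.1 hj)
        congr 1
        omega
    _ ≤ _ := by
        rw [← tsum_geometric_of_lt_one hq0 hq1]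
        exact (summable_geometric_of_lt_one hq0 hq1).sum_le_tsum _ fun j _ => by positivity

end GaussPoly

namespace GaussPoly

/-! ### Regularity of the law of a polynomial -/

/-- The law of `f(X)` is fractionally smooth of order `1 / min m e`, up to `(e - m)⁺` logarithms:
`𝔼 H'(f(X))` is bounded in terms of `ε ≥ ‖H‖_∞` for all `H` with `‖H'‖_∞ ≤ 1`, uniformly over all
polynomials of degree at most `e` having a monomial of degree exactly `e` with coefficient at
least `a` in absolute value, and of degree at most `m` in each variable. -/
def RegularityBound (m e : ℕ) (a C : ℝ) : Prop :=
  ∀ (n : ℕ) (f : MvPolynomial (Fin n) ℝ) (j : Fin n →₀ ℕ), f.totalDegree ≤ e →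
    (j.sum fun _ l => l) = e → a ≤ |f.coeff j| → (∀ i, f.degreeOf i ≤ m) →
    ∀ (H h : ℝ → ℝ) (ε : ℝ), (∀ x, HasDerivAt H (h x) x) → Continuous h → (∀ x, |h x| ≤ 1) →
      (∀ x, |H x| ≤ ε) → 0 < ε →
      |∫ x, h (MvPolynomial.eval x f) ∂(_root_.stdGaussian n)| ≤
        C * ε ^ ((1 : ℝ) / (min m e : ℕ)) * (1 + |Real.log ε|) ^ (e - m)

lemma abs_integral_le_one {Ω : Type*} [MeasurableSpace Ω] {μ : Measure Ω} [IsProbabilityMeasure μ]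
    {F : Ω → ℝ} (hF : ∀ ω, |F ω| ≤ 1) : |∫ ω, F ω ∂μ| ≤ 1 := by
  have := norm_integral_le_of_norm_le (μ := μ) (f := F) (integrable_const (1 : ℝ)) (ae_of_all _ hF)
  simpa using this

lemma continuous_evalPoly {n : ℕ} (f : MvPolynomial (Fin n) ℝ) :
    Continuous fun x => MvPolynomial.eval x f := MvPolynomial.continuous_eval f

/-- Small ball estimate, from the test function `H(s) = t arctan(s / t)`. -/
lemma RegularityBound.smallBall {m e : ℕ} {a C : ℝ} (hC : 0 ≤ C) (hR : RegularityBound m e a C)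
    {n : ℕ} (f : MvPolynomial (Fin n) ℝ) (j : Fin n →₀ ℕ) (hf : f.totalDegree ≤ e)
    (hj : (j.sum fun _ l => l) = e) (ha : a ≤ |f.coeff j|) (hm : ∀ i, f.degreeOf i ≤ m)
    (t : ℝ) (ht : 0 < t) :
    (_root_.stdGaussian n).real {x | |MvPolynomial.eval x f| ≤ t} ≤
      (2 * C * 2 ^ ((1 : ℝ) / (min m e : ℕ)) * 2 ^ (e - m)) * t ^ ((1 : ℝ) / (min m e : ℕ)) *
        (1 + |Real.log t|) ^ (e - m) := by
  set h : ℝ → ℝ := fun x => 1 / (1 + (x / t) ^ 2) with hh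
  have hpos : ∀ x : ℝ, 0 < 1 + (x / t) ^ 2 := fun x => by positivity
  have hcont : Continuous h := Continuous.div (by fun_prop) (by fun_prop) fun x => (hpos x).ne'
  have hh0 : ∀ x, 0 ≤ h x := fun x => by have := hpos x; simp only [hh]; positivity
  have hh1 : ∀ x, |h x| ≤ 1 := fun x => by
    rw [abs_of_nonneg (hh0 x)]
    simp only [hh]
    rw [div_le_one (hpos x)]
    nlinarith [sq_nonneg (x / t)]
  have hmain := hR n f j hf hj ha hm (fun x => t * Real.arctan (x / t)) h (2 * t)
    (fun x => by
      have h1 := (((hasDerivAt_id x).div_const t).arctan).const_mul t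
      refine h1.congr_deriv ?_
      simp only [hh, id]
      field_simp)
    hcont hh1
    (fun x => by
      rw [abs_mul, abs_of_pos ht, mul_comm]
      have h1 := Real.arctan_lt_pi_div_two (x / t)
      have h2 := Real.neg_pi_div_two_lt_arctan (x / t)
      have h3 := Real.pi_lt_four
      gcongr
      rw [abs_le]; constructor <;> linarith)
    (by positivity)
  set S : Set (Fin n → ℝ) := {x | |MvPolynomial.eval x f| ≤ t} with hS
  have hSm : MeasurableSet S :=
    measurableSet_le (continuous_evalPoly f).measurable.abs measurable_const
  have hint : Integrable (fun x => h (MvPolynomial.eval x f)) (_root_.stdGaussian n) :=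
    (integrable_const (1 : ℝ)).mono'
      (hcont.comp (continuous_evalPoly f)).aestronglyMeasurable (ae_of_all _ fun x => hh1 _)
  have hle : (_root_.stdGaussian n).real S ≤
      2 * ∫ x, h (MvPolynomial.eval x f) ∂(_root_.stdGaussian n) := by
    rw [← integral_indicator_one hSm, ← integral_const_mul]
    refine integral_mono ((integrable_const (1 : ℝ)).indicator hSm) (hint.const_mul 2) fun x => ?_
    by_cases hx : x ∈ S
    · simp only [Set.indicator_of_mem hx, Pi.one_apply, hh]
      rw [← mul_div_assoc, le_div_iff₀ (hpos _)]
      have h4 : (MvPolynomial.eval x f / t) ^ 2 ≤ 1 := by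
        rw [← sq_abs, abs_div, abs_of_pos ht]
        have : |MvPolynomial.eval x f| / t ≤ 1 := (div_le_one ht).2 hx
        exact pow_le_one₀ (by positivity) this
      linarith
    · simp only [Set.indicator_of_notMem hx]
      have := hh0 (MvPolynomial.eval x f)
      positivity
  calc _ ≤ 2 * (C * (2 * t) ^ ((1 : ℝ) / (min m e : ℕ)) *
        (1 + |Real.log (2 * t)|) ^ (e - m)) := by
        refine hle.trans ?_
        gcongr
        exact (le_abs_self _).trans hmain
    _ ≤ 2 * (C * (2 * t) ^ ((1 : ℝ) / (min m e : ℕ)) *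
        (2 * (1 + |Real.log t|)) ^ (e - m)) := by
        have := abs_log_two_mul_le ht
        gcongr
    _ = _ := by
        rw [Real.mul_rpow two_pos.le ht.le, mul_pow]
        ring

/-- Integrating out the variable `x i`, in which the chosen top monomial has degree `k ≥ 1`:
the coefficient of `x i ^ k` again satisfies the hypotheses, with degree `e - k`. -/
lemma regularity_step {m e k : ℕ} {a : ℝ} (ha : 0 < a) (hm : 1 ≤ m) (hk : 1 ≤ k) (hke : k ≤ e)
    (ih : 1 ≤ e - k → ∃ C : ℝ, 1 ≤ C ∧ RegularityBound m (e - k) a C) :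
    ∃ C : ℝ, 1 ≤ C ∧
    ∀ (n : ℕ) (f : MvPolynomial (Fin n) ℝ) (i : Fin n) (j : Fin n →₀ ℕ), j i = k →
    f.totalDegree ≤ e →
    (j.sum fun _ l => l) = e → a ≤ |f.coeff j| → (∀ i, f.degreeOf i ≤ m) →
    ∀ (H h : ℝ → ℝ) (ε : ℝ), (∀ x, HasDerivAt H (h x) x) → Continuous h → (∀ x, |h x| ≤ 1) →
      (∀ x, |H x| ≤ ε) → 0 < ε → ε ≤ 1 →
      |∫ x, h (MvPolynomial.eval x f) ∂(_root_.stdGaussian n)| ≤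
        C * ε ^ ((1 : ℝ) / (min m e : ℕ)) * (1 + |Real.log ε|) ^ (e - m) := by
  set N := min m e with hN
  have hN1 : 1 ≤ N := by omega
  have hNR : (0 : ℝ) < N := by exact_mod_cast hN1
  set α : ℝ := (1 : ℝ) / N with hα
  have hα0 : 0 < α := by positivity
  obtain ⟨C₀, hC₀, hone⟩ := exists_oneDim_bound N hN1
  have hC₀0 : 0 ≤ C₀ := by linarith
  -- the one-dimensional estimate, applied with the other variables frozen
  have hslice : ∀ (n : ℕ) (f : MvPolynomial (Fin n) ℝ) (i : Fin n), f.totalDegree ≤ e →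
      (∀ i, f.degreeOf i ≤ m) →
      ∀ (H h : ℝ → ℝ) (ε : ℝ), (∀ x, HasDerivAt H (h x) x) → Continuous h → (∀ x, |h x| ≤ 1) →
      (∀ x, |H x| ≤ ε) → 0 < ε → ∀ x : Fin n → ℝ, MvPolynomial.eval x (sliceCoeff f i k) ≠ 0 →
      |∫ y, h (MvPolynomial.eval (Function.update x i y) f) ∂(gaussianReal 0 1)| ≤
        C₀ * (ε / |MvPolynomial.eval x (sliceCoeff f i k)|) ^ α := by
    intro n f i hf hdeg H h ε hH hc hh hε hε0 x hx
    by_cases hkN : k ≤ N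
    swap
    · -- degree `k` in `x i` exceeds the degree bound, so the coefficient vanishes
      exfalso
      apply hx
      have : sliceCoeff f i k = 0 := by
        rw [sliceCoeff]
        refine Finset.sum_eq_zero fun j hj => ?_
        have h1 := Finset.mem_filter.1 hj
        have h2 := MvPolynomial.monomial_le_degreeOf i h1.1
        have h3 := hdeg i
        have h4 := MvPolynomial.degreeOf_le_totalDegree f i
        omega
      rw [this, map_zero]
    set p : Polynomial ℝ := ∑ l ∈ Finset.range (N + 1),
      Polynomial.C (MvPolynomial.eval x (sliceCoeff f i l)) * Polynomial.X ^ l with hp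
    have hpe : ∀ y, MvPolynomial.eval (Function.update x i y) f = p.eval y := by
      intro y
      rw [eval_update f i (N := N) (le_min (hdeg i)
        ((MvPolynomial.degreeOf_le_totalDegree f i).trans hf)), hp, Polynomial.eval_finsetSum]
      simp
    have hpd : p.natDegree ≤ N := by
      refine Polynomial.natDegree_sum_le_of_forall_le _ _ fun l hl => ?_
      refine (Polynomial.natDegree_C_mul_X_pow_le _ _).trans ?_
      exact Nat.lt_succ_iff.1 (Finset.mem_range.1 hl)
    have hpc : p.coeff k = MvPolynomial.eval x (sliceCoeff f i k) := by
      rw [hp, Polynomial.finsetSum_coeff]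
      simp only [Polynomial.coeff_C_mul, Polynomial.coeff_X_pow]
      simp [hkN]
    simp_rw [hpe]
    have hApos : 0 < |MvPolynomial.eval x (sliceCoeff f i k)| := abs_pos.2 hx
    refine hone p k _ _ ε H h hpd hk hApos (by rw [hpc]) hH hc hh hε (by positivity) ?_
    rw [hα, ← Real.rpow_natCast, ← Real.rpow_mul (by positivity), one_div,
      inv_mul_cancel₀ hNR.ne', Real.rpow_one, mul_div_cancel₀ _ hApos.ne']
  have hL : ∀ ε : ℝ, (1 : ℝ) ≤ 1 + |Real.log ε| := fun ε => by
    have := abs_nonneg (Real.log ε); linarith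
  rcases Nat.eq_zero_or_pos (e - k) with he0 | he1
  · -- the coefficient of `x i ^ k` is a constant of size at least `a`
    refine ⟨max 1 (C₀ * (1 / a) ^ α), le_max_left _ _, ?_⟩
    intro n f i j hji hf hj haj hdeg H h ε hH hc hh hε hε0 hε1
    have hcoef := coeff_sliceCoeff f i j
    rw [hji] at hcoef
    have hAdeg : (sliceCoeff f i k).totalDegree = 0 := by
      have := totalDegree_sliceCoeff (i := i) (k := k) hf
      omega
    have herase : j.erase i = 0 := by
      have h1 := sum_erase_add j i
      have h2 : ((j.erase i).sum fun _ l => l) = 0 := by omega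
      rw [Finsupp.sum, Finset.sum_eq_zero_iff] at h2
      ext l
      by_contra hl
      exact hl (h2 l (Finsupp.mem_support_iff.2 hl))
    rw [herase] at hcoef
    have hA : ∀ x, MvPolynomial.eval x (sliceCoeff f i k) = f.coeff j := by
      intro x
      rw [MvPolynomial.totalDegree_eq_zero_iff_eq_C.1 hAdeg, hcoef, MvPolynomial.eval_C]
    have hcpos : 0 < |f.coeff j| := ha.trans_le haj
    rw [integral_update i (fun x => h (MvPolynomial.eval x f)) (hc.comp (continuous_evalPoly f))
      fun x => hh _]
    have hpt : ∀ x, ‖∫ y, h (MvPolynomial.eval (Function.update x i y) f) ∂(gaussianReal 0 1)‖ ≤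
        C₀ * (1 / a) ^ α * ε ^ α := by
      intro x
      have h1 := hslice n f i hf hdeg H h ε hH hc hh hε hε0 x (by
        rw [hA]; exact abs_pos.1 hcpos)
      rw [hA] at h1
      refine h1.trans ?_
      rw [mul_assoc, ← Real.mul_rpow (by positivity) hε0.le]
      gcongr
      rw [one_div, mul_comm, ← div_eq_mul_inv]
      gcongr
    have h2 := norm_integral_le_of_norm_le (μ := _root_.stdGaussian n)
      (integrable_const (C₀ * (1 / a) ^ α * ε ^ α)) (ae_of_all _ hpt)
    simp only [integral_const, probReal_univ, one_smul] at h2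
    refine (Real.norm_eq_abs _).symm.le.trans (h2.trans ?_)
    have h3 : (1 : ℝ) ≤ (1 + |Real.log ε|) ^ (e - m) := one_le_pow₀ (hL ε)
    have h4 : C₀ * (1 / a) ^ α * ε ^ α ≤ max 1 (C₀ * (1 / a) ^ α) * ε ^ α := by
      gcongr
      exact le_max_right _ _
    have h5 : 0 ≤ max 1 (C₀ * (1 / a) ^ α) * ε ^ α := by positivity
    nlinarith
  · obtain ⟨C₁, hC₁, hR⟩ := ih he1
    have hC₁0 : 0 ≤ C₁ := by linarith
    set e' := e - k with he'
    set β : ℝ := (1 : ℝ) / (min m e' : ℕ) with hβ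
    set K : ℝ := 2 * C₁ * 2 ^ β * 2 ^ (e' - m) with hK
    have hK0 : 0 ≤ K := by positivity
    have hdy : ∀ (n : ℕ) (f : MvPolynomial (Fin n) ℝ) (i : Fin n) (j : Fin n →₀ ℕ), j i = k →
      f.totalDegree ≤ e →
      (j.sum fun _ l => l) = e → a ≤ |f.coeff j| → (∀ i, f.degreeOf i ≤ m) →
      ∀ (H h : ℝ → ℝ) (ε : ℝ), (∀ x, HasDerivAt H (h x) x) → Continuous h → (∀ x, |h x| ≤ 1) →
      (∀ x, |H x| ≤ ε) → 0 < ε → ε ≤ 1 → ∃ N : ℕ, 2 ^ N * ε ≤ 1 ∧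
      |∫ x, h (MvPolynomial.eval x f) ∂(_root_.stdGaussian n)| ≤
        C₀ * ε ^ α * (1 + K * 2 ^ β * 2 ^ (e' - m) *
        (1 + |Real.log ε|) ^ (e' - m) * ∑ j ∈ Finset.range (N + 1), (2 ^ j * ε) ^ (β - α)) := by
      intro n f i j hji hf hj haj hdeg H h ε hH hc hh hε hε0 hε1
      rw [integral_update i (fun x => h (MvPolynomial.eval x f)) (hc.comp (continuous_evalPoly f))
        fun x => hh _]
      refine dyadic_bound (_root_.stdGaussian n)
        (A := fun x => MvPolynomial.eval x (sliceCoeff f i k))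
        (continuous_evalPoly _).measurable hC₀0 hα0 hK0 hε0 hε1 (fun x => ?_) (fun x hx => ?_) ?_
      · exact (abs_integral_le_one fun y => hh _).trans hC₀
      · exact hslice n f i hf hdeg H h ε hH hc hh hε hε0 x hx
      · have hcoef := coeff_sliceCoeff f i j
        rw [hji] at hcoef
        refine hR.smallBall hC₁0 (sliceCoeff f i k) (j.erase i) (totalDegree_sliceCoeff hf) ?_
          (by rw [hcoef]; exact haj) (fun l => degreeOf_sliceCoeff l (hdeg l))
        have := sum_erase_add j i
        omega
    rcases Nat.lt_or_ge e' m with hlt | hge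
    · -- the small ball exponent `1 / e'` exceeds `1 / min m e`: no logarithm appears
      have hβα : 0 < β - α := by
        rw [hβ, hα, sub_pos]
        have h1 : min m e' < N := by omega
        have h2 : 1 ≤ min m e' := by omega
        refine one_div_lt_one_div_of_lt ?_ ?_
        · exact_mod_cast h2
        · exact_mod_cast h1
      have hr : e' - m = 0 := by omega
      have hq1 : (1 / 2 : ℝ) ^ (β - α) < 1 :=
        Real.rpow_lt_one (by norm_num) (by norm_num) hβα
      have hinv : 0 ≤ (1 - (1 / 2 : ℝ) ^ (β - α))⁻¹ := by
        rw [inv_nonneg]; linarith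
      refine ⟨C₀ * (1 + K * 2 ^ β * (1 - (1 / 2 : ℝ) ^ (β - α))⁻¹), ?_, ?_⟩
      · have : 0 ≤ K * 2 ^ β * (1 - (1 / 2 : ℝ) ^ (β - α))⁻¹ := by positivity
        nlinarith
      intro n f i j hji hf hj haj hdeg H h ε hH hc hh hε hε0 hε1
      obtain ⟨Nd, hNd, hb⟩ := hdy n f i j hji hf hj haj hdeg H h ε hH hc hh hε hε0 hε1
      rw [hr] at hb
      have hs := dyadic_lt hβα hε0 hNd
      have h3 : (1 : ℝ) ≤ (1 + |Real.log ε|) ^ (e - m) := one_le_pow₀ (hL ε)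
      refine hb.trans ?_
      simp only [pow_zero, mul_one]
      calc _ ≤ C₀ * ε ^ α * (1 + K * 2 ^ β * (1 - (1 / 2 : ℝ) ^ (β - α))⁻¹) := by gcongr
        _ = C₀ * (1 + K * 2 ^ β * (1 - (1 / 2 : ℝ) ^ (β - α))⁻¹) * ε ^ α * 1 := by ring
        _ ≤ _ := by gcongr
    · -- both exponents equal `1 / m`: one logarithm is lost, and the degree dropped by `k ≥ 1`
      have hβα : β = α := by
        rw [hβ, hα]
        have : min m e' = N := by omega
        rw [this]
      refine ⟨C₀ * (1 + K * 2 ^ β * 2 ^ (e' - m) * 2), ?_, ?_⟩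
      · have : 0 ≤ K * 2 ^ β * 2 ^ (e' - m) * 2 := by positivity
        nlinarith
      intro n f i j hji hf hj haj hdeg H h ε hH hc hh hε hε0 hε1
      obtain ⟨Nd, hNd, hb⟩ := hdy n f i j hji hf hj haj hdeg H h ε hH hc hh hε hε0 hε1
      have hs := dyadic_eq (α := α) hε0 hNd
      rw [hβα] at hb ⊢
      set L := 1 + |Real.log ε| with hLdef
      have hL1 : 1 ≤ L := hL ε
      have h3 : L ^ (e' - m + 1) ≤ L ^ (e - m) := pow_le_pow_right₀ hL1 (by omega)
      have h4 : (1 : ℝ) ≤ L ^ (e - m) := one_le_pow₀ hL1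
      refine hb.trans ?_
      calc _ ≤ C₀ * ε ^ α * (1 + K * 2 ^ α * 2 ^ (e' - m) * L ^ (e' - m) * (2 * L)) := by gcongr
        _ = C₀ * ε ^ α * (1 + K * 2 ^ α * 2 ^ (e' - m) * 2 * L ^ (e' - m + 1)) := by
          rw [pow_succ]; ring
        _ ≤ C₀ * ε ^ α * (L ^ (e - m) + K * 2 ^ α * 2 ^ (e' - m) * 2 * L ^ (e - m)) := by gcongr
        _ = _ := by ring

lemma exists_regularityBound {m : ℕ} (hm : 1 ≤ m) {a : ℝ} (ha : 0 < a) (e : ℕ) (he : 1 ≤ e) :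
    ∃ C : ℝ, 1 ≤ C ∧ RegularityBound m e a C := by
  induction e using Nat.strong_induction_on with
  | _ e ih =>
    have hstep : ∀ k : ℕ, ∃ C : ℝ, 1 ≤ C ∧ (1 ≤ k → k ≤ e →
      ∀ (n : ℕ) (f : MvPolynomial (Fin n) ℝ) (i : Fin n) (j : Fin n →₀ ℕ), j i = k →
      f.totalDegree ≤ e →
      (j.sum fun _ l => l) = e → a ≤ |f.coeff j| → (∀ i, f.degreeOf i ≤ m) →
      ∀ (H h : ℝ → ℝ) (ε : ℝ), (∀ x, HasDerivAt H (h x) x) → Continuous h → (∀ x, |h x| ≤ 1) →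
      (∀ x, |H x| ≤ ε) → 0 < ε → ε ≤ 1 →
      |∫ x, h (MvPolynomial.eval x f) ∂(_root_.stdGaussian n)| ≤
        C * ε ^ ((1 : ℝ) / (min m e : ℕ)) * (1 + |Real.log ε|) ^ (e - m)) := by
      intro k
      by_cases hk : 1 ≤ k ∧ k ≤ e
      · obtain ⟨C, hC, h⟩ := regularity_step ha hm hk.1 hk.2
          (fun h1 => ih (e - k) (by omega) h1)
        exact ⟨C, hC, fun _ _ => h⟩
      · exact ⟨1, le_rfl, fun h1 h2 => absurd ⟨h1, h2⟩ hk⟩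
    choose C hC hb using hstep
    have hCle : ∀ k ≤ e, C k ≤ ∑ l ∈ Finset.range (e + 1), C l := fun k hk =>
      Finset.single_le_sum (f := C) (fun l _ => by linarith [hC l])
        (Finset.mem_range.2 (Nat.lt_succ_of_le hk))
    refine ⟨∑ l ∈ Finset.range (e + 1), C l, (hC 0).trans (hCle 0 (Nat.zero_le _)), ?_⟩
    intro n f j hf hj haj hdeg H h ε hH hc hh hε hε0
    have hL : (1 : ℝ) ≤ 1 + |Real.log ε| := by
      have := abs_nonneg (Real.log ε); linarith
    rcases le_or_gt ε 1 with hε1 | hε1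
    · obtain ⟨i, hi⟩ : ∃ i, j i ≠ 0 := by
        by_contra! hcon
        have : j = 0 := Finsupp.ext hcon
        rw [this] at hj
        simp at hj
        omega
      have hje : j i ≤ e := by
        have := sum_erase_add j i
        omega
      refine (hb (j i) (Nat.one_le_iff_ne_zero.2 hi) hje n f i j rfl hf hj haj hdeg H h ε hH hc hh
        hε hε0 hε1).trans ?_
      gcongr
      exact hCle _ hje
    · refine (abs_integral_le_one fun x => hh _).trans ?_
      have h1 : (1 : ℝ) ≤ ε ^ ((1 : ℝ) / (min m e : ℕ)) :=
        Real.one_le_rpow hε1.le (by positivity)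
      have h2 : (1 : ℝ) ≤ (1 + |Real.log ε|) ^ (e - m) := one_le_pow₀ hL
      have h3 := (hC 0).trans (hCle 0 (Nat.zero_le _))
      calc (1 : ℝ) = 1 * 1 * 1 := by norm_num
        _ ≤ _ := by gcongr

end GaussPoly

namespace GaussPoly

/-! ### Uniform regularity in terms of the top coefficient -/

/-- Losing a factor `2` avoids having to show that the supremum defining `topCoeff` is attained. -/
lemma exists_topMonomial {n : ℕ} {f : MvPolynomial (Fin n) ℝ} {a : ℝ} (ha : 0 < a)
    (hf : a ≤ topCoeff f) :
    ∃ j : Fin n →₀ ℕ, (j.sum fun _ l => l) = f.totalDegree ∧ a / 2 ≤ |f.coeff j| := by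
  by_contra! hcon
  have : topCoeff f ≤ a / 2 := by
    refine Real.sSup_le ?_ (by positivity)
    rintro c ⟨j, hj, rfl⟩
    exact (hcon j hj).le
  linarith

lemma exists_uniform_regularity {m d : ℕ} (hm : 1 ≤ m) {a : ℝ} (ha : 0 < a) :
    ∃ C : ℝ, 1 ≤ C ∧ ∀ (n : ℕ) (f : MvPolynomial (Fin n) ℝ), f.totalDegree ≠ 0 →
      (∀ i, f.degreeOf i ≤ m) → f.totalDegree ≤ d → a ≤ topCoeff f →
      ∀ (H h : ℝ → ℝ) (ε : ℝ), (∀ x, HasDerivAt H (h x) x) → Continuous h → (∀ x, |h x| ≤ 1) →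
      (∀ x, |H x| ≤ ε) → 0 < ε → ε ≤ 1 →
      |∫ x, h (MvPolynomial.eval x f) ∂(_root_.stdGaussian n)| ≤
        C * ε ^ ((1 : ℝ) / m) * (1 + |Real.log ε|) ^ (d - m) := by
  have hex : ∀ e : ℕ, ∃ C : ℝ, 1 ≤ C ∧ (1 ≤ e → RegularityBound m e (a / 2) C) := by
    intro e
    by_cases he : 1 ≤ e
    · obtain ⟨C, h1, h2⟩ := exists_regularityBound hm (half_pos ha) e he
      exact ⟨C, h1, fun _ => h2⟩
    · exact ⟨1, le_rfl, fun h => absurd h he⟩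
  choose C hC hR using hex
  have hCle : ∀ k ≤ d, C k ≤ ∑ l ∈ Finset.range (d + 1), C l := fun k hk =>
    Finset.single_le_sum (f := C) (fun l _ => by linarith [hC l])
      (Finset.mem_range.2 (Nat.lt_succ_of_le hk))
  refine ⟨∑ l ∈ Finset.range (d + 1), C l, (hC 0).trans (hCle 0 (Nat.zero_le _)), ?_⟩
  intro n f hf0 hdeg hfd hfa H h ε hH hc hh hε hε0 hε1
  obtain ⟨j, hj, hja⟩ := exists_topMonomial ha hfa
  have he : 1 ≤ f.totalDegree := Nat.one_le_iff_ne_zero.2 hf0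
  refine (hR _ he n f j le_rfl hj hja hdeg H h ε hH hc hh hε hε0).trans ?_
  have hL : (1 : ℝ) ≤ 1 + |Real.log ε| := by
    have := abs_nonneg (Real.log ε); linarith
  have h0 := hC f.totalDegree
  have h1 : ε ^ ((1 : ℝ) / (min m f.totalDegree : ℕ)) ≤ ε ^ ((1 : ℝ) / m) := by
    refine Real.rpow_le_rpow_of_exponent_ge hε0 hε1 ?_
    have : 1 ≤ min m f.totalDegree := le_min hm he
    have h2 : (0 : ℝ) < (min m f.totalDegree : ℕ) := by exact_mod_cast this
    refine one_div_le_one_div_of_le h2 ?_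
    exact_mod_cast min_le_left _ _
  have h2 : (1 + |Real.log ε|) ^ (f.totalDegree - m) ≤ (1 + |Real.log ε|) ^ (d - m) :=
    pow_le_pow_right₀ hL (by omega)
  have h3 := hCle _ hfd
  have h4 : 0 ≤ ∑ l ∈ Finset.range (d + 1), C l := by linarith
  have h5 : 0 ≤ ε ^ ((1 : ℝ) / m) := by positivity
  gcongr

/-! ### Steklov averaging -/

/-- The Steklov average `ψ(x) = ε⁻¹ ∫_x^{x+ε} φ` of a test function is an admissible test function
for the Kantorovich–Rubinstein distance up to the factor `2 / ε`, and `φ - ψ` is the derivative of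
a function bounded by `ε`. -/
lemma exists_steklov {φ : ℝ → ℝ} (hφ : ContDiff ℝ (⊤ : ℕ∞) φ) (hs : HasCompactSupport φ)
    (hb : ∀ x, |φ x| ≤ 1) {ε : ℝ} (hε : 0 < ε) :
    ∃ ψ H : ℝ → ℝ, ContDiff ℝ (⊤ : ℕ∞) ψ ∧ HasCompactSupport ψ ∧ (∀ x, |ψ x| ≤ 1) ∧
      (∀ x, |deriv ψ x| ≤ 2 / ε) ∧ (∀ x, HasDerivAt H (φ x - ψ x) x) ∧ ∀ x, |H x| ≤ ε := by
  have hφc : Continuous φ := hφ.continuous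
  set Φ : ℝ → ℝ := fun x => ∫ s in (0 : ℝ)..x, φ s with hΦ
  have hΦd : ∀ x, HasDerivAt Φ (φ x) x := fun x => hφc.integral_hasStrictDerivAt 0 x |>.hasDerivAt
  have hΦdiff : ∀ x y, Φ y - Φ x = ∫ s in x..y, φ s := fun x y =>
    intervalIntegral.integral_interval_sub_left (hφc.intervalIntegrable _ _)
      (hφc.intervalIntegrable _ _)
  have hΦlip : ∀ x y, |Φ y - Φ x| ≤ |y - x| := fun x y => by
    rw [hΦdiff]
    have := intervalIntegral.norm_integral_le_of_norm_le_const (a := x) (b := y) (C := 1)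
      (f := φ) (fun s _ => hb s)
    simpa using this
  have hΦc : Continuous Φ := continuous_iff_continuousAt.2 fun x => (hΦd x).continuousAt
  have hΦs : ContDiff ℝ (⊤ : ℕ∞) Φ := by
    rw [contDiff_infty_iff_deriv]
    refine ⟨fun x => (hΦd x).differentiableAt, ?_⟩
    rwa [show deriv Φ = φ from funext fun x => (hΦd x).deriv]
  set Ψ : ℝ → ℝ := fun x => ∫ s in (0 : ℝ)..x, Φ s with hΨ
  have hΨd : ∀ x, HasDerivAt Ψ (Φ x) x := fun x => hΦc.integral_hasStrictDerivAt 0 x |>.hasDerivAt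
  have hΨdiff : ∀ x y, Ψ y - Ψ x = ∫ s in x..y, Φ s := fun x y =>
    intervalIntegral.integral_interval_sub_left (hΦc.intervalIntegrable _ _)
      (hΦc.intervalIntegrable _ _)
  have hψd : ∀ x, HasDerivAt (fun x => (Φ (x + ε) - Φ x) / ε) ((φ (x + ε) - φ x) / ε) x :=
    fun x => (((hΦd (x + ε)).comp_add_const x ε).sub (hΦd x)).div_const ε
  refine ⟨fun x => (Φ (x + ε) - Φ x) / ε, fun x => Φ x - (Ψ (x + ε) - Ψ x) / ε, ?_, ?_, ?_, ?_,
    ?_, ?_⟩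
  · exact ((hΦs.comp (contDiff_id.add contDiff_const)).sub hΦs).div_const ε
  · obtain ⟨R, hR⟩ := hs.isCompact.isBounded.subset_closedBall 0
    have hz : ∀ s, R < |s| → φ s = 0 := fun s hRs => by
      by_contra hne
      have := hR (subset_tsupport φ hne)
      rw [Metric.mem_closedBall, dist_zero_right, Real.norm_eq_abs] at this
      linarith
    refine HasCompactSupport.intro (isCompact_Icc (a := -R - ε) (b := R)) fun x hx => ?_
    rw [hΦdiff, intervalIntegral.integral_zero_ae, zero_div]
    refine ae_of_all _ fun s hsx => hz s ?_
    rw [Set.uIoc_of_le (by linarith)] at hsx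
    rw [Set.mem_Icc, not_and_or, not_le, not_le] at hx
    rcases hx with hx | hx
    · exact lt_of_lt_of_le (by linarith [hsx.2]) (neg_le_abs s)
    · exact lt_of_lt_of_le (by linarith [hsx.1]) (le_abs_self s)
  · intro x
    rw [abs_div, abs_of_pos hε, div_le_one hε]
    refine (hΦlip _ _).trans ?_
    rw [add_sub_cancel_left, abs_of_pos hε]
  · intro x
    rw [(hψd x).deriv, abs_div, abs_of_pos hε]
    gcongr
    have := abs_sub (φ (x + ε)) (φ x)
    linarith [hb (x + ε), hb x]
  · intro x
    exact (hΦd x).sub ((((hΨd (x + ε)).comp_add_const x ε).sub (hΨd x)).div_const ε)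
  · intro x
    have h1 : Φ x - (Ψ (x + ε) - Ψ x) / ε = (∫ s in x..x + ε, (Φ x - Φ s)) / ε := by
      rw [intervalIntegral.integral_sub (by simp) (hΦc.intervalIntegrable _ _), ← hΨdiff]
      simp only [intervalIntegral.integral_const, add_sub_cancel_left, smul_eq_mul]
      field_simp
    beta_reduce
    rw [h1, abs_div, abs_of_pos hε, div_le_iff₀ hε]
    have := intervalIntegral.norm_integral_le_of_norm_le_const (a := x) (b := x + ε) (C := ε)
      (f := fun s => Φ x - Φ s) (fun s hsx => by
        rw [Set.uIoc_of_le (by linarith)] at hsx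
        refine (hΦlip _ _).trans ?_
        rw [abs_sub_comm, abs_of_nonneg (by linarith [hsx.1])]
        linarith [hsx.2])
    simpa [abs_of_pos hε] using this

/-! ### The two distances -/

lemma integrable_bdd {μ : Measure ℝ} [IsProbabilityMeasure μ] {φ : ℝ → ℝ} (hφ : Continuous φ)
    (hb : ∀ x, |φ x| ≤ 1) : Integrable φ μ :=
  Integrable.of_bound hφ.aestronglyMeasurable 1 (ae_of_all _ hb)

lemma integral_sub_le_two {μ ν : Measure ℝ} [IsProbabilityMeasure μ] [IsProbabilityMeasure ν]
    {φ : ℝ → ℝ} (hb : ∀ x, |φ x| ≤ 1) : (∫ s, φ s ∂μ) - ∫ s, φ s ∂ν ≤ 2 := by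
  have h1 := abs_le.1 (abs_integral_le_one (μ := μ) hb)
  have h2 := abs_le.1 (abs_integral_le_one (μ := ν) hb)
  linarith [h1.2, h2.1]

lemma integral_sub_le_dKR {μ ν : Measure ℝ} [IsProbabilityMeasure μ] [IsProbabilityMeasure ν]
    {φ : ℝ → ℝ} (hφ : ContDiff ℝ (⊤ : ℕ∞) φ) (hs : HasCompactSupport φ)
    (hb : ∀ x, |φ x| ≤ 1) (hd : ∀ x, |deriv φ x| ≤ 1) :
    (∫ s, φ s ∂μ) - ∫ s, φ s ∂ν ≤ dKR μ ν := by
  refine le_csSup ⟨2, ?_⟩ ⟨φ, hφ, hs, hb, hd, rfl⟩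
  rintro r ⟨χ, -, -, hχ, -, rfl⟩
  exact integral_sub_le_two hχ

lemma dKR_nonneg (μ ν : Measure ℝ) [IsProbabilityMeasure μ] [IsProbabilityMeasure ν] :
    0 ≤ dKR μ ν := by
  have := integral_sub_le_dKR (μ := μ) (ν := ν) (φ := fun _ => 0) contDiff_const
    HasCompactSupport.zero (by simp) (by simp)
  simpa using this

/-- Rescaling of a test function whose derivative is bounded by `M ≥ 1`. -/
lemma integral_sub_le_mul_dKR {μ ν : Measure ℝ} [IsProbabilityMeasure μ] [IsProbabilityMeasure ν]
    {φ : ℝ → ℝ} (hφ : ContDiff ℝ (⊤ : ℕ∞) φ) (hs : HasCompactSupport φ)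
    (hb : ∀ x, |φ x| ≤ 1) {M : ℝ} (hM : 1 ≤ M) (hd : ∀ x, |deriv φ x| ≤ M) :
    (∫ s, φ s ∂μ) - ∫ s, φ s ∂ν ≤ M * dKR μ ν := by
  have hM0 : 0 < M := by linarith
  have hdiff : Differentiable ℝ φ := hφ.differentiable (by simp)
  have := integral_sub_le_dKR (μ := μ) (ν := ν) (φ := fun x => M⁻¹ * φ x)
    (contDiff_const.mul hφ) hs.mul_left
    (fun x => by
      rw [abs_mul, abs_of_pos (inv_pos.2 hM0), inv_mul_le_iff₀ hM0]
      linarith [hb x])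
    (fun x => by
      rw [deriv_const_mul _ (hdiff x), abs_mul, abs_of_pos (inv_pos.2 hM0), inv_mul_le_iff₀ hM0]
      linarith [hd x])
  rw [integral_const_mul, integral_const_mul, ← mul_sub, inv_mul_le_iff₀ hM0] at this
  exact this

lemma dTV_nonpos_of_dKR_eq_zero {μ ν : Measure ℝ} [IsProbabilityMeasure μ]
    [IsProbabilityMeasure ν] (h : dKR μ ν = 0) : dTV μ ν ≤ 0 := by
  refine Real.sSup_le ?_ le_rfl
  rintro r ⟨φ, hφ, hs, hb, rfl⟩
  obtain ⟨M, hM⟩ := (hφ.continuous_deriv (by simp)).bounded_above_of_compact_support hs.deriv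
  have := integral_sub_le_mul_dKR (μ := μ) (ν := ν) hφ hs hb (le_max_right M 1)
    fun x => (hM x).trans (le_max_left M 1)
  simpa [h] using this

/-- Passing from `φ` to its Steklov average costs `B` for each of the two laws if all derivatives
`h = H'` with `‖h‖_∞ ≤ 1`, `‖H‖_∞ ≤ ε` have expectation at most `B`. -/
lemma integral_sub_le_of_regularity {μ ν : Measure ℝ} [IsProbabilityMeasure μ]
    [IsProbabilityMeasure ν] {ε B : ℝ} (hε : 0 < ε) (hε1 : ε ≤ 1)
    (hμ : ∀ H h : ℝ → ℝ, (∀ x, HasDerivAt H (h x) x) → Continuous h → (∀ x, |h x| ≤ 1) →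
      (∀ x, |H x| ≤ ε) → |∫ s, h s ∂μ| ≤ B)
    (hν : ∀ H h : ℝ → ℝ, (∀ x, HasDerivAt H (h x) x) → Continuous h → (∀ x, |h x| ≤ 1) →
      (∀ x, |H x| ≤ ε) → |∫ s, h s ∂ν| ≤ B)
    {φ : ℝ → ℝ} (hφ : ContDiff ℝ (⊤ : ℕ∞) φ) (hs : HasCompactSupport φ) (hb : ∀ x, |φ x| ≤ 1) :
    (∫ s, φ s ∂μ) - ∫ s, φ s ∂ν ≤ 4 * B + 2 * dKR μ ν / ε := by
  obtain ⟨ψ, H, hψ, hψs, hψb, hψd, hH, hHb⟩ := exists_steklov hφ hs hb hε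
  have hH2 : ∀ x, HasDerivAt (fun x => H x / 2) ((φ x - ψ x) / 2) x := fun x =>
    (hH x).div_const 2
  have hc2 : Continuous fun x => (φ x - ψ x) / 2 :=
    (hφ.continuous.sub hψ.continuous).div_const 2
  have hb2 : ∀ x, |(φ x - ψ x) / 2| ≤ 1 := fun x => by
    have h1 := abs_le.1 (hb x)
    have h2 := abs_le.1 (hψb x)
    rw [abs_le]
    constructor <;> linarith [h1.1, h1.2, h2.1, h2.2]
  have hHb2 : ∀ x, |H x / 2| ≤ ε := fun x => by
    rw [abs_div, abs_two]
    linarith [hHb x]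
  have h1 := hμ _ _ hH2 hc2 hb2 hHb2
  have h2 := hν _ _ hH2 hc2 hb2 hHb2
  rw [integral_div, integral_sub (integrable_bdd hφ.continuous hb)
    (integrable_bdd hψ.continuous hψb)] at h1 h2
  have h3 := integral_sub_le_mul_dKR (μ := μ) (ν := ν) hψ hψs hψb
    (by rw [le_div_iff₀ hε]; linarith) hψd
  have h4 := (abs_le.1 h1).2
  have h5 := (abs_le.1 h2).1
  have h6 : 2 / ε * dKR μ ν = 2 * dKR μ ν / ε := by ring
  linarith

/-! ### Optimization of the averaging scale -/

/-- The choice `ε = (δ L^{-k})^{m/(m+1)}` with `L = 1 + |log δ|` balances the two terms. -/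
lemma optimize_scale {m k : ℕ} (hm : 1 ≤ m) {C δ T : ℝ} (hC : 1 ≤ C) (hδ : 0 < δ) (hδ1 : δ < 1)
    (hT : ∀ ε : ℝ, 0 < ε → ε ≤ 1 →
      T ≤ 4 * (C * ε ^ ((1 : ℝ) / m) * (1 + |Real.log ε|) ^ k) + 2 * δ / ε) :
    T ≤ (4 * C * (2 + k) ^ k + 2) * 2 ^ ((k * m : ℝ) / (m + 1)) * δ ^ ((1 : ℝ) / (m + 1)) *
      (|Real.log δ| ^ ((k * m : ℝ) / (m + 1)) + 1) := by
  have hm0 : (0 : ℝ) < m := by exact_mod_cast hm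
  set L := 1 + |Real.log δ| with hLdef
  have hL1 : 1 ≤ L := by have := abs_nonneg (Real.log δ); linarith
  have hL0 : 0 < L := by linarith
  set β : ℝ := (m : ℝ) / (m + 1) with hβ
  have hβ0 : 0 ≤ β := by positivity
  have hβ1 : β ≤ 1 := by rw [hβ, div_le_one (by positivity)]; linarith
  set ε := δ ^ β * L ^ (-(k * β)) with hεdef
  have hε0 : 0 < ε := by positivity
  have hε1 : ε ≤ 1 := by
    have h1 : δ ^ β ≤ 1 := Real.rpow_le_one hδ.le hδ1.le hβ0
    have h2 : L ^ (-(k * β)) ≤ 1 :=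
      Real.rpow_le_one_of_one_le_of_nonpos hL1 (by have := mul_nonneg k.cast_nonneg hβ0; linarith)
    calc ε ≤ 1 * 1 := by rw [hεdef]; gcongr
      _ = 1 := one_mul 1
  have hθ : (k * m : ℝ) / (m + 1) = k * β := by rw [hβ]; ring
  rw [hθ]
  set A := δ ^ ((1 : ℝ) / (m + 1)) * L ^ (k * β) with hA
  have hA0 : 0 < A := by positivity
  have hfirst : δ / ε = A := by
    rw [hεdef, hA, Real.rpow_neg hL0.le, div_eq_iff (by positivity)]
    have : δ ^ ((1 : ℝ) / (m + 1)) * δ ^ β = δ := by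
      rw [← Real.rpow_add hδ, hβ, ← add_div, add_comm, div_self (by positivity), Real.rpow_one]
    field_simp
    linarith
  have hroot : ε ^ ((1 : ℝ) / m) * L ^ k = A := by
    rw [hεdef, Real.mul_rpow (by positivity) (by positivity), ← Real.rpow_mul hδ.le,
      ← Real.rpow_mul hL0.le, ← Real.rpow_natCast, mul_assoc, ← Real.rpow_add hL0, hA]
    congr 2
    · rw [hβ]; field_simp
    · rw [hβ]; field_simp; ring
  have hlog : 1 + |Real.log ε| ≤ (2 + k) * L := by
    rw [hεdef, Real.log_mul (by positivity) (by positivity), Real.log_rpow hδ, Real.log_rpow hL0]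
    have h1 : |β * Real.log δ| ≤ |Real.log δ| := by
      rw [abs_mul, abs_of_nonneg hβ0]
      exact mul_le_of_le_one_left (abs_nonneg _) hβ1
    have h2 : |-(k * β) * Real.log L| ≤ k * L := by
      have hl0 := Real.log_nonneg hL1
      have hl1 : Real.log L ≤ L := by linarith [Real.log_le_sub_one_of_pos hL0]
      rw [abs_mul, abs_neg, abs_of_nonneg (by positivity), abs_of_nonneg hl0, mul_assoc]
      gcongr
      calc β * Real.log L ≤ 1 * L := by gcongr
        _ = L := one_mul L
    have h3 := abs_add_le (β * Real.log δ) (-(k * β) * Real.log L)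
    have : |Real.log δ| = L - 1 := by rw [hLdef]; ring
    linarith
  have hmain : T ≤ (4 * C * (2 + k) ^ k + 2) * A := by
    refine (hT ε hε0 hε1).trans ?_
    have h1 : (1 + |Real.log ε|) ^ k ≤ ((2 + k) * L) ^ k :=
      pow_le_pow_left₀ (by positivity) hlog k
    calc _ ≤ 4 * (C * ε ^ ((1 : ℝ) / m) * ((2 + k) * L) ^ k) + 2 * δ / ε := by gcongr
      _ = 4 * C * (2 + k) ^ k * (ε ^ ((1 : ℝ) / m) * L ^ k) + 2 * (δ / ε) := by
        rw [mul_pow]; ring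
      _ = _ := by rw [hroot, hfirst]; ring
  have hsplit : L ^ (k * β) ≤ 2 ^ (k * β) * (|Real.log δ| ^ (k * β) + 1) := by
    have hk : 0 ≤ k * β := by positivity
    have hl0 := abs_nonneg (Real.log δ)
    have hp := Real.rpow_nonneg hl0 (k * β)
    have hmx : L ≤ 2 * max (|Real.log δ|) 1 := by
      linarith [le_max_left (|Real.log δ|) 1, le_max_right (|Real.log δ|) 1]
    calc L ^ (k * β) ≤ (2 * max (|Real.log δ|) 1) ^ (k * β) :=
          Real.rpow_le_rpow hL0.le hmx hk
      _ = 2 ^ (k * β) * max (|Real.log δ|) 1 ^ (k * β) :=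
          Real.mul_rpow (by norm_num) (by positivity)
      _ ≤ _ := by
        gcongr
        rcases max_cases (|Real.log δ|) 1 with h | h <;> rw [h.1]
        · linarith
        · rw [Real.one_rpow]; linarith
  refine hmain.trans ?_
  calc _ ≤ (4 * C * (2 + k) ^ k + 2) * (δ ^ ((1 : ℝ) / (m + 1)) *
        (2 ^ (k * β) * (|Real.log δ| ^ (k * β) + 1))) := by rw [hA]; gcongr
    _ = _ := by ring

end GaussPoly

/-- Corollary: for `m ≤ d` and `a > 0` there is a constant `C(m,d,a) > 0` such that for all
non-constant polynomials `f, g` on `ℝⁿ` of total degree at most `d`, with every variable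
entering to a power at most `m`, and with `a[f] ≥ a`, `a[g] ≥ a`, one has, with `X` standard
Gaussian in `ℝⁿ`:
`d_TV(f(X), g(X)) ≤ C d_KR(f(X),g(X))^{1/(m+1)} (|ln d_KR(f(X),g(X))|^{(d-m)m/(m+1)} + 1)`. -/
theorem dTV_le_dKR_polynomials (m d : ℕ) (hm : 1 ≤ m) (hmd : m ≤ d) (a : ℝ) (ha : 0 < a) :
    ∃ C : ℝ, 0 < C ∧
      ∀ (n : ℕ) (f g : MvPolynomial (Fin n) ℝ),
        f.totalDegree ≠ 0 → g.totalDegree ≠ 0 →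
        (∀ i : Fin n, f.degreeOf i ≤ m) → (∀ i : Fin n, g.degreeOf i ≤ m) →
        f.totalDegree ≤ d → g.totalDegree ≤ d →
        a ≤ topCoeff f → a ≤ topCoeff g →
        dTV ((stdGaussian n).map (fun x => MvPolynomial.eval x f))
            ((stdGaussian n).map (fun x => MvPolynomial.eval x g)) ≤
          C * (dKR ((stdGaussian n).map (fun x => MvPolynomial.eval x f))
                  ((stdGaussian n).map (fun x => MvPolynomial.eval x g)))
                ^ ((1 : ℝ) / (m + 1)) *
            ((|Real.log (dKR ((stdGaussian n).map (fun x => MvPolynomial.eval x f))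
                  ((stdGaussian n).map (fun x => MvPolynomial.eval x g)))|)
                ^ (((d - m : ℕ) * m : ℝ) / (m + 1)) + 1) := by
  obtain ⟨K, hK, hreg⟩ := GaussPoly.exists_uniform_regularity (d := d) hm ha
  set θ : ℝ := ((d - m : ℕ) * m : ℝ) / (m + 1) with hθ
  have hθ0 : 0 ≤ θ := by positivity
  set C := (4 * K * (2 + (d - m : ℕ)) ^ (d - m) + 2) * (2 : ℝ) ^ θ with hC
  have hC2 : 2 ≤ C := by
    have h1 : (1 : ℝ) ≤ 2 ^ θ := Real.one_le_rpow (by norm_num) hθ0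
    have h2 : (0 : ℝ) ≤ 4 * K * (2 + (d - m : ℕ)) ^ (d - m) := by positivity
    calc (2 : ℝ) = (0 + 2) * 1 := by norm_num
      _ ≤ C := by rw [hC]; gcongr
  refine ⟨C, by linarith, ?_⟩
  intro n f g hf0 hg0 hfm hgm hfd hgd hfa hga
  have hmeas : ∀ p : MvPolynomial (Fin n) ℝ,
      AEMeasurable (fun x => MvPolynomial.eval x p) (_root_.stdGaussian n) := fun p =>
    (GaussPoly.continuous_evalPoly p).measurable.aemeasurable
  have hpf := Measure.isProbabilityMeasure_map (hmeas f)
  have hpg := Measure.isProbabilityMeasure_map (hmeas g)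
  -- The regularity estimate transferred to the law of `p(X)`.
  have hlaw : ∀ p : MvPolynomial (Fin n) ℝ, p.totalDegree ≠ 0 → (∀ i, p.degreeOf i ≤ m) →
      p.totalDegree ≤ d → a ≤ topCoeff p → ∀ ε : ℝ, 0 < ε → ε ≤ 1 →
      ∀ H h : ℝ → ℝ, (∀ x, HasDerivAt H (h x) x) → Continuous h → (∀ x, |h x| ≤ 1) →
      (∀ x, |H x| ≤ ε) →
      |∫ s, h s ∂((_root_.stdGaussian n).map (fun x => MvPolynomial.eval x p))| ≤
        K * ε ^ ((1 : ℝ) / m) * (1 + |Real.log ε|) ^ (d - m) := by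
    intro p h0 h1 h2 h3 ε hε hε1 H h hH hc hh hHε
    rw [integral_map (hmeas p) hc.aestronglyMeasurable]
    exact hreg n p h0 h1 h2 h3 H h ε hH hc hh hHε hε hε1
  set μ := (_root_.stdGaussian n).map (fun x => MvPolynomial.eval x f) with hμ
  set ν := (_root_.stdGaussian n).map (fun x => MvPolynomial.eval x g) with hν
  rcases (GaussPoly.dKR_nonneg μ ν).eq_or_lt with hδ | hδ
  · refine (GaussPoly.dTV_nonpos_of_dKR_eq_zero hδ.symm).trans ?_
    rw [← hδ]
    positivity
  have hlogθ : 0 ≤ |Real.log (dKR μ ν)| ^ θ := Real.rpow_nonneg (abs_nonneg _) θ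
  refine Real.sSup_le ?_ (by positivity)
  rintro r ⟨φ, hφ, hs, hb, rfl⟩
  rcases lt_or_ge (dKR μ ν) 1 with hδ1 | hδ1
  · refine GaussPoly.optimize_scale hm hK hδ hδ1 fun ε hε hε1 => ?_
    exact GaussPoly.integral_sub_le_of_regularity hε hε1 (hlaw f hf0 hfm hfd hfa ε hε hε1)
      (hlaw g hg0 hgm hgd hga ε hε hε1) hφ hs hb
  · refine (GaussPoly.integral_sub_le_two hb).trans ?_
    have h1 : 1 ≤ dKR μ ν ^ ((1 : ℝ) / (m + 1)) := Real.one_le_rpow hδ1 (by positivity)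
    calc (2 : ℝ) = 2 * 1 * (0 + 1) := by norm_num
      _ ≤ _ := by gcongr
end

section
/- For every nonnegative function ϱ ∈ L¹(ℝ), the function ε ↦ σ(ϱ, ε) is nondecreasing and concave on (0, ∞). -/
/-! Write `S(ε)` for the set of values `∫ φ' ϱ` over admissible `φ`. It contains `0` (take `φ = 0`)
and is bounded above by `∫ |ϱ|`, so `σ(ϱ, ε)` is a genuine supremum. Enlarging `ε` enlarges `S(ε)`,
which gives monotonicity. A convex combination of functions admissible for `x` and `y` is
admissible for the same convex combination of `x` and `y`, so `a • S(x) + b • S(y) ⊆ S(a x + b y)`;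
taking suprema gives concavity. -/

open MeasureTheory

/-- The modulus `σ(ϱ, ε) = sup { ∫ φ' ϱ : φ ∈ C₀^∞(ℝ), ‖φ‖_∞ ≤ ε, ‖φ'‖_∞ ≤ 1 }`. -/
noncomputable def sigmaMod (ρ : ℝ → ℝ) (ε : ℝ) : ℝ :=
  sSup {r : ℝ | ∃ φ : ℝ → ℝ, ContDiff ℝ (⊤ : ℕ∞) φ ∧ HasCompactSupport φ ∧
    (∀ x, |φ x| ≤ ε) ∧ (∀ x, |deriv φ x| ≤ 1) ∧ r = ∫ s : ℝ, deriv φ s * ρ s}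

open scoped Pointwise

/-- The set `S(ε)` of values whose supremum is `sigmaMod ρ ε`. -/
def sigmaSet (ρ : ℝ → ℝ) (ε : ℝ) : Set ℝ :=
  {r : ℝ | ∃ φ : ℝ → ℝ, ContDiff ℝ (⊤ : ℕ∞) φ ∧ HasCompactSupport φ ∧
    (∀ x, |φ x| ≤ ε) ∧ (∀ x, |deriv φ x| ≤ 1) ∧ r = ∫ s : ℝ, deriv φ s * ρ s}

lemma sigmaSet_nonempty (ρ : ℝ → ℝ) {ε : ℝ} (hε : 0 < ε) : (sigmaSet ρ ε).Nonempty :=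
  ⟨0, fun _ => 0, contDiff_const, HasCompactSupport.zero, by simp [hε.le], by simp, by simp⟩

lemma integrable_deriv_mul {ρ φ : ℝ → ℝ} (hρ : Integrable ρ) (hφ : ContDiff ℝ (⊤ : ℕ∞) φ)
    (hφ' : ∀ x, |deriv φ x| ≤ 1) : Integrable fun s => deriv φ s * ρ s :=
  hρ.bdd_mul (c := 1) (hφ.continuous_deriv (by simp)).aestronglyMeasurable
    (Filter.Eventually.of_forall hφ')

lemma sigmaSet_bddAbove {ρ : ℝ → ℝ} (hρ : Integrable ρ) (ε : ℝ) : BddAbove (sigmaSet ρ ε) := by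
  refine ⟨∫ s, |ρ s|, ?_⟩
  rintro r ⟨φ, hφ, -, -, hφ', rfl⟩
  refine integral_mono (integrable_deriv_mul hρ hφ hφ') hρ.abs fun s => ?_
  calc deriv φ s * ρ s ≤ |deriv φ s| * |ρ s| := by rw [← abs_mul]; exact le_abs_self _
    _ ≤ 1 * |ρ s| := by gcongr; exact hφ' s
    _ = |ρ s| := one_mul _

lemma sigmaSet_mono (ρ : ℝ → ℝ) {x y : ℝ} (hxy : x ≤ y) : sigmaSet ρ x ⊆ sigmaSet ρ y := by
  rintro r ⟨φ, hφ, hc, hb, h⟩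
  exact ⟨φ, hφ, hc, fun s => (hb s).trans hxy, h⟩

lemma abs_convexComb_le {a b u v x y : ℝ} (ha : 0 ≤ a) (hb : 0 ≤ b) (hu : |u| ≤ x)
    (hv : |v| ≤ y) : |a * u + b * v| ≤ a * x + b * y := by
  refine (abs_add_le _ _).trans ?_
  rw [abs_mul, abs_mul, abs_of_nonneg ha, abs_of_nonneg hb]
  gcongr

lemma sigmaSet_convexComb {ρ : ℝ → ℝ} (hρ : Integrable ρ) {a b : ℝ} (ha : 0 ≤ a) (hb : 0 ≤ b)
    (hab : a + b = 1) (x y : ℝ) :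
    a • sigmaSet ρ x + b • sigmaSet ρ y ⊆ sigmaSet ρ (a * x + b * y) := by
  rintro _ ⟨_, ⟨_, ⟨φ, hφ, hφc, hφb, hφ', rfl⟩, rfl⟩, _, ⟨_, ⟨ψ, hψ, hψc, hψb, hψ', rfl⟩, rfl⟩, rfl⟩
  have hd : ∀ s, deriv (fun t => a * φ t + b * ψ t) s = a * deriv φ s + b * deriv ψ s := fun s =>
    (((hφ.differentiable (by simp) s).hasDerivAt.const_mul a).add
      ((hψ.differentiable (by simp) s).hasDerivAt.const_mul b)).deriv
  refine ⟨fun t => a * φ t + b * ψ t, (contDiff_const.mul hφ).add (contDiff_const.mul hψ),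
    hφc.mul_left.add hψc.mul_left, fun s => abs_convexComb_le ha hb (hφb s) (hψb s),
    fun s => ?_, ?_⟩
  · rw [hd]
    simpa [hab] using abs_convexComb_le ha hb (hφ' s) (hψ' s)
  · simp only [hd, add_mul, mul_assoc, smul_eq_mul]
    rw [integral_add ((integrable_deriv_mul hρ hφ hφ').const_mul a)
      ((integrable_deriv_mul hρ hψ hψ').const_mul b), integral_const_mul, integral_const_mul]

/-- Lemma: for every nonnegative `ϱ ∈ L¹(ℝ)`, the function `ε ↦ σ(ϱ, ε)` is nondecreasing and
concave on `(0, ∞)`. -/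
theorem sigmaMod_monotone_concave (ρ : ℝ → ℝ) (hρ : Integrable ρ) (hρ0 : ∀ x, 0 ≤ ρ x) :
    MonotoneOn (sigmaMod ρ) (Set.Ioi (0 : ℝ)) ∧
      ConcaveOn ℝ (Set.Ioi (0 : ℝ)) (sigmaMod ρ) := by
  refine ⟨fun x hx y _ hxy => csSup_le_csSup (sigmaSet_bddAbove hρ y) (sigmaSet_nonempty ρ hx)
    (sigmaSet_mono ρ hxy), convex_Ioi 0, fun x hx y hy a b ha hb hab => ?_⟩
  have hX := sigmaSet_nonempty ρ hx
  have hY := sigmaSet_nonempty ρ hy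
  change a • sSup (sigmaSet ρ x) + b • sSup (sigmaSet ρ y) ≤ sSup (sigmaSet ρ (a * x + b * y))
  rw [← Real.sSup_smul_of_nonneg ha, ← Real.sSup_smul_of_nonneg hb,
    ← csSup_add hX.smul_set ((sigmaSet_bddAbove hρ x).smul_of_nonneg ha) hY.smul_set
      ((sigmaSet_bddAbove hρ y).smul_of_nonneg hb)]
  exact csSup_le_csSup (sigmaSet_bddAbove hρ _) (hX.smul_set.add hY.smul_set)
    (sigmaSet_convexComb hρ ha hb hab x y)
end
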